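/- arXiv:2307.12958 — 4 statements merged into one kernel-verified Lean document; each statement's English description precedes it below -/
import Mathlib

section
/- Let X be a real Banach space and let (x_n)_{n≥1} be a semi-normalized shift-unconditional basic sequence in X that is not equivalent to the unit vector basis of c₀. Then there exist a nonempty bounded closed convex set K ⊆ B_X and a fixed-point-free map F : K → K that is Lipschitz and asymptotically regular. -/
/-!
Everything takes place in the cone of vectors `y = ∑ tₙ xₙ` with `t₀ ≥ t₁ ≥ … ≥ 0`; `K` is the part
of this cone in the unit ball. Let `L` be the linear operator replacing the coordinate sequence
`(t₀, t₁, t₂, …)` by `(t₀, t₀, t₁, …)`; it is bounded because `(xₙ)` is shift-bounded. Put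
`G y = L y + (1 - ‖y‖) x₀` and `F y = G y / ‖G y‖`.

* On `K` the coordinates of `G y` dominate both those of `y` and those of `(1 - ‖y‖) x₀`, so
  unconditionality bounds `‖G y‖` from below (`exists_pos_le_norm_bump`) and `F` is Lipschitz.
* `F` maps `K` into the unit sphere, where `G = L` is linear, so from the first step on
  `Fⁿ y = Lⁿ y / ‖Lⁿ y‖`. The coordinates of `Lⁿ⁺¹ y - Lⁿ y` are the successive drops
  `t₀ - t₁, t₁ - t₂, …` moved to the right. They have sum at most `t₀`, hence `Lⁿ⁺¹ y - Lⁿ y` has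
  norm at most `t₀ sup ‖xᵢ‖` (`norm_hop_sub_le`), whatever the growth of the powers of the shift.
* The first `n` coordinates of `Lⁿ y` equal `t₀ > 0`, so `‖Lⁿ y‖` is at least a constant times
  `‖x₀ + ⋯ + xₙ₋₁‖`, which tends to infinity because `(xₙ)` is not equivalent to the basis of `c₀`
  (`tendsto_norm_sum_atTop`). Normalizing, consecutive iterates approach each other.
* A fixed point would be a unit vector with `L y = λ y`. Comparing coordinates gives `λ = 1` and then
  that all coordinates equal `t₀ > 0`, which is incompatible with convergence of `∑ t₀ xₙ`.
-/

open Metric Set Filter Topology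

namespace ShiftUnconditional

variable {X : Type*} [NormedAddCommGroup X] [NormedSpace ℝ X]

/-- `y` is the sum of the series `∑ tₙ xₙ`, meaning that its partial sums in the given order
converge to `y`. -/
def IsExpansion (x : ℕ → X) (t : ℕ → ℝ) (y : X) : Prop :=
  Tendsto (fun n => ∑ i ∈ Finset.range n, t i • x i) atTop (𝓝 y)

/-- `(xₙ)` has basis constant at most `κ`. -/
def BasisBound (x : ℕ → X) (κ : ℝ) : Prop :=
  ∀ (a : ℕ → ℝ) (m n : ℕ), m ≤ n →
    ‖∑ i ∈ Finset.range m, a i • x i‖ ≤ κ * ‖∑ i ∈ Finset.range n, a i • x i‖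

/-- `(xₙ)` is `C`-unconditional. -/
def SignBound (x : ℕ → X) (C : ℝ) : Prop :=
  ∀ (s : Finset ℕ) (a ε : ℕ → ℝ), (∀ n, ε n = 1 ∨ ε n = -1) →
    ‖∑ n ∈ s, (ε n * a n) • x n‖ ≤ C * ‖∑ n ∈ s, a n • x n‖

/-- The right shift along `(xₙ)` has norm at most `D`. -/
def ShiftBound (x : ℕ → X) (D : ℝ) : Prop :=
  ∀ (s : Finset ℕ) (a : ℕ → ℝ), ‖∑ n ∈ s, a n • x (n + 1)‖ ≤ D * ‖∑ n ∈ s, a n • x n‖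

variable {x : ℕ → X} {t s : ℕ → ℝ} {y z : X} {κ C D A B : ℝ}

/-! ### Expansions along a basic sequence -/

namespace IsExpansion

lemma unique (h : IsExpansion x t y) (h' : IsExpansion x t z) : y = z :=
  tendsto_nhds_unique h h'

lemma add (h : IsExpansion x t y) (h' : IsExpansion x s z) :
    IsExpansion x (fun n => t n + s n) (y + z) := by
  have := Tendsto.add h h'
  simpa only [IsExpansion, add_smul, Finset.sum_add_distrib] using this

lemma smul (c : ℝ) (h : IsExpansion x t y) : IsExpansion x (fun n => c * t n) (c • y) := by
  have := Tendsto.const_smul h c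
  simpa only [IsExpansion, mul_smul, Finset.smul_sum] using this

lemma sub (h : IsExpansion x t y) (h' : IsExpansion x s z) :
    IsExpansion x (fun n => t n - s n) (y - z) := by
  have := Tendsto.sub h h'
  simpa only [IsExpansion, sub_smul, Finset.sum_sub_distrib] using this

lemma zero (x : ℕ → X) : IsExpansion x (fun _ => 0) 0 := by
  simp [IsExpansion]

lemma single_zero (x : ℕ → X) (c : ℝ) :
    IsExpansion x (fun n => if n = 0 then c else 0) (c • x 0) := by
  refine tendsto_const_nhds.congr' ?_
  filter_upwards [eventually_ge_atTop 1] with n hn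
  rw [Finset.sum_eq_single 0]
  · simp
  · intro b _ hb
    simp [hb]
  · intro h
    exact absurd (Finset.mem_range.2 hn) h

lemma coeff_tendsto (h : IsExpansion x t y) : Tendsto (fun n => t n • x n) atTop (𝓝 0) := by
  have h1 := (h.comp (tendsto_add_atTop_nat 1)).sub h
  simpa [Function.comp_def, Finset.sum_range_succ] using h1

lemma norm_partial_le (hb : BasisBound x κ) (h : IsExpansion x t y) (m : ℕ) :
    ‖∑ i ∈ Finset.range m, t i • x i‖ ≤ κ * ‖y‖ := by
  refine ge_of_tendsto (h.norm.const_mul κ) ?_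
  filter_upwards [eventually_ge_atTop m] with n hn using hb t m n hn

lemma abs_coeff_le (hb : BasisBound x κ) (hA : 0 < A) (hx : ∀ n, A ≤ ‖x n‖)
    (h : IsExpansion x t y) (i : ℕ) : |t i| ≤ 2 * κ / A * ‖y‖ := by
  have h1 : ‖t i • x i‖ ≤ κ * ‖y‖ + κ * ‖y‖ := by
    have e : t i • x i = ∑ j ∈ Finset.range (i + 1), t j • x j
        - ∑ j ∈ Finset.range i, t j • x j := by
      rw [Finset.sum_range_succ]; abel
    rw [e]
    exact (norm_sub_le _ _).trans
      (add_le_add (h.norm_partial_le hb _) (h.norm_partial_le hb _))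
  rw [norm_smul, Real.norm_eq_abs] at h1
  have h2 : |t i| * A ≤ |t i| * ‖x i‖ := mul_le_mul_of_nonneg_left (hx i) (abs_nonneg _)
  rw [div_mul_eq_mul_div, le_div_iff₀ hA]
  linarith

lemma coeff_unique (hb : BasisBound x κ) (hA : 0 < A) (hx : ∀ n, A ≤ ‖x n‖)
    (h : IsExpansion x t y) (h' : IsExpansion x s y) : t = s := by
  funext i
  have := (h.sub h').abs_coeff_le hb hA hx i
  rw [sub_self, norm_zero, mul_zero] at this
  exact sub_eq_zero.1 (abs_nonpos_iff.1 this)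

end IsExpansion

/-! ### Unconditionality and the growth of the partial sums -/

/-- Multipliers in `[-1, 1]` are handled by convexity, moving one coordinate of the multiplier at a
time to `±1`. -/
lemma SignBound.multiplier (hC : SignBound x C) (a : ℕ → ℝ) (r : Finset ℕ) :
    ∀ (l : ℕ → ℝ), (∀ n, |l n| ≤ 1) →
      ‖∑ n ∈ r, (l n * a n) • x n‖ ≤ C * ‖∑ n ∈ r, a n • x n‖ := by
  have key : ∀ (v : Finset ℕ) (l : ℕ → ℝ), (∀ n, |l n| ≤ 1) →
      (∀ n ∉ v, l n = 1 ∨ l n = -1) →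
      ‖∑ n ∈ r, (l n * a n) • x n‖ ≤ C * ‖∑ n ∈ r, a n • x n‖ := by
    intro v
    induction v using Finset.induction_on with
    | empty => intro l _ hl; exact hC r a l fun n => hl n (by simp)
    | insert j v _ ih =>
      intro l h1 h2
      have hj := abs_le.1 (h1 j)
      have hup : ∀ c : ℝ, (c = 1 ∨ c = -1) →
          ‖∑ n ∈ r, (Function.update l j c n * a n) • x n‖ ≤ C * ‖∑ n ∈ r, a n • x n‖ := by
        intro c hc
        apply ih
        · intro n
          by_cases hn : n = j
          · subst hn
            rcases hc with rfl | rfl <;> simp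
          · simpa [hn] using h1 n
        · intro n hn
          by_cases hnj : n = j
          · subst hnj
            simpa using hc
          · simpa [hnj] using h2 n (by simp [hnj, hn])
      have e : ∑ n ∈ r, (l n * a n) • x n
          = ((1 + l j) / 2) • ∑ n ∈ r, (Function.update l j 1 n * a n) • x n
            + ((1 - l j) / 2) • ∑ n ∈ r, (Function.update l j (-1) n * a n) • x n := by
        rw [Finset.smul_sum, Finset.smul_sum, ← Finset.sum_add_distrib]
        refine Finset.sum_congr rfl fun n _ => ?_
        rw [smul_smul, smul_smul, ← add_smul]
        congr 1
        by_cases hn : n = j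
        · subst hn; simp; ring
        · simp [hn]; ring
      rw [e]
      refine (norm_add_le _ _).trans ?_
      rw [norm_smul, norm_smul, Real.norm_of_nonneg (by linarith), Real.norm_of_nonneg (by linarith)]
      have i1 := mul_le_mul_of_nonneg_left (hup 1 (.inl rfl)) (by linarith : 0 ≤ (1 + l j) / 2)
      have i2 := mul_le_mul_of_nonneg_left (hup (-1) (.inr rfl)) (by linarith : 0 ≤ (1 - l j) / 2)
      linarith
  intro l hl
  -- Only the coordinates in `r` matter; the others are reset to `1`.
  have h := key r (fun n => if n ∈ r then l n else 1) (fun n => by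
    by_cases hn : n ∈ r
    · simpa [hn] using hl n
    · simp [hn]) (fun n hn => by simp [hn])
  refine le_trans (le_of_eq ?_) h
  congr 1
  exact Finset.sum_congr rfl fun n hn => by simp [hn]

lemma SignBound.mono (hC : SignBound x C) (r : Finset ℕ) {a b : ℕ → ℝ}
    (hab : ∀ n, |a n| ≤ |b n|) :
    ‖∑ n ∈ r, a n • x n‖ ≤ C * ‖∑ n ∈ r, b n • x n‖ := by
  have h := hC.multiplier b r (fun n => a n / b n) (fun n => by
    rw [abs_div]
    exact div_le_one_of_le₀ (hab n) (abs_nonneg _))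
  refine le_trans (le_of_eq ?_) h
  congr 1
  refine Finset.sum_congr rfl fun n _ => ?_
  by_cases hb : b n = 0
  · have : a n = 0 := by simpa [hb] using hab n
    simp [this]
  · rw [div_mul_cancel₀ _ hb]

lemma IsExpansion.norm_le_of_le (hC : SignBound x C) (h : IsExpansion x t y)
    (h' : IsExpansion x s z) (ht : ∀ n, 0 ≤ t n) (hts : ∀ n, t n ≤ s n) : ‖y‖ ≤ C * ‖z‖ := by
  refine le_of_tendsto_of_tendsto' h.norm (h'.norm.const_mul C) fun n => ?_
  exact hC.mono _ fun n => abs_le_abs_of_nonneg (ht n) (hts n)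

/-- If the sums `x₀ + ⋯ + xₙ₋₁` were bounded, unconditionality would make `(xₙ)` equivalent to the
unit vector basis of `c₀`. -/
lemma tendsto_norm_sum_atTop (hκ : 1 ≤ κ) (hb : BasisBound x κ) (hC1 : 1 ≤ C)
    (hC : SignBound x C) (hA : 0 < A) (hx : ∀ n, A ≤ ‖x n‖)
    (hnot : ¬ ∃ A B : ℝ, 0 < A ∧ 0 < B ∧
      ∀ (s : Finset ℕ) (hs : s.Nonempty) (a : ℕ → ℝ),
        A * s.sup' hs (fun n => |a n|) ≤ ‖∑ n ∈ s, a n • x n‖ ∧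
        ‖∑ n ∈ s, a n • x n‖ ≤ B * s.sup' hs (fun n => |a n|)) :
    Tendsto (fun n => ‖∑ i ∈ Finset.range n, x i‖) atTop atTop := by
  have hκ0 : 0 < κ := by linarith
  have hC0 : 0 < C := by linarith
  have hb1 : ∀ m n, m ≤ n →
      ‖∑ i ∈ Finset.range m, x i‖ ≤ κ * ‖∑ i ∈ Finset.range n, x i‖ := fun m n hmn => by
    simpa using hb (fun _ => 1) m n hmn
  rw [Filter.tendsto_atTop]
  by_contra! hcon
  obtain ⟨Q, hQ⟩ := hcon
  apply hnot
  have hbd : ∀ m, ‖∑ i ∈ Finset.range m, x i‖ ≤ κ * Q := by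
    intro m
    by_contra! hm
    apply hQ
    filter_upwards [eventually_ge_atTop m] with n hn
    exact (lt_of_mul_lt_mul_left (hm.trans_le (hb1 m n hn)) hκ0.le).le.not_gt
  have hQ0 : 0 ≤ κ * Q := (norm_nonneg _).trans (hbd 0)
  refine ⟨A / C, C * (κ * Q + 1), by positivity, by positivity, fun s hs a => ⟨?_, ?_⟩⟩
  · obtain ⟨j, hj, hsup⟩ := Finset.exists_mem_eq_sup' hs (fun n => |a n|)
    rw [hsup, div_mul_eq_mul_div, div_le_iff₀ hC0]
    have h1 := hC.mono s (a := fun n => if n = j then a n else 0) (b := a) (fun n => by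
      by_cases hn : n = j <;> simp [hn])
    have h2 : ∑ n ∈ s, (if n = j then a n else 0) • x n = a j • x j := by
      rw [Finset.sum_eq_single j (fun n _ hn => by simp [hn]) (fun h => absurd hj h)]
      simp
    rw [h2, norm_smul, Real.norm_eq_abs] at h1
    have h3 := mul_le_mul_of_nonneg_left (hx j) (abs_nonneg (a j))
    linarith
  · set M := s.sup' hs (fun n => |a n|) with hM
    have hle : ∀ n ∈ s, |a n| ≤ M := fun n hn => Finset.le_sup' (fun n => |a n|) hn
    have hM0 : 0 ≤ M := by
      obtain ⟨j, hj⟩ := hs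
      exact (abs_nonneg _).trans (hle j hj)
    obtain ⟨N, hN⟩ := s.exists_nat_subset_range
    have h1 := hC.mono (Finset.range N) (a := fun n => if n ∈ s then a n else 0)
      (b := fun _ => M) (fun n => by
        by_cases hn : n ∈ s
        · simpa [hn, abs_of_nonneg hM0] using hle n hn
        · simp [hn])
    have h2 : ∑ n ∈ Finset.range N, (if n ∈ s then a n else 0) • x n = ∑ n ∈ s, a n • x n := by
      rw [← Finset.sum_subset hN (fun n _ hn => by simp [hn])]
      exact Finset.sum_congr rfl fun n hn => by simp [hn]
    rw [h2, ← Finset.smul_sum, norm_smul, Real.norm_of_nonneg hM0] at h1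
    refine h1.trans ?_
    have h3 : M * ‖∑ i ∈ Finset.range N, x i‖ ≤ M * (κ * Q + 1) :=
      mul_le_mul_of_nonneg_left (by linarith [hbd N]) hM0
    calc C * (M * ‖∑ i ∈ Finset.range N, x i‖) ≤ C * (M * (κ * Q + 1)) :=
          mul_le_mul_of_nonneg_left h3 hC0.le
      _ = C * (κ * Q + 1) * M := by ring

/-! ### The operator repeating the first coordinate -/

/-- The index `n - 1` is truncated, so `fun n => t (n - 1)` is the sequence `t₀, t₀, t₁, t₂, …`. -/
lemma exists_hop [CompleteSpace X] (hb : BasisBound x κ) (hD1 : 1 ≤ D) (hD : ShiftBound x D)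
    (h : IsExpansion x t y) :
    ∃ z, IsExpansion x (fun n => t (n - 1)) z ∧ ‖z‖ ≤ (D + κ) * ‖y‖ := by
  have hle : ∀ m n, m ≤ n →
      dist (∑ i ∈ Finset.range n, t i • x (i + 1)) (∑ i ∈ Finset.range m, t i • x (i + 1))
        ≤ D * dist (∑ i ∈ Finset.range n, t i • x i) (∑ i ∈ Finset.range m, t i • x i) := by
    intro m n hmn
    rw [dist_eq_norm, dist_eq_norm, ← Finset.sum_Ico_eq_sub _ hmn, ← Finset.sum_Ico_eq_sub _ hmn]
    exact hD _ _
  have hc : CauchySeq (fun n => ∑ i ∈ Finset.range n, t i • x (i + 1)) := by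
    rw [Metric.cauchySeq_iff']
    intro ε hε
    obtain ⟨N, hN⟩ := Metric.cauchySeq_iff'.1 (Tendsto.cauchySeq h) (ε / D) (by positivity)
    refine ⟨N, fun n hn => (hle N n hn).trans_lt ?_⟩
    have := hN n hn
    rw [lt_div_iff₀ (by linarith)] at this
    linarith
  obtain ⟨w, hw⟩ := cauchySeq_tendsto_of_complete hc
  refine ⟨w + t 0 • x 0, ?_, ?_⟩
  · rw [IsExpansion, ← tendsto_add_atTop_iff_nat 1]
    simpa [Finset.sum_range_succ'] using hw.add_const (t 0 • x 0)
  · have h1 : ‖w‖ ≤ D * ‖y‖ :=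
      le_of_tendsto_of_tendsto' hw.norm (h.norm.const_mul D) fun n => hD _ _
    have h2 := h.norm_partial_le hb 1
    rw [Finset.sum_range_one] at h2
    have := norm_add_le w (t 0 • x 0)
    linarith

/-- The coordinates of `z - y` are the drops of `t`, which telescope. -/
lemma norm_hop_sub_le (hxB : ∀ n, ‖x n‖ ≤ B) (hB : 0 ≤ B) (ht : Antitone t) (ht0 : ∀ n, 0 ≤ t n)
    (h : IsExpansion x t y) (hz : IsExpansion x (fun n => t (n - 1)) z) :
    ‖z - y‖ ≤ B * t 0 := by
  refine le_of_tendsto (hz.sub h).norm (Eventually.of_forall fun n => ?_)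
  have htel : ∀ n, ∑ i ∈ Finset.range n, (t (i - 1) - t i) = t 0 - t (n - 1) := by
    intro n
    induction n with
    | zero => simp
    | succ n ih => rw [Finset.sum_range_succ, ih]; simp
  calc ‖∑ i ∈ Finset.range n, (t (i - 1) - t i) • x i‖
      ≤ ∑ i ∈ Finset.range n, (t (i - 1) - t i) * B := by
        refine norm_sum_le_of_le _ fun i _ => ?_
        have h0 : 0 ≤ t (i - 1) - t i := sub_nonneg.2 (ht (Nat.sub_le i 1))
        rw [norm_smul, Real.norm_of_nonneg h0]
        exact mul_le_mul_of_nonneg_left (hxB i) h0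
    _ = (t 0 - t (n - 1)) * B := by rw [← Finset.sum_mul, htel]
    _ ≤ t 0 * B := mul_le_mul_of_nonneg_right (by linarith [ht0 (n - 1)]) hB
    _ = B * t 0 := mul_comm _ _

/-! ### The convex set -/

/-- The sums of norm at most `1` of series `∑ tₙ xₙ` with `t₀ ≥ t₁ ≥ … ≥ 0`. -/
def decreasingBall (x : ℕ → X) : Set X :=
  {y | ‖y‖ ≤ 1 ∧ ∃ t : ℕ → ℝ, Antitone t ∧ (∀ n, 0 ≤ t n) ∧ IsExpansion x t y}

lemma convex_decreasingBall (x : ℕ → X) : Convex ℝ (decreasingBall x) := by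
  rintro y ⟨hy, t, ht, ht0, hty⟩ z ⟨hz, s, hs, hs0, hsz⟩ a b ha hb hab
  refine ⟨?_, fun n => a * t n + b * s n, ?_, ?_, (hty.smul a).add (hsz.smul b)⟩
  · have := convex_closedBall (0 : X) 1 (mem_closedBall_zero_iff.2 hy)
      (mem_closedBall_zero_iff.2 hz) ha hb hab
    exact mem_closedBall_zero_iff.1 this
  · intro m n hmn
    exact add_le_add (mul_le_mul_of_nonneg_left (ht hmn) ha)
      (mul_le_mul_of_nonneg_left (hs hmn) hb)
  · intro n
    have := mul_nonneg ha (ht0 n)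
    have := mul_nonneg hb (hs0 n)
    positivity

/-- Coordinates are continuous, so they converge along a convergent sequence, and the basis constant
gives convergence of the partial sums uniformly along the sequence. -/
lemma isClosed_decreasingBall (hκ : 1 ≤ κ) (hb : BasisBound x κ) (hA : 0 < A)
    (hx : ∀ n, A ≤ ‖x n‖) : IsClosed (decreasingBall x) := by
  refine IsSeqClosed.isClosed fun u y hu huy => ?_
  choose hu1 t ht ht0 hexp using hu
  have hcoef : ∀ i, ∃ c, Tendsto (fun k => t k i) atTop (𝓝 c) := by
    intro i
    refine cauchySeq_tendsto_of_complete (Metric.cauchySeq_iff'.2 fun ε hε => ?_)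
    have hpos : 0 < 2 * κ / A := by positivity
    obtain ⟨N, hN⟩ := Metric.cauchySeq_iff'.1 huy.cauchySeq (ε / (2 * κ / A)) (by positivity)
    refine ⟨N, fun n hn => ?_⟩
    have h1 := ((hexp n).sub (hexp N)).abs_coeff_le hb hA hx i
    have h2 := hN n hn
    rw [lt_div_iff₀ hpos, dist_eq_norm] at h2
    rw [Real.dist_eq]
    linarith
  choose c hc using hcoef
  have hpart : ∀ n k, ‖∑ i ∈ Finset.range n, (t k i - c i) • x i‖ ≤ κ * ‖u k - y‖ := by
    intro n k
    have hl : Tendsto (fun l => ‖∑ i ∈ Finset.range n, (t k i - t l i) • x i‖) atTop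
        (𝓝 ‖∑ i ∈ Finset.range n, (t k i - c i) • x i‖) :=
      (tendsto_finsetSum _ fun i _ => ((hc i).const_sub (t k i)).smul_const (x i)).norm
    exact le_of_tendsto_of_tendsto' hl ((huy.const_sub (u k)).norm.const_mul κ)
      fun l => ((hexp k).sub (hexp l)).norm_partial_le hb n
  refine ⟨le_of_tendsto' huy.norm hu1, c,
    fun m n hmn => le_of_tendsto_of_tendsto' (hc n) (hc m) fun k => ht k hmn,
    fun n => ge_of_tendsto' (hc n) fun k => ht0 k n, ?_⟩
  rw [IsExpansion, Metric.tendsto_atTop]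
  intro ε hε
  have hδ : 0 < ε / (2 * (κ + 1)) := by positivity
  obtain ⟨k, hk⟩ := (Metric.tendsto_atTop.1 huy _ hδ)
  obtain ⟨N, hN⟩ := Metric.tendsto_atTop.1 (hexp k) (ε / 2) (by positivity)
  refine ⟨N, fun n hn => ?_⟩
  have h1 := hk k le_rfl
  have h2 := hN n hn
  have h3 := hpart n k
  rw [dist_eq_norm] at h1 h2 ⊢
  have e : ∑ i ∈ Finset.range n, c i • x i - y
      = (∑ i ∈ Finset.range n, t k i • x i - u k)
        - ∑ i ∈ Finset.range n, (t k i - c i) • x i + (u k - y) := by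
    simp only [sub_smul, Finset.sum_sub_distrib]
    abel
  rw [e]
  have h4 := norm_add_le ((∑ i ∈ Finset.range n, t k i • x i - u k)
        - ∑ i ∈ Finset.range n, (t k i - c i) • x i) (u k - y)
  have h5 := norm_sub_le (∑ i ∈ Finset.range n, t k i • x i - u k)
        (∑ i ∈ Finset.range n, (t k i - c i) • x i)
  rw [lt_div_iff₀ (by positivity)] at h1
  linarith

/-! ### The normalized map -/

/-- The coordinates of `L y + (1 - ‖y‖) x₀`, where `L` repeats the first coordinate. -/
lemma IsExpansion.bump (h : IsExpansion x (fun n => t (n - 1)) z) (c : ℝ) :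
    IsExpansion x (fun n => t (n - 1) + if n = 0 then c else 0) (z + c • x 0) :=
  h.add (IsExpansion.single_zero x c)

lemma exists_pos_le_norm_bump (hC1 : 1 ≤ C) (hC : SignBound x C) (hA : 0 < A)
    (hx : ∀ n, A ≤ ‖x n‖) :
    ∃ δ > 0, ∀ (t : ℕ → ℝ) (y z : X), Antitone t → (∀ n, 0 ≤ t n) → IsExpansion x t y →
      IsExpansion x (fun n => t (n - 1)) z → ‖y‖ ≤ 1 → δ ≤ ‖z + (1 - ‖y‖) • x 0‖ := by
  refine ⟨A / (C * (A + 1)), by positivity, fun t y z ht ht0 hy hz hy1 => ?_⟩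
  have hc : 0 ≤ 1 - ‖y‖ := by linarith
  have h1 := hy.norm_le_of_le hC (hz.bump (1 - ‖y‖)) ht0 (fun n => by
    have := ht (Nat.sub_le n 1)
    split_ifs <;> linarith)
  have h2 := (IsExpansion.single_zero x (1 - ‖y‖)).norm_le_of_le hC (hz.bump (1 - ‖y‖))
    (fun n => by split_ifs <;> linarith) (fun n => by
    have := ht0 (n - 1)
    linarith)
  rw [norm_smul, Real.norm_of_nonneg hc] at h2
  have h3 := mul_le_mul_of_nonneg_left (hx 0) hc
  have h4 := mul_le_mul_of_nonneg_left h1 hA.le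
  rw [div_le_iff₀ (by positivity)]
  linarith

lemma norm_normalize_sub_le {u v : X} (hu : u ≠ 0) (hv : v ≠ 0) :
    ‖‖u‖⁻¹ • u - ‖v‖⁻¹ • v‖ ≤ 2 / ‖u‖ * ‖u - v‖ := by
  have hu' : 0 < ‖u‖ := norm_pos_iff.2 hu
  have hv' : 0 < ‖v‖ := norm_pos_iff.2 hv
  have e : ‖u‖⁻¹ • u - ‖v‖⁻¹ • v = ‖u‖⁻¹ • ((u - v) + ((‖v‖ - ‖u‖) * ‖v‖⁻¹) • v) := by
    rw [smul_add, smul_sub, smul_smul,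
      show ‖u‖⁻¹ * ((‖v‖ - ‖u‖) * ‖v‖⁻¹) = ‖u‖⁻¹ - ‖v‖⁻¹ by field_simp, sub_smul]
    abel
  have h1 : ‖((‖v‖ - ‖u‖) * ‖v‖⁻¹) • v‖ ≤ ‖u - v‖ := by
    rw [norm_smul, norm_mul, norm_inv, norm_norm, mul_assoc, inv_mul_cancel₀ hv'.ne', mul_one,
      Real.norm_eq_abs, abs_sub_comm]
    exact abs_norm_sub_norm_le u v
  rw [e, norm_smul, norm_inv, norm_norm, div_mul_eq_mul_div, inv_mul_eq_div]
  refine div_le_div_of_nonneg_right ?_ hu'.le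
  exact (norm_add_le _ _).trans (by linarith)

end ShiftUnconditional

open ShiftUnconditional

/-- If `(xₙ)` is a semi-normalized shift-unconditional basic sequence in a
real Banach space `X` that is not equivalent to the unit vector basis of `c₀`, then there exist
a nonempty bounded closed convex set `K ⊆ B_X` and a fixed-point-free Lipschitz
asymptotically regular map `F : K → K`. -/
theorem statement2 {X : Type*} [NormedAddCommGroup X] [NormedSpace ℝ X] [CompleteSpace X]
    (x : ℕ → X)
    (hbasic : ∃ 𝒦 : ℝ, 1 ≤ 𝒦 ∧ ∀ (a : ℕ → ℝ) (m n : ℕ), m ≤ n →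
      ‖∑ i ∈ Finset.range m, a i • x i‖ ≤ 𝒦 * ‖∑ i ∈ Finset.range n, a i • x i‖)
    (hsemi : ∃ A B : ℝ, 0 < A ∧ 0 < B ∧ ∀ n : ℕ, A ≤ ‖x n‖ ∧ ‖x n‖ ≤ B)
    (huncond : ∃ C : ℝ, 1 ≤ C ∧ ∀ (s : Finset ℕ) (a ε : ℕ → ℝ),
      (∀ n, ε n = 1 ∨ ε n = -1) →
      ‖∑ n ∈ s, (ε n * a n) • x n‖ ≤ C * ‖∑ n ∈ s, a n • x n‖)
    (hshift : ∃ D : ℝ, 1 ≤ D ∧ ∀ (s : Finset ℕ) (a : ℕ → ℝ),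
      ‖∑ n ∈ s, a n • x (n + 1)‖ ≤ D * ‖∑ n ∈ s, a n • x n‖)
    (hnotc0 : ¬ ∃ A B : ℝ, 0 < A ∧ 0 < B ∧
      ∀ (s : Finset ℕ) (hs : s.Nonempty) (a : ℕ → ℝ),
        A * s.sup' hs (fun n => |a n|) ≤ ‖∑ n ∈ s, a n • x n‖ ∧
        ‖∑ n ∈ s, a n • x n‖ ≤ B * s.sup' hs (fun n => |a n|)) :
    ∃ (K : Set X) (F : X → X),
      K.Nonempty ∧ Bornology.IsBounded K ∧ IsClosed K ∧ Convex ℝ K ∧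
      K ⊆ Metric.closedBall (0 : X) 1 ∧
      Set.MapsTo F K K ∧
      (∀ y ∈ K, F y ≠ y) ∧
      (∃ L : ℝ, 0 ≤ L ∧ ∀ y ∈ K, ∀ z ∈ K, ‖F y - F z‖ ≤ L * ‖y - z‖) ∧
      (∀ y ∈ K, Filter.Tendsto (fun n : ℕ => ‖F^[n + 1] y - F^[n] y‖)
        Filter.atTop (nhds 0)) := by
  obtain ⟨κ, hκ, hb⟩ := hbasic
  obtain ⟨A, B, hA, hB, hAB⟩ := hsemi
  obtain ⟨C, hC1, hC⟩ := huncond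
  obtain ⟨D, hD1, hD⟩ := hshift
  replace hb : BasisBound x κ := hb
  replace hC : SignBound x C := hC
  replace hD : ShiftBound x D := hD
  have hx : ∀ n, A ≤ ‖x n‖ := fun n => (hAB n).1
  have hW := tendsto_norm_sum_atTop hκ hb hC1 hC hA hx hnotc0
  have hex : ∀ y : X, ∃ z : X, ∀ t, IsExpansion x t y → IsExpansion x (fun n => t (n - 1)) z := by
    intro y
    by_cases h : ∃ t, IsExpansion x t y
    · obtain ⟨t, ht⟩ := h
      obtain ⟨z, hz, -⟩ := exists_hop hb hD1 hD ht
      exact ⟨z, fun s hs => (ht.coeff_unique hb hA hx hs) ▸ hz⟩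
    · exact ⟨0, fun t ht => absurd ⟨t, ht⟩ h⟩
  choose hop hhop using hex
  have hop_sub : ∀ t s y z, IsExpansion x t y → IsExpansion x s z →
      ‖hop y - hop z‖ ≤ (D + κ) * ‖y - z‖ := by
    intro t s y z ht hs
    obtain ⟨w, hw, hwn⟩ := exists_hop hb hD1 hD (ht.sub hs)
    rwa [((hhop y t ht).sub (hhop z s hs)).unique hw]
  have hop_smul : ∀ t y (c : ℝ), IsExpansion x t y → hop (c • y) = c • hop y := by
    intro t y c ht
    exact (hhop _ _ (ht.smul c)).unique ((hhop y t ht).smul c)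
  obtain ⟨δ, hδ, hlow⟩ := exists_pos_le_norm_bump hC1 hC hA hx
  set G : X → X := fun y => hop y + (1 - ‖y‖) • x 0 with hG
  set F : X → X := fun y => ‖G y‖⁻¹ • G y with hF
  have hGlow : ∀ y ∈ decreasingBall x, δ ≤ ‖G y‖ := by
    rintro y ⟨hy, t, ht, ht0, hty⟩
    exact hlow t y _ ht ht0 hty (hhop y t hty) hy
  have hGne : ∀ y ∈ decreasingBall x, G y ≠ 0 := fun y hy =>
    norm_pos_iff.1 (hδ.trans_le (hGlow y hy))
  have hFnorm : ∀ y ∈ decreasingBall x, ‖F y‖ = 1 := fun y hy => norm_smul_inv_norm (hGne y hy)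
  have hmaps : MapsTo F (decreasingBall x) (decreasingBall x) := by
    intro y hyK
    refine ⟨(hFnorm y hyK).le, ?_⟩
    obtain ⟨hy, t, ht, ht0, hty⟩ := hyK
    refine ⟨_, ?_, ?_, ((hhop y t hty).bump (1 - ‖y‖)).smul ‖G y‖⁻¹⟩
    · intro m n hmn
      refine mul_le_mul_of_nonneg_left (add_le_add (ht (by omega)) ?_) (by positivity)
      split_ifs
      · rfl
      · omega
      · linarith
      · rfl
    · intro n
      have := ht0 (n - 1)
      refine mul_nonneg (by positivity) ?_
      split_ifs <;> linarith
  -- A unit vector in `K` has a positive leading coordinate.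
  have ht0pos : ∀ t y, Antitone t → (∀ n, 0 ≤ t n) → IsExpansion x t y → ‖y‖ = 1 → 0 < t 0 := by
    intro t y ht ht0 hty hy
    refine (ht0 0).lt_of_ne fun h0 => ?_
    have : t = fun _ => 0 := funext fun n => le_antisymm (h0 ▸ ht (Nat.zero_le n)) (ht0 n)
    subst this
    rw [hty.unique (IsExpansion.zero x), norm_zero] at hy
    exact zero_ne_one hy
  refine ⟨decreasingBall x, F, ?_, ?_, isClosed_decreasingBall hκ hb hA hx,
    convex_decreasingBall x, fun y hy => mem_closedBall_zero_iff.2 hy.1, hmaps, ?_, ?_, ?_⟩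
  · exact ⟨0, by simp, fun _ => 0, antitone_const, fun _ => le_rfl, IsExpansion.zero x⟩
  · exact isBounded_closedBall.subset fun y hy => mem_closedBall_zero_iff.2 hy.1
  · intro y hyK hfix
    have hy1 : ‖y‖ = 1 := hfix ▸ hFnorm y hyK
    have hGy : G y = hop y := by simp [hG, hy1]
    have hGne' := norm_ne_zero_iff.2 (hGne y hyK)
    obtain ⟨-, t, ht, ht0, hty⟩ := hyK
    have hpos := ht0pos t y ht ht0 hty hy1
    have heig := (((hhop y t hty).smul ‖G y‖⁻¹).coeff_unique hb hA hx
      (s := t) (by rw [← hGy, show ‖G y‖⁻¹ • G y = y from hfix]; exact hty))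
    have h0 := congrFun heig 0
    have hlam : ‖G y‖⁻¹ = 1 := by
      have : ‖G y‖⁻¹ * t 0 = 1 * t 0 := by simpa using h0
      exact mul_right_cancel₀ hpos.ne' this
    have hconst : ∀ n, t n = t 0 := by
      intro n
      induction n with
      | zero => rfl
      | succ n ih =>
        have := congrFun heig (n + 1)
        simp only [hlam, one_mul, Nat.add_sub_cancel] at this
        rw [← this, ih]
    have hlim := hty.coeff_tendsto.norm
    rw [norm_zero] at hlim
    have : t 0 * A ≤ 0 := ge_of_tendsto' hlim fun n => by
      rw [norm_smul, hconst n, Real.norm_of_nonneg hpos.le]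
      exact mul_le_mul_of_nonneg_left (hx n) hpos.le
    have := mul_pos hpos hA
    linarith
  · refine ⟨2 / δ * (D + κ + ‖x 0‖), by positivity, fun y hy z hz => ?_⟩
    have h1 : ‖G y - G z‖ ≤ (D + κ + ‖x 0‖) * ‖y - z‖ := by
      have e : G y - G z = (hop y - hop z) + (‖z‖ - ‖y‖) • x 0 := by
        simp only [hG, sub_smul]
        abel
      have h2 : ‖(‖z‖ - ‖y‖) • x 0‖ ≤ ‖y - z‖ * ‖x 0‖ := by
        rw [norm_smul, Real.norm_eq_abs, abs_sub_comm]
        exact mul_le_mul_of_nonneg_right (abs_norm_sub_norm_le y z) (norm_nonneg _)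
      obtain ⟨-, t, -, -, hty⟩ := hy
      obtain ⟨-, s, -, -, hsz⟩ := hz
      have h3 := hop_sub t s y z hty hsz
      rw [e]
      refine (norm_add_le _ _).trans ?_
      linarith
    refine (norm_normalize_sub_le (hGne y hy) (hGne z hz)).trans ?_
    rw [mul_assoc]
    exact mul_le_mul (div_le_div_of_nonneg_left (by norm_num) hδ (hGlow y hy)) h1
      (norm_nonneg _) (by positivity)
  · intro y hyK
    -- The first step lands on the unit sphere, where `G` agrees with the linear map `hop`.
    rw [← tendsto_add_atTop_iff_nat 1]
    obtain ⟨hy1K, hy1⟩ := And.intro (hmaps hyK) (hFnorm y hyK)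
    simp only [Function.iterate_succ_apply]
    generalize F y = v at hy1K hy1
    obtain ⟨-, t, ht, ht0, htv⟩ := hy1K
    have hpos := ht0pos t v ht ht0 htv hy1
    have hexp : ∀ n, IsExpansion x (fun i => t (i - n)) (hop^[n] v) := by
      intro n
      induction n with
      | zero => simpa using htv
      | succ n ih =>
        rw [Function.iterate_succ_apply']
        simpa only [Nat.sub_sub, Nat.add_comm 1 n] using hhop _ _ ih
    have hgrow : ∀ n, t 0 / κ * ‖∑ i ∈ Finset.range n, x i‖ ≤ ‖hop^[n] v‖ := by
      intro n
      have h1 := (hexp n).norm_partial_le hb n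
      have h2 : ∑ i ∈ Finset.range n, t (i - n) • x i = t 0 • ∑ i ∈ Finset.range n, x i := by
        rw [Finset.smul_sum]
        refine Finset.sum_congr rfl fun i hi => ?_
        rw [Nat.sub_eq_zero_of_le (Finset.mem_range.1 hi).le]
      rw [h2, norm_smul, Real.norm_of_nonneg hpos.le] at h1
      rw [div_mul_eq_mul_div, div_le_iff₀ (by linarith)]
      linarith
    have hne : ∀ n, hop^[n] v ≠ 0 := by
      intro n h0
      have h1 := hexp n
      rw [h0] at h1
      have h2 := congrFun (h1.coeff_unique hb hA hx (IsExpansion.zero x)) 0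
      simp only [Nat.zero_sub] at h2
      exact hpos.ne' h2
    have hiter : ∀ n, F^[n] v = ‖hop^[n] v‖⁻¹ • hop^[n] v := by
      intro n
      induction n with
      | zero => simp [hy1]
      | succ n ih =>
        have h1 : ‖‖hop^[n] v‖⁻¹ • hop^[n] v‖ = 1 := norm_smul_inv_norm (hne n)
        have h2 : 0 < ‖hop^[n] v‖ := norm_pos_iff.2 (hne n)
        have h3 : G (‖hop^[n] v‖⁻¹ • hop^[n] v) = ‖hop^[n] v‖⁻¹ • hop^[n + 1] v := by
          rw [Function.iterate_succ_apply', ← hop_smul _ _ _ (hexp n)]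
          simp only [hG, h1, sub_self, zero_smul, add_zero]
        rw [Function.iterate_succ_apply', ih]
        simp only [hF, h3]
        rw [norm_smul, norm_inv, norm_norm, smul_smul]
        congr 1
        field_simp
    have hnear : ∀ n, ‖hop^[n + 1] v - hop^[n] v‖ ≤ B * t 0 := by
      intro n
      have h1 := norm_hop_sub_le (t := fun i => t (i - n)) (fun i => (hAB i).2) hB.le
        (fun i j hij => ht (Nat.sub_le_sub_right hij n)) (fun i => ht0 _) (hexp n)
        (hhop _ _ (hexp n))
      rw [Function.iterate_succ_apply']
      simpa only [Nat.zero_sub] using h1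
    have hinf : Tendsto (fun n => ‖hop^[n] v‖) atTop atTop :=
      tendsto_atTop_mono hgrow (hW.const_mul_atTop (by positivity))
    have hlim : Tendsto (fun n => 2 / ‖hop^[n + 1] v‖ * (B * t 0)) atTop (𝓝 0) := by
      have := ((hinf.comp (tendsto_add_atTop_nat 1)).const_div_atTop 2).mul_const (B * t 0)
      simpa [Function.comp_def] using this
    refine squeeze_zero (fun n => norm_nonneg _) (fun n => ?_) hlim
    rw [← Function.iterate_succ_apply, hiter, hiter]
    exact (norm_normalize_sub_le (hne _) (hne _)).trans
      (mul_le_mul_of_nonneg_left (hnear n) (by positivity))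
end

section
/- Let X be a uniformly convex real Banach space and let (x_n)_{n≥1} be a semi-normalized 1-shift unconditional basic sequence in X. Then there exist a nonempty bounded closed convex set K ⊆ B_X and a fixed-point-free map F : K → K that is Lipschitz and uniformly asymptotically regular. -/
/-! The map moves unit vectors of a positive cone towards basis vectors of ever larger index, at a
speed that tends to zero along every orbit, uniformly in the starting point.

After rescaling the sequence to `e n` with `‖e n‖ ≤ 1`, let `P` be the closed cone generated by the
`e n` and `K` its intersection with the unit ball. Unconditionality makes the norm monotone on `P`,
so `K` is retracted onto the positive unit sphere `S = {a ∈ P : ‖a‖ = 1}` by the Lipschitz map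
`R y = (y + (1 - ‖y‖) f) / ‖y + (1 - ‖y‖) f‖`, where `f = e 0 / ‖e 0‖`. On `S` the dynamics is
`Φ a = (a + u (φ a)) / ‖a + u (φ a)‖`, and `F = Φ ∘ R`. Here

* `φ` is a sublinear `1`-Lipschitz functional, positive on `P` outside `0`, with `φ (e n) ≤ w n` for
  positive decreasing weights `w n` that may be chosen as small as desired (`exists_functional`);
* `u s = ∑ 2⁻ᵐ (s - 2⁻ᵐ)⁺ e m` is a Lipschitz curve in `P` with `‖u s‖ ≤ 2 s`, in which only indices
  `m` with `2⁻ᵐ < s` occur (`curve`), so that `φ (u s)` is small compared with `s`.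

Uniform convexity applied to `a ± u` gives `‖a + u‖ ≥ 1 + δ` for `a ∈ S` and `u ∈ P`, where `δ > 0`
depends only on a lower bound for `‖u‖` (`exists_norm_add_ge`). If the weights are small compared
with these gains (`exists_weights`), the normalization outweighs the added `φ (u (φ a))`, and
`φ (Φ a) ≤ q φ a` with `q < 1` depending only on a lower bound for `φ a` (`exists_lyapunov`). Hence
`F` has no fixed point, and `φ` tends to zero along orbits uniformly; since
`‖Φ a - a‖ ≤ 2 ‖u (φ a)‖ ≤ 4 φ a`, so do the displacements. -/

open Metric Set Filter Topology

/-! ### The lattice property and the positive cone -/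

/-- Convexity: multipliers in `[-1, 1]` are averages of signs, and the coordinates are turned from
signs into arbitrary multipliers one at a time. -/
lemma norm_sum_mul_smul_le {X : Type*} [NormedAddCommGroup X] [NormedSpace ℝ X] {x : ℕ → X}
    (huncond : ∀ (s : Finset ℕ) (a ε : ℕ → ℝ), (∀ n, ε n = 1 ∨ ε n = -1) →
      ‖∑ n ∈ s, (ε n * a n) • x n‖ ≤ ‖∑ n ∈ s, a n • x n‖)
    (s : Finset ℕ) (a c : ℕ → ℝ) (hc : ∀ n, |c n| ≤ 1) :
    ‖∑ n ∈ s, (c n * a n) • x n‖ ≤ ‖∑ n ∈ s, a n • x n‖ := by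
  have key : ∀ t : Finset ℕ, ∀ c : ℕ → ℝ, (∀ n, |c n| ≤ 1) →
      (∀ n, n ∉ t → c n = 1 ∨ c n = -1) →
      ‖∑ n ∈ s, (c n * a n) • x n‖ ≤ ‖∑ n ∈ s, a n • x n‖ := by
    intro t
    induction t using Finset.induction_on with
    | empty => exact fun c _ h => huncond s a c fun n => h n (by simp)
    | insert i t hi ih =>
      intro c hc h
      have hupd : ∀ r : ℝ, (r = 1 ∨ r = -1) →
          ‖∑ n ∈ s, (Function.update c i r n * a n) • x n‖ ≤ ‖∑ n ∈ s, a n • x n‖ := by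
        intro r hr
        apply ih
        · intro n
          by_cases hn : n = i
          · subst hn; rcases hr with rfl | rfl <;> simp
          · simpa [Function.update_of_ne hn] using hc n
        · intro n hnt
          by_cases hn : n = i
          · subst hn; simpa using hr
          · rw [Function.update_of_ne hn]
            exact h n (by simp [hn, hnt])
      have hsplit : ∑ n ∈ s, (c n * a n) • x n =
          ((1 + c i) / 2) • ∑ n ∈ s, (Function.update c i 1 n * a n) • x n +
          ((1 - c i) / 2) • ∑ n ∈ s, (Function.update c i (-1) n * a n) • x n := by
        rw [Finset.smul_sum, Finset.smul_sum, ← Finset.sum_add_distrib]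
        refine Finset.sum_congr rfl fun n _ => ?_
        rw [smul_smul, smul_smul, ← add_smul]
        congr 1
        by_cases hn : n = i
        · subst hn; simp; ring
        · simp only [Function.update_of_ne hn]; ring
      have h1 := hupd 1 (Or.inl rfl)
      have h2 := hupd (-1) (Or.inr rfl)
      have hci := abs_le.1 (hc i)
      rw [hsplit]
      refine (norm_add_le _ _).trans ?_
      rw [norm_smul, norm_smul, Real.norm_of_nonneg (by linarith), Real.norm_of_nonneg (by linarith)]
      nlinarith
  have hfin := key s (fun n => if n ∈ s then c n else 1)
    (fun n => by split_ifs; exacts [hc n, by simp]) (fun n hn => by simp [hn])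
  refine le_of_eq_of_le ?_ hfin
  congr 1
  exact Finset.sum_congr rfl fun n hn => by simp [hn]

/-- The norm of a finite combination of the `e n` depends monotonically on the absolute values of
its coefficients. -/
def LatticeNorm {X : Type*} [NormedAddCommGroup X] [NormedSpace ℝ X] (e : ℕ → X) : Prop :=
  ∀ l l' : ℕ →₀ ℝ, (∀ i, |l' i| ≤ |l i|) →
    ‖Finsupp.linearCombination ℝ e l'‖ ≤ ‖Finsupp.linearCombination ℝ e l‖

/-- The closed cone generated by the `e n`. -/
def posCone {X : Type*} [NormedAddCommGroup X] [NormedSpace ℝ X] (e : ℕ → X) : Set X :=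
  closure (Finsupp.linearCombination ℝ e '' {l | ∀ n, 0 ≤ l n})

section Cone

variable {X : Type*} [NormedAddCommGroup X] [NormedSpace ℝ X] {e : ℕ → X}

lemma latticeNorm_of_uncond {x : ℕ → X}
    (huncond : ∀ (s : Finset ℕ) (a ε : ℕ → ℝ), (∀ n, ε n = 1 ∨ ε n = -1) →
      ‖∑ n ∈ s, (ε n * a n) • x n‖ ≤ ‖∑ n ∈ s, a n • x n‖) (r : ℝ) :
    LatticeNorm fun n => r • x n := by
  intro l l' hl
  have hsub : l'.support ⊆ l.support := by
    intro i hi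
    rw [Finsupp.mem_support_iff] at hi ⊢
    intro h0
    have := hl i
    rw [h0, abs_zero] at this
    exact hi (abs_nonpos_iff.1 this)
  rw [Finsupp.linearCombination_apply, Finsupp.linearCombination_apply,
    Finsupp.sum_of_support_subset l' hsub _ (by simp), Finsupp.sum]
  have := norm_sum_mul_smul_le huncond l.support (fun n => l n * r) (fun n => l' n / l n) (by
    intro n
    rw [abs_div]
    exact div_le_one_of_le₀ (hl n) (abs_nonneg _))
  simp only [smul_smul]
  refine le_of_eq_of_le ?_ this
  congr 1
  refine Finset.sum_congr rfl fun n hn => ?_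
  have : l n ≠ 0 := Finsupp.mem_support_iff.1 hn
  rw [← mul_assoc, div_mul_cancel₀ _ this]

lemma add_mem_posCone {a b : X} (ha : a ∈ posCone e) (hb : b ∈ posCone e) :
    a + b ∈ posCone e := by
  refine map_mem_closure₂ continuous_add ha hb ?_
  rintro _ ⟨l, hl, rfl⟩ _ ⟨l', hl', rfl⟩
  exact ⟨l + l', fun n => add_nonneg (hl n) (hl' n), by simp⟩

lemma smul_mem_posCone {a : X} (ha : a ∈ posCone e) {r : ℝ} (hr : 0 ≤ r) :
    r • a ∈ posCone e := by
  refine map_mem_closure (continuous_const_smul r) ha ?_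
  rintro _ ⟨l, hl, rfl⟩
  exact ⟨r • l, fun n => mul_nonneg hr (hl n), by simp⟩

lemma zero_mem_posCone : (0 : X) ∈ posCone e := subset_closure ⟨0, by simp, by simp⟩

lemma basis_mem_posCone (n : ℕ) : e n ∈ posCone e := by
  refine subset_closure ⟨Finsupp.single n 1, fun m => ?_, by simp⟩
  rw [Finsupp.single_apply]; split_ifs <;> norm_num

lemma norm_sub_le_norm_add_posCone (he : LatticeNorm e) {a b : X} (ha : a ∈ posCone e)
    (hb : b ∈ posCone e) : ‖a - b‖ ≤ ‖a + b‖ := by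
  have hab : (a, b) ∈ closure ((Finsupp.linearCombination ℝ e '' {l | ∀ n, 0 ≤ l n}) ×ˢ
      (Finsupp.linearCombination ℝ e '' {l | ∀ n, 0 ≤ l n})) := by
    rw [closure_prod_eq]; exact ⟨ha, hb⟩
  have hcl : IsClosed {p : X × X | ‖p.1 - p.2‖ ≤ ‖p.1 + p.2‖} :=
    isClosed_le (by fun_prop) (by fun_prop)
  refine closure_minimal ?_ hcl hab
  rintro ⟨_, _⟩ ⟨⟨l, hl, rfl⟩, ⟨l', hl', rfl⟩⟩
  simp only [mem_ofPred_eq]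
  rw [← map_sub, ← map_add]
  refine he _ _ fun i => ?_
  have h1 := hl i
  have h2 := hl' i
  rw [Finsupp.sub_apply, Finsupp.add_apply, abs_of_nonneg (add_nonneg h1 h2)]
  exact abs_le.2 ⟨by linarith, by linarith⟩

lemma norm_le_norm_add (he : LatticeNorm e) {a b : X} (ha : a ∈ posCone e)
    (hb : b ∈ posCone e) : ‖a‖ ≤ ‖a + b‖ := by
  have h1 := norm_sub_le_norm_add_posCone he ha hb
  have h2 : (2 : ℝ) • a = (a + b) + (a - b) := by rw [two_smul]; abel
  have h3 := norm_add_le (a + b) (a - b)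
  rw [← h2, norm_smul] at h3
  norm_num at h3
  linarith

/-- Uniform convexity, applied to the symmetric pair `(a ± v) / ‖a + v‖`: adding a positive vector
that is not small to a positive unit vector increases its norm by a definite amount. -/
lemma exists_norm_add_ge [UniformConvexSpace X] (he : LatticeNorm e) {η : ℝ} (hη : 0 < η) :
    ∃ δ : ℝ, 0 < δ ∧ ∀ a ∈ posCone e, ‖a‖ = 1 → ∀ v ∈ posCone e, η ≤ ‖v‖ →
      1 + δ ≤ ‖a + v‖ := by
  obtain ⟨δ, hδ, h⟩ := exists_forall_closed_ball_dist_add_le_two_sub X hη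
  refine ⟨min (δ / 2) 1, by positivity, fun a ha ha1 v hv hvη => ?_⟩
  by_contra! hlt
  set ρ := ‖a + v‖ with hρ
  have hρ1 : 1 ≤ ρ := ha1 ▸ norm_le_norm_add he ha hv
  have hρ0 : 0 < ρ := by linarith
  have hρ2 : ρ ≤ 2 := by linarith [min_le_right (δ / 2) 1]
  have hρδ : ρ < 1 + δ / 2 := by linarith [min_le_left (δ / 2) 1]
  have hn : ∀ y : X, ‖ρ⁻¹ • y‖ = ‖y‖ / ρ := fun y => by
    rw [norm_smul, norm_inv, Real.norm_of_nonneg hρ0.le, div_eq_inv_mul]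
  have h2 : ∀ y : X, ‖y + y‖ = 2 * ‖y‖ := fun y => by
    rw [← two_smul ℝ y, norm_smul]; norm_num
  have := h (x := ρ⁻¹ • (a + v)) (by rw [hn, ← hρ, div_self hρ0.ne'])
    (y := ρ⁻¹ • (a - v)) (by
      rw [hn, div_le_one hρ0]; exact norm_sub_le_norm_add_posCone he ha hv) (by
      rw [← smul_sub, hn, show a + v - (a - v) = v + v by abel, h2, le_div_iff₀ hρ0]
      nlinarith)
  rw [← smul_add, hn, show a + v + (a - v) = a + a by abel, h2, ha1, div_le_iff₀ hρ0] at this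
  nlinarith

end Cone

/-! ### The sublinear functional -/

section Functional

variable {X : Type*} [NormedAddCommGroup X] [NormedSpace ℝ X] {e : ℕ → X}

/-- A finite combination `b` of the first `k` basis vectors satisfies `‖b‖ ≤ ‖b - c‖` for `c` in the
span of the others, so approximating `a` by such `b` and by such `c` forces `a = 0`. -/
lemma eq_zero_of_mem_closure_tails (he : LatticeNorm e) {a : X} (ha : a ∈ posCone e)
    (ht : ∀ k : ℕ, a ∈ closure (Submodule.span ℝ (e '' Ici k) : Set X)) : a = 0 := by
  by_contra hne
  have hpos : 0 < ‖a‖ / 3 := by have := norm_pos_iff.2 hne; positivity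
  obtain ⟨_, ⟨l, -, rfl⟩, hl⟩ := Metric.mem_closure_iff.1 ha _ hpos
  obtain ⟨k, hk⟩ : ∃ k, ∀ i ∈ l.support, i < k :=
    ⟨l.support.sup id + 1, fun i hi => Nat.lt_succ_of_le (Finset.le_sup (f := id) hi)⟩
  obtain ⟨c, hc, hac⟩ := Metric.mem_closure_iff.1 (ht k) _ hpos
  obtain ⟨m, hm, rfl⟩ := (Finsupp.mem_span_image_iff_linearCombination ℝ).1 hc
  have hle : ‖Finsupp.linearCombination ℝ e l‖ ≤ ‖Finsupp.linearCombination ℝ e (l - m)‖ := by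
    refine he _ _ fun i => ?_
    by_cases hi : i ∈ l.support
    · have : m i = 0 := by
        by_contra h0
        have : i ∈ Ici k := (Finsupp.mem_supported ℝ m).1 hm (by simpa using h0)
        exact absurd (hk i hi) (not_lt.2 this)
      simp [this]
    · rw [Finsupp.notMem_support_iff.1 hi, abs_zero]; exact abs_nonneg _
  rw [map_sub] at hle
  rw [dist_eq_norm] at hl hac
  set b := Finsupp.linearCombination ℝ e l
  set c := Finsupp.linearCombination ℝ e m
  have h1 : ‖a‖ ≤ ‖a - b‖ + ‖b‖ := by simpa using norm_add_le (a - b) b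
  have h2 : ‖b - c‖ ≤ ‖a - b‖ + ‖a - c‖ := by
    rw [show b - c = (a - c) - (a - b) by abel, add_comm]; exact norm_sub_le _ _
  linarith

/-- The functional is `φ a = sup_k w k * dist(a, span {e m : m ≥ k})`. -/
lemma exists_functional (he : LatticeNorm e) (he1 : ∀ n, ‖e n‖ ≤ 1) {w : ℕ → ℝ}
    (hw0 : ∀ n, 0 < w n) (hw1 : ∀ n, w n ≤ 1) (hw : Antitone w) :
    ∃ φ : X → ℝ, (∀ a b, φ (a + b) ≤ φ a + φ b) ∧ (∀ (r : ℝ) a, 0 ≤ r → φ (r • a) ≤ r * φ a) ∧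
      (∀ a, φ a ≤ ‖a‖) ∧ (∀ a, 0 ≤ φ a) ∧ (∀ n, φ (e n) ≤ w n) ∧
      ∀ a ∈ posCone e, a ≠ 0 → 0 < φ a := by
  let V : ℕ → Submodule ℝ X := fun k => Submodule.span ℝ (e '' Ici k)
  let q : ℕ → X → ℝ := fun k a => ‖(V k).mkQ a‖
  have hq0 : ∀ k a, 0 ≤ q k a := fun k a => norm_nonneg _
  have hq1 : ∀ k a, q k a ≤ ‖a‖ := fun k a => Submodule.Quotient.norm_mk_le _ a
  have hwq : ∀ a k, w k * q k a ≤ ‖a‖ := fun a k => by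
    nlinarith [hw0 k, hw1 k, hq0 k a, hq1 k a]
  have hbdd : ∀ a, BddAbove (range fun k => w k * q k a) := fun a =>
    ⟨‖a‖, by rintro _ ⟨k, rfl⟩; exact hwq a k⟩
  refine ⟨fun a => ⨆ k, w k * q k a, fun a b => ciSup_le fun k => ?_,
    fun r a hr => ciSup_le fun k => ?_, fun a => ciSup_le (hwq a),
    fun a => Real.iSup_nonneg fun k => mul_nonneg (hw0 k).le (hq0 k a),
    fun n => ciSup_le fun k => ?_, fun a ha hne => ?_⟩
  · have h1 := le_ciSup (hbdd a) k
    have h2 := le_ciSup (hbdd b) k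
    have h3 : q k (a + b) ≤ q k a + q k b := by
      simp only [q, map_add]; exact norm_add_le _ _
    have := mul_le_mul_of_nonneg_left h3 (hw0 k).le
    linarith
  · have h1 := mul_le_mul_of_nonneg_left (le_ciSup (hbdd a) k) hr
    have h2 : q k (r • a) = r * q k a := by
      simp only [q, map_smul, norm_smul, Real.norm_of_nonneg hr]
    rw [h2]
    linarith
  · by_cases hk : k ≤ n
    · have : (V k).mkQ (e n) = 0 := by
        rw [Submodule.mkQ_apply, Submodule.Quotient.mk_eq_zero]
        exact Submodule.subset_span ⟨n, hk, rfl⟩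
      simp only [q, this, norm_zero, mul_zero]
      exact (hw0 n).le
    · have h1 := hw (not_le.1 hk).le
      have h2 := (hq1 k (e n)).trans (he1 n)
      nlinarith [hw0 k, hq0 k (e n)]
  · by_contra! hle
    refine hne (eq_zero_of_mem_closure_tails he ha fun k => ?_)
    have h1 := (le_ciSup (hbdd a) k).trans hle
    have h2 : q k a = 0 := by
      have := hq0 k a
      have := hw0 k
      nlinarith
    exact (QuotientAddGroup.norm_mk_eq_zero_iff_mem_closure (S := (V k).toAddSubgroup)).1 h2

end Functional

/-! ### The escaping curve -/

section Curve

variable {X : Type*} [NormedAddCommGroup X] [NormedSpace ℝ X] {e : ℕ → X}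

/-- The curve `u s = ∑ 2⁻ᵐ (s - 2⁻ᵐ)⁺ e m`: as `s` decreases to `0`, the leading basis vectors
disappear from it one after the other. -/
noncomputable def curve (e : ℕ → X) (s : ℝ) : X :=
  ∑' m : ℕ, ((1 / 2 : ℝ) ^ m * max 0 (s - (1 / 2 : ℝ) ^ m)) • e m

lemma curve_zero : curve e 0 = 0 := by
  unfold curve
  convert tsum_zero with m
  rw [max_eq_left (by simp)]; simp

lemma tsum_mem_posCone {c : ℕ → ℝ} (hc : ∀ n, 0 ≤ c n) (hs : Summable fun n => c n • e n) :
    ∑' n, c n • e n ∈ posCone e := by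
  refine isClosed_closure.mem_of_tendsto hs.hasSum (Eventually.of_forall fun F => ?_)
  change ∑ n ∈ F, c n • e n ∈ posCone e
  induction F using Finset.induction_on with
  | empty => simpa using zero_mem_posCone
  | insert i F hi ih =>
    rw [Finset.sum_insert hi]
    exact add_mem_posCone (smul_mem_posCone (basis_mem_posCone i) (hc i)) ih

variable [CompleteSpace X]

lemma summable_curve (he1 : ∀ n, ‖e n‖ ≤ 1) (s : ℝ) :
    Summable fun m : ℕ => ((1 / 2 : ℝ) ^ m * max 0 (s - (1 / 2 : ℝ) ^ m)) • e m := by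
  refine Summable.of_norm_bounded (summable_geometric_two.mul_right |s|) fun m => ?_
  rw [norm_smul, norm_mul, Real.norm_of_nonneg (by positivity), Real.norm_of_nonneg (by positivity),
    mul_assoc]
  refine mul_le_mul_of_nonneg_left ?_ (by positivity)
  have h1 : max 0 (s - (1 / 2 : ℝ) ^ m) ≤ |s| :=
    max_le (abs_nonneg s) (by linarith [le_abs_self s, show (0 : ℝ) < (1 / 2) ^ m by positivity])
  calc max 0 (s - (1 / 2 : ℝ) ^ m) * ‖e m‖ ≤ |s| * 1 :=
        mul_le_mul h1 (he1 m) (norm_nonneg _) (abs_nonneg _)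
    _ = |s| := mul_one _

lemma curve_sub_le (he1 : ∀ n, ‖e n‖ ≤ 1) (s t : ℝ) : ‖curve e s - curve e t‖ ≤ 2 * |s - t| := by
  unfold curve
  rw [← (summable_curve he1 s).tsum_sub (summable_curve he1 t)]
  refine tsum_of_norm_bounded (hasSum_geometric_two.mul_right |s - t|) fun m => ?_
  rw [← sub_smul, ← mul_sub, norm_smul, norm_mul, Real.norm_of_nonneg (by positivity), mul_assoc]
  refine mul_le_mul_of_nonneg_left ?_ (by positivity)
  have h1 : |max 0 (s - (1 / 2 : ℝ) ^ m) - max 0 (t - (1 / 2 : ℝ) ^ m)| ≤ |s - t| := by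
    simpa using abs_max_sub_max_le_max 0 (s - (1 / 2 : ℝ) ^ m) 0 (t - (1 / 2 : ℝ) ^ m)
  calc _ ≤ |s - t| * 1 := mul_le_mul h1 (he1 m) (norm_nonneg _) (abs_nonneg _)
    _ = |s - t| := mul_one _

lemma norm_curve_le (he1 : ∀ n, ‖e n‖ ≤ 1) {s : ℝ} (hs : 0 ≤ s) : ‖curve e s‖ ≤ 2 * s := by
  simpa [curve_zero, abs_of_nonneg hs] using curve_sub_le he1 s 0

lemma curve_mem_posCone (he1 : ∀ n, ‖e n‖ ≤ 1) (s : ℝ) : curve e s ∈ posCone e :=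
  tsum_mem_posCone (fun m => by positivity) (summable_curve he1 s)

lemma norm_curve_ge (he : LatticeNorm e) (he1 : ∀ n, ‖e n‖ ≤ 1) {A : ℝ} (hA : ∀ n, A ≤ ‖e n‖)
    {s : ℝ} {k : ℕ} (hs : (1 / 2 : ℝ) ^ (k + 1) < s) :
    (1 / 2 : ℝ) ^ (k + 2) * (1 / 2 : ℝ) ^ (k + 2) * A ≤ ‖curve e s‖ := by
  have hc0 : ∀ m : ℕ, 0 ≤ (1 / 2 : ℝ) ^ m * max 0 (s - (1 / 2 : ℝ) ^ m) := fun m => by positivity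
  set c : ℕ → ℝ := fun m => (1 / 2 : ℝ) ^ m * max 0 (s - (1 / 2 : ℝ) ^ m) with hc
  have hsum := summable_curve he1 s
  -- The summand of index `k + 2` is already this large, and it is dominated by the whole sum.
  have hsplit : curve e s = c (k + 2) • e (k + 2) +
      ∑' m, (if m = k + 2 then 0 else c m) • e m := by
    unfold curve
    rw [hsum.tsum_eq_add_tsum_ite (k + 2)]
    congr 1
    refine tsum_congr fun m => ?_
    split_ifs <;> simp [hc]
  have hrest : ∑' m, (if m = k + 2 then 0 else c m) • e m ∈ posCone e := by
    refine tsum_mem_posCone (fun m => by split_ifs; exacts [le_rfl, hc0 m]) ?_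
    have := hsum.update (k + 2) 0
    refine this.congr fun m => ?_
    by_cases hm : m = k + 2
    · subst hm; simp
    · simp [hm, hc]
  have h1 := norm_le_norm_add he (smul_mem_posCone (basis_mem_posCone (e := e) (k + 2))
    (hc0 (k + 2))) hrest
  rw [hsplit]
  refine le_trans ?_ h1
  rw [norm_smul, Real.norm_of_nonneg (hc0 (k + 2))]
  have h2 : (1 / 2 : ℝ) ^ (k + 2) ≤ max 0 (s - (1 / 2 : ℝ) ^ (k + 2)) := by
    refine le_max_of_le_right ?_
    have : (1 / 2 : ℝ) ^ (k + 1) = 2 * (1 / 2 : ℝ) ^ (k + 2) := by ring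
    linarith
  calc _ ≤ (1 / 2 : ℝ) ^ (k + 2) * (1 / 2 : ℝ) ^ (k + 2) * ‖e (k + 2)‖ :=
        mul_le_mul_of_nonneg_left (hA _) (by positivity)
    _ ≤ _ := by gcongr

lemma functional_curve_le (he1 : ∀ n, ‖e n‖ ≤ 1) {w : ℕ → ℝ} (hw : Antitone w)
    (hw0 : ∀ n, 0 < w n) {φ : X → ℝ} (hadd : ∀ a b, φ (a + b) ≤ φ a + φ b)
    (hsmul : ∀ (r : ℝ) a, 0 ≤ r → φ (r • a) ≤ r * φ a) (hφ : ∀ a, φ a ≤ ‖a‖)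
    (hφe : ∀ n, φ (e n) ≤ w n) {s : ℝ} {k : ℕ} (hs0 : 0 ≤ s) (hs : s ≤ (1 / 2 : ℝ) ^ k) :
    φ (curve e s) ≤ 2 * s * w k := by
  have hsum := summable_curve he1 s
  have hφ0 : φ 0 ≤ 0 := by simpa using hφ 0
  have hfin : ∀ F : Finset ℕ,
      φ (∑ m ∈ F, ((1 / 2 : ℝ) ^ m * max 0 (s - (1 / 2 : ℝ) ^ m)) • e m) ≤
        ∑ m ∈ F, (1 / 2 : ℝ) ^ m * (s * w k) := by
    intro F
    induction F using Finset.induction_on with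
    | empty => simpa using hφ0
    | insert i F hi ih =>
      rw [Finset.sum_insert hi, Finset.sum_insert hi]
      refine (hadd _ _).trans (add_le_add ?_ ih)
      refine (hsmul _ _ (by positivity)).trans ?_
      rw [mul_assoc]
      refine mul_le_mul_of_nonneg_left ?_ (by positivity)
      by_cases hik : i < k
      · -- The basis vectors of index below `k` do not occur in `curve e s`.
        have : (1 / 2 : ℝ) ^ k ≤ (1 / 2 : ℝ) ^ i :=
          pow_le_pow_of_le_one (by norm_num) (by norm_num) hik.le
        rw [max_eq_left (by linarith), zero_mul]
        exact mul_nonneg hs0 (hw0 k).le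
      · have h1 : max 0 (s - (1 / 2 : ℝ) ^ i) ≤ s :=
          max_le hs0 (by linarith [show (0 : ℝ) < (1 / 2) ^ i by positivity])
        have h2 := (hφe i).trans (hw (not_lt.1 hik))
        calc _ ≤ max 0 (s - (1 / 2 : ℝ) ^ i) * w k :=
              mul_le_mul_of_nonneg_left h2 (le_max_left _ _)
          _ ≤ _ := mul_le_mul_of_nonneg_right h1 (hw0 k).le
  have hbound : ∀ F : Finset ℕ, ∑ m ∈ F, (1 / 2 : ℝ) ^ m * (s * w k) ≤ 2 * s * w k := by
    intro F
    have h := hasSum_geometric_two.mul_right (s * w k)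
    have := sum_le_hasSum F (fun m _ => by have := hw0 k; positivity) h
    linarith
  have hsub : ∀ F : Finset ℕ, φ (curve e s) ≤ 2 * s * w k +
      ‖curve e s - ∑ m ∈ F, ((1 / 2 : ℝ) ^ m * max 0 (s - (1 / 2 : ℝ) ^ m)) • e m‖ := by
    intro F
    set b := ∑ m ∈ F, ((1 / 2 : ℝ) ^ m * max 0 (s - (1 / 2 : ℝ) ^ m)) • e m
    have h1 := hadd b (curve e s - b)
    rw [add_sub_cancel] at h1
    linarith [hφ (curve e s - b), (hfin F).trans (hbound F)]
  have hlim : Tendsto (fun F : Finset ℕ => 2 * s * w k +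
      ‖curve e s - ∑ m ∈ F, ((1 / 2 : ℝ) ^ m * max 0 (s - (1 / 2 : ℝ) ^ m)) • e m‖) atTop
      (𝓝 (2 * s * w k + ‖curve e s - curve e s‖)) :=
    tendsto_const_nhds.add (tendsto_const_nhds.sub hsum.hasSum).norm
  simpa using ge_of_tendsto' hlim hsub

end Curve

/-! ### Normalization and weights -/

section Weights

variable {X : Type*} [NormedAddCommGroup X] [NormedSpace ℝ X] {e : ℕ → X}

/-- The normalization `x / ‖x‖`, with value `0` at `0`. -/
noncomputable def unitVec (x : X) : X := ‖x‖⁻¹ • x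

lemma norm_unitVec {x : X} (hx : 0 < ‖x‖) : ‖unitVec x‖ = 1 := by
  rw [unitVec, norm_smul, norm_inv, norm_norm, inv_mul_cancel₀ hx.ne']

lemma unitVec_of_norm_one {x : X} (hx : ‖x‖ = 1) : unitVec x = x := by
  rw [unitVec, hx, inv_one, one_smul]

lemma unitVec_mem_posCone {x : X} (hx : x ∈ posCone e) : unitVec x ∈ posCone e :=
  smul_mem_posCone hx (by positivity)

lemma norm_unitVec_sub_le {x y : X} {r : ℝ} (hr : 0 < r) (hx : r ≤ ‖x‖) (hy : 0 < ‖y‖) :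
    ‖unitVec x - unitVec y‖ ≤ 2 / r * ‖x - y‖ := by
  have hx0 : 0 < ‖x‖ := hr.trans_le hx
  have h1 : ‖x‖ • (unitVec x - unitVec y) = (x - y) + (‖y‖ - ‖x‖) • unitVec y := by
    have h2 : ‖x‖ • unitVec x = x := by rw [unitVec, smul_inv_smul₀ hx0.ne']
    have h3 : ‖y‖ • unitVec y = y := by rw [unitVec, smul_inv_smul₀ hy.ne']
    rw [smul_sub, sub_smul, h2, h3]; abel
  have h2 : ‖x‖ * ‖unitVec x - unitVec y‖ ≤ 2 * ‖x - y‖ := by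
    have h3 := norm_add_le (x - y) ((‖y‖ - ‖x‖) • unitVec y)
    rw [← h1, norm_smul, norm_norm, norm_smul, norm_unitVec hy, mul_one, Real.norm_eq_abs] at h3
    have h4 := abs_norm_sub_norm_le y x
    rw [norm_sub_rev y x] at h4
    linarith
  rw [div_mul_eq_mul_div, le_div_iff₀ hr, mul_comm]
  exact (mul_le_mul_of_nonneg_right hx (norm_nonneg _)).trans h2

lemma norm_unitVec_add_sub_le {a v : X} (ha : ‖a‖ = 1) (h : 0 < ‖a + v‖) :
    ‖unitVec (a + v) - a‖ ≤ 2 * ‖v‖ := by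
  have h := norm_unitVec_sub_le one_pos ha.ge h
  rw [unitVec_of_norm_one ha, norm_sub_rev, show a - (a + v) = -v by abel, norm_neg] at h
  simpa using h

/-- Weights so small that the norm gained by adding `v`, with `‖v‖ ≥ η k`, to a positive unit vector
is at least `4 * w k`. -/
lemma exists_weights [UniformConvexSpace X] (he : LatticeNorm e) {η : ℕ → ℝ}
    (hη : ∀ k, 0 < η k) :
    ∃ w : ℕ → ℝ, (∀ n, 0 < w n) ∧ (∀ n, w n ≤ 1) ∧ Antitone w ∧
      ∀ k, ∀ a ∈ posCone e, ‖a‖ = 1 → ∀ v ∈ posCone e, η k ≤ ‖v‖ → 1 + 4 * w k ≤ ‖a + v‖ := by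
  choose δ hδ h using fun k => exists_norm_add_ge he (hη k)
  have h0 : ∀ j, 0 < min (δ j / 4) 1 := fun j => by have := hδ j; positivity
  have hpos : ∀ n, 0 < ∏ j ∈ Finset.range n, min (δ j / 4) 1 :=
    fun n => Finset.prod_pos fun j _ => h0 j
  have hle : ∀ n, ∏ j ∈ Finset.range n, min (δ j / 4) 1 ≤ 1 :=
    fun n => Finset.prod_le_one (fun j _ => (h0 j).le) fun j _ => min_le_right _ _
  refine ⟨fun n => ∏ j ∈ Finset.range (n + 1), min (δ j / 4) 1, fun n => hpos _, fun n => hle _,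
    antitone_nat_of_succ_le fun n => ?_, fun k a ha ha1 v hv hvη => ?_⟩
  · rw [Finset.prod_range_succ _ (n + 1)]
    exact mul_le_of_le_one_right (hpos _).le (min_le_right _ _)
  · have h1 := h k a ha ha1 v hv hvη
    have h2 : ∏ j ∈ Finset.range (k + 1), min (δ j / 4) 1 ≤ δ k / 4 := by
      rw [Finset.prod_range_succ]
      exact (mul_le_of_le_one_left (h0 k).le (hle k)).trans (min_le_left _ _)
    linarith

/-- One step of the dynamics on the positive unit sphere contracts `φ` by a definite factor wherever
`φ` is bounded away from zero. -/
lemma exists_lyapunov [CompleteSpace X] [UniformConvexSpace X] (he : LatticeNorm e)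
    (he1 : ∀ n, ‖e n‖ ≤ 1) {A : ℝ} (hA0 : 0 < A) (hA : ∀ n, A ≤ ‖e n‖) :
    ∃ φ : X → ℝ, (∀ a b, φ a - φ b ≤ ‖a - b‖) ∧ (∀ a, φ a ≤ ‖a‖) ∧
      (∀ a ∈ posCone e, ‖a‖ = 1 → 0 < φ a) ∧
      ∀ ε : ℝ, 0 < ε → ∃ q : ℝ, 0 ≤ q ∧ q < 1 ∧ ∀ a ∈ posCone e, ‖a‖ = 1 → ε ≤ φ a →
        φ (unitVec (a + curve e (φ a))) ≤ q * φ a := by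
  obtain ⟨w, hw0, hw1, hw, hgain⟩ := exists_weights he
    (η := fun k => (1 / 2 : ℝ) ^ (k + 2) * (1 / 2 : ℝ) ^ (k + 2) * A) (fun k => by positivity)
  obtain ⟨φ, hadd, hsmul, hφ1, hφ0, hφe, hφpos⟩ := exists_functional he he1 hw0 hw1 hw
  refine ⟨φ, fun a b => ?_, hφ1, fun a ha ha1 => hφpos a ha (norm_pos_iff.1 (by linarith)), ?_⟩
  · have := hadd b (a - b)
    rw [add_sub_cancel] at this
    linarith [hφ1 (a - b)]
  intro ε hε
  obtain ⟨N, hN⟩ := exists_pow_lt_of_lt_one hε (by norm_num : (1 / 2 : ℝ) < 1)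
  -- The factor comes from `(1 + 2 * t) / (1 + 4 * t) ≤ 1 - 2 / 5 * t` for `t ∈ [0, 1]`.
  refine ⟨1 - 2 / 5 * w N, by linarith [hw1 N], by linarith [hw0 N], fun a ha ha1 hεa => ?_⟩
  set s := φ a
  have hs0 : 0 < s := hε.trans_le hεa
  obtain ⟨k, hk1, hk2⟩ := exists_nat_pow_near_of_lt_one hs0 (ha1 ▸ hφ1 a)
    (by norm_num : (0 : ℝ) < 1 / 2) (by norm_num)
  have hkN : k ≤ N := by
    by_contra! hlt
    have : (1 / 2 : ℝ) ^ k ≤ (1 / 2 : ℝ) ^ N :=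
      pow_le_pow_of_le_one (by norm_num) (by norm_num) hlt.le
    linarith
  have hρ := hgain k a ha ha1 _ (curve_mem_posCone he1 s) (norm_curve_ge he he1 hA hk1)
  have hu := functional_curve_le he1 hw hw0 hadd hsmul hφ1 hφe hs0.le hk2
  set ρ := ‖a + curve e s‖ with hρdef
  have hwk := hw0 k
  have hwk1 := hw1 k
  have hρ0 : 0 < ρ := by linarith
  have h1 : φ (unitVec (a + curve e s)) ≤ ρ⁻¹ * (s + 2 * s * w k) :=
    (hsmul _ _ (by positivity)).trans
      (mul_le_mul_of_nonneg_left (by linarith [hadd a (curve e s)]) (by positivity))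
  refine h1.trans ?_
  rw [inv_mul_le_iff₀ hρ0]
  have hwN := hw hkN
  have hwN0 := hw0 N
  have h2 : 1 + 2 * w k ≤ (1 + 4 * w k) * (1 - 2 / 5 * w k) := by nlinarith
  have h3 : (1 + 4 * w k) * (1 - 2 / 5 * w k) ≤ ρ * (1 - 2 / 5 * w N) := by
    apply mul_le_mul hρ <;> linarith
  nlinarith

end Weights

/-! ### The map -/

/-- If `X` is a uniformly convex real Banach space and `(xₙ)` is a
semi-normalized 1-shift unconditional basic sequence in `X`, then there exist a nonempty
bounded closed convex set `K ⊆ B_X` and a fixed-point-free Lipschitz uniformly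
asymptotically regular map `F : K → K`. -/
theorem statement3 {X : Type*} [NormedAddCommGroup X] [NormedSpace ℝ X] [CompleteSpace X]
    [UniformConvexSpace X]
    (x : ℕ → X)
    (hbasic : ∃ 𝒦 : ℝ, 1 ≤ 𝒦 ∧ ∀ (a : ℕ → ℝ) (m n : ℕ), m ≤ n →
      ‖∑ i ∈ Finset.range m, a i • x i‖ ≤ 𝒦 * ‖∑ i ∈ Finset.range n, a i • x i‖)
    (hsemi : ∃ A B : ℝ, 0 < A ∧ 0 < B ∧ ∀ n : ℕ, A ≤ ‖x n‖ ∧ ‖x n‖ ≤ B)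
    (huncond : ∀ (s : Finset ℕ) (a ε : ℕ → ℝ),
      (∀ n, ε n = 1 ∨ ε n = -1) →
      ‖∑ n ∈ s, (ε n * a n) • x n‖ ≤ ‖∑ n ∈ s, a n • x n‖)
    (hshift : ∀ (s : Finset ℕ) (a : ℕ → ℝ),
      ‖∑ n ∈ s, a n • x (n + 1)‖ ≤ ‖∑ n ∈ s, a n • x n‖) :
    ∃ (K : Set X) (F : X → X),
      K.Nonempty ∧ Bornology.IsBounded K ∧ IsClosed K ∧ Convex ℝ K ∧
      K ⊆ Metric.closedBall (0 : X) 1 ∧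
      Set.MapsTo F K K ∧
      (∀ y ∈ K, F y ≠ y) ∧
      (∃ L : ℝ, 0 ≤ L ∧ ∀ y ∈ K, ∀ z ∈ K, ‖F y - F z‖ ≤ L * ‖y - z‖) ∧
      (∀ ε : ℝ, 0 < ε → ∃ N : ℕ, ∀ n : ℕ, N ≤ n → ∀ y ∈ K,
        ‖F^[n + 1] y - F^[n] y‖ < ε) := by
  obtain ⟨A, B, hA0, hB0, hAB⟩ := hsemi
  set e : ℕ → X := fun n => B⁻¹ • x n with he_def
  have hnorm : ∀ n, ‖e n‖ = ‖x n‖ / B := fun n => by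
    rw [he_def, norm_smul, norm_inv, Real.norm_of_nonneg hB0.le, div_eq_inv_mul]
  have he : LatticeNorm e := latticeNorm_of_uncond huncond B⁻¹
  have he1 : ∀ n, ‖e n‖ ≤ 1 := fun n => by
    rw [hnorm, div_le_one hB0]; exact (hAB n).2
  have heA : ∀ n, A / B ≤ ‖e n‖ := fun n => by
    rw [hnorm]; exact div_le_div_of_nonneg_right (hAB n).1 hB0.le
  have hAB0 : 0 < A / B := div_pos hA0 hB0
  obtain ⟨φ, hφlip, hφ1, hφpos, hφq⟩ := exists_lyapunov he he1 hAB0 heA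
  set f : X := unitVec (e 0)
  have hf1 : ‖f‖ = 1 := norm_unitVec (hAB0.trans_le (heA 0))
  have hfP : f ∈ posCone e := unitVec_mem_posCone (basis_mem_posCone 0)
  set K : Set X := posCone e ∩ closedBall 0 1
  have hK1 : ∀ y ∈ K, ‖y‖ ≤ 1 := fun y hy => by simpa using hy.2
  -- `R` retracts `K` onto the positive unit sphere.
  set R : X → X := fun y => unitVec (y + (1 - ‖y‖) • f)
  set F : X → X := fun y => unitVec (R y + curve e (φ (R y))) with hF
  have hRin : ∀ y ∈ K, y + (1 - ‖y‖) • f ∈ posCone e ∧ 1 / 2 ≤ ‖y + (1 - ‖y‖) • f‖ := by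
    intro y hy
    have h1 := hK1 y hy
    have h2 := smul_mem_posCone hfP (sub_nonneg.2 h1)
    refine ⟨add_mem_posCone hy.1 h2, ?_⟩
    have h3 := norm_le_norm_add he hy.1 h2
    have h4 := norm_le_norm_add he h2 hy.1
    rw [add_comm _ y, norm_smul, hf1, Real.norm_of_nonneg (sub_nonneg.2 h1), mul_one] at h4
    linarith
  have hRP : ∀ y ∈ K, R y ∈ posCone e ∧ ‖R y‖ = 1 := fun y hy =>
    ⟨unitVec_mem_posCone (hRin y hy).1, norm_unitVec (by linarith [(hRin y hy).2])⟩
  have hFin : ∀ a ∈ posCone e, ‖a‖ = 1 → 1 ≤ ‖a + curve e (φ a)‖ := fun a ha ha1 =>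
    ha1 ▸ norm_le_norm_add he ha (curve_mem_posCone he1 _)
  have hFP : ∀ y ∈ K, F y ∈ posCone e ∧ ‖F y‖ = 1 := fun y hy =>
    ⟨unitVec_mem_posCone (add_mem_posCone (hRP y hy).1 (curve_mem_posCone he1 _)),
      norm_unitVec (by linarith [hFin _ (hRP y hy).1 (hRP y hy).2])⟩
  have hsph : ∀ a ∈ posCone e, ‖a‖ = 1 → F a = unitVec (a + curve e (φ a)) := by
    intro a ha ha1
    have : R a = a := by
      simp only [R, ha1, sub_self, zero_smul, add_zero]
      exact unitVec_of_norm_one ha1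
    simp only [hF, this]
  have hmem : ∀ a ∈ posCone e, ‖a‖ = 1 → a ∈ K := fun a ha ha1 => ⟨ha, by simp [ha1]⟩
  have hmaps : MapsTo F K K := fun y hy => hmem _ (hFP y hy).1 (hFP y hy).2
  have hdec : ∀ a ∈ posCone e, ‖a‖ = 1 → φ (F a) < φ a := by
    intro a ha ha1
    have h0 := hφpos a ha ha1
    obtain ⟨q, -, hq1, hq⟩ := hφq _ h0
    rw [hsph a ha ha1]
    exact (hq a ha ha1 le_rfl).trans_lt (by nlinarith)
  refine ⟨K, F, ⟨0, zero_mem_posCone, by simp⟩, isBounded_closedBall.subset inter_subset_right,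
    isClosed_closure.inter isClosed_closedBall, ?_, inter_subset_right, hmaps, ?_,
    ⟨48, by norm_num, ?_⟩, ?_⟩
  · refine Convex.inter ?_ (convex_closedBall 0 1)
    intro a ha b hb s t hs ht _
    exact add_mem_posCone (smul_mem_posCone ha hs) (smul_mem_posCone hb ht)
  · intro y hy hfix
    have h1 := hFP y hy
    rw [hfix] at h1
    have := hdec y h1.1 h1.2
    rw [hfix] at this
    exact lt_irrefl _ this
  · intro y hy z hz
    have h1 : ‖R y - R z‖ ≤ 8 * ‖y - z‖ := by
      have h2 := norm_unitVec_sub_le (by norm_num) (hRin y hy).2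
        ((by norm_num : (0 : ℝ) < 1 / 2).trans_le (hRin z hz).2)
      have h3 : ‖y + (1 - ‖y‖) • f - (z + (1 - ‖z‖) • f)‖ ≤ 2 * ‖y - z‖ := by
        have h4 : y + (1 - ‖y‖) • f - (z + (1 - ‖z‖) • f) = (y - z) + (‖z‖ - ‖y‖) • f := by
          rw [sub_smul, sub_smul, sub_smul]; abel
        rw [h4]
        refine (norm_add_le _ _).trans ?_
        rw [norm_smul, hf1, mul_one, Real.norm_eq_abs]
        have := abs_norm_sub_norm_le z y
        rw [norm_sub_rev z y] at this
        linarith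
      change ‖R y - R z‖ ≤ _ at h2
      linarith
    have h2 : ‖F y - F z‖ ≤ 2 / 1 * ‖R y + curve e (φ (R y)) - (R z + curve e (φ (R z)))‖ :=
      norm_unitVec_sub_le one_pos (hFin _ (hRP y hy).1 (hRP y hy).2)
        (one_pos.trans_le (hFin _ (hRP z hz).1 (hRP z hz).2))
    have h3 : |φ (R y) - φ (R z)| ≤ ‖R y - R z‖ :=
      abs_sub_le_iff.2 ⟨hφlip _ _, by rw [norm_sub_rev]; exact hφlip _ _⟩
    have h4 := curve_sub_le he1 (φ (R y)) (φ (R z))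
    have h5 := norm_add_le (R y - R z) (curve e (φ (R y)) - curve e (φ (R z)))
    rw [show R y - R z + (curve e (φ (R y)) - curve e (φ (R z))) =
      R y + curve e (φ (R y)) - (R z + curve e (φ (R z))) by abel] at h5
    linarith
  · intro ε hε
    obtain ⟨q, hq0, hq1, hq⟩ := hφq (ε / 8) (by positivity)
    obtain ⟨N, hN⟩ := exists_pow_lt_of_lt_one (by positivity : 0 < ε / 8) hq1
    refine ⟨N + 1, fun n hn y hy => ?_⟩
    -- The first application of `F` lands on the sphere, so the count starts from there.
    have hiter : ∀ m, F^[m + 1] y ∈ posCone e ∧ ‖F^[m + 1] y‖ = 1 := fun m => by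
      rw [Function.iterate_succ_apply']
      exact hFP _ (hmaps.iterate m hy)
    have hφm : ∀ m, φ (F^[m + 1] y) ≤ max (ε / 8) (q ^ m) := by
      intro m
      induction m with
      | zero => exact le_max_of_le_right (by rw [pow_zero, ← (hiter 0).2]; exact hφ1 _)
      | succ m ih =>
        obtain ⟨hP, h1⟩ := hiter m
        rw [Function.iterate_succ_apply']
        rcases le_or_gt (φ (F^[m + 1] y)) (ε / 8) with hle | hlt
        · exact le_max_of_le_left ((hdec _ hP h1).le.trans hle)
        · have h2 : φ (F^[m + 1] y) ≤ q ^ m := (le_max_iff.1 ih).resolve_left (not_le.2 hlt)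
          refine le_max_of_le_right ?_
          rw [hsph _ hP h1, pow_succ']
          exact (hq _ hP h1 hlt.le).trans (mul_le_mul_of_nonneg_left h2 hq0)
    obtain ⟨m, rfl⟩ : ∃ m, n = m + 1 := ⟨n - 1, by omega⟩
    obtain ⟨hP, h1⟩ := hiter m
    have h2 : φ (F^[m + 1] y) ≤ ε / 8 := by
      refine (hφm m).trans (max_le le_rfl ?_)
      exact (pow_le_pow_of_le_one hq0 hq1.le (by omega)).trans hN.le
    rw [Function.iterate_succ_apply' F (m + 1), hsph _ hP h1]
    have h3 := norm_unitVec_add_sub_le h1 (one_pos.trans_le (hFin _ hP h1))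
    have h4 := norm_curve_le he1 (hφpos _ hP h1).le
    linarith
end

section
/- Let X be a uniformly convex real Banach space with a semi-normalized subsymmetric Schauder basis (in particular X contains no subspace isomorphic to c₀). Then there exists a fixed-point-free map T : B_X → B_X that is Lipschitz and uniformly asymptotically regular. -/
open Metric Set Filter Topology

/-!
The map is a normalised averaged shift on the positive part of the unit sphere.

Let `S` be the right shift `x n ↦ x (n + 1)` and `V = 1 + S`. Write `|y|` for the coordinatewise
absolute value and, for a unit vector `e ≥ 0`, put `q y = |y| + max 0 (1 - ‖|y|‖) • e`. The map `q`
is Lipschitz, is bounded below in norm, takes positive values, and is the identity on the set of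
positive unit vectors. The map is `T y = V (q y) / ‖V (q y)‖`, so that
`T^n y = V^n (q y) / ‖V^n (q y)‖` for `n ≥ 1`.

* A fixed point would be an eigenvector of `1 + S`, and a shift has none.
* For asymptotic regularity it suffices that `‖V^m z - 2 V^(m-1) z‖ ≤ o(1) ‖V^m z‖` uniformly over
  positive `z`. Here `V^m z - 2 V^(m-1) z = ∑ k, C(m,k) ((2k - m)/m) S^k z`. Since
  `|u| ≤ δ + u^4/δ^3`, this vector is dominated coordinatewise by `δ V^m z` plus a term of norm
  `O(δ^(-3) m^(-2) 2^m ‖z‖)`, by the fourth moment of the binomial distribution. On the other hand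
  `V^m z ≥ C(m,k) S^k z` for each `k`, whence `‖V^m z‖ ≥ c 2^m ‖z‖ / (m + 1)`, and the second
  term is `O(δ^(-3) m^(-1)) ‖V^m z‖`.

The argument uses only that the basis is unconditional and that the powers of `S` are uniformly
bounded above and below.
-/

/-! ### Binomial sums -/

lemma sum_choose_succ (m : ℕ) (g : ℕ → ℝ) :
    ∑ k ∈ Finset.range (m + 2), ((m + 1).choose k : ℝ) * g k
      = ∑ k ∈ Finset.range (m + 1), (m.choose k : ℝ) * (g k + g (k + 1)) := by
  rw [Finset.sum_range_succ']
  simp only [Nat.choose_succ_succ, Nat.cast_add, add_mul, mul_add, Finset.sum_add_distrib]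
  have h : ∑ k ∈ Finset.range (m + 1), (m.choose k : ℝ) * g k
      = ∑ k ∈ Finset.range (m + 1), (m.choose (k + 1) : ℝ) * g (k + 1)
        + (m.choose 0 : ℝ) * g 0 := by
    rw [← Finset.sum_range_succ' (fun k => (m.choose k : ℝ) * g k) (m + 1),
      Finset.sum_range_succ _ (m + 1)]
    simp
  rw [h]
  simp
  ring

lemma sum_choose_real (m : ℕ) :
    ∑ k ∈ Finset.range (m + 1), (m.choose k : ℝ) = 2 ^ m := by
  exact_mod_cast Nat.sum_range_choose m

lemma moment_two (m : ℕ) :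
    ∑ k ∈ Finset.range (m + 1), (m.choose k : ℝ) * (2 * (k : ℝ) - m) ^ 2
      = (m : ℝ) * 2 ^ m := by
  induction m with
  | zero => simp
  | succ m ih =>
    rw [sum_choose_succ m (fun k => (2 * (k : ℝ) - ((m + 1 : ℕ) : ℝ)) ^ 2)]
    have : ∀ k ∈ Finset.range (m + 1), (m.choose k : ℝ) *
        ((2 * (k : ℝ) - ((m + 1 : ℕ) : ℝ)) ^ 2 + (2 * ((k + 1 : ℕ) : ℝ) - ((m + 1 : ℕ) : ℝ)) ^ 2)
        = 2 * ((m.choose k : ℝ) * (2 * k - m) ^ 2) + 2 * (m.choose k : ℝ) := by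
      intro k _
      push_cast
      ring
    rw [Finset.sum_congr rfl this, Finset.sum_add_distrib, ← Finset.mul_sum, ← Finset.mul_sum,
      ih, sum_choose_real]
    push_cast
    ring

lemma moment_four (m : ℕ) :
    ∑ k ∈ Finset.range (m + 1), (m.choose k : ℝ) * (2 * (k : ℝ) - m) ^ 4
      = (3 * (m : ℝ) ^ 2 - 2 * m) * 2 ^ m := by
  induction m with
  | zero => simp
  | succ m ih =>
    rw [sum_choose_succ m (fun k => (2 * (k : ℝ) - ((m + 1 : ℕ) : ℝ)) ^ 4)]
    have : ∀ k ∈ Finset.range (m + 1), (m.choose k : ℝ) *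
        ((2 * (k : ℝ) - ((m + 1 : ℕ) : ℝ)) ^ 4 + (2 * ((k + 1 : ℕ) : ℝ) - ((m + 1 : ℕ) : ℝ)) ^ 4)
        = 2 * ((m.choose k : ℝ) * (2 * k - m) ^ 4)
          + 12 * ((m.choose k : ℝ) * (2 * k - m) ^ 2) + 2 * (m.choose k : ℝ) := by
      intro k _
      push_cast
      ring
    rw [Finset.sum_congr rfl this, Finset.sum_add_distrib, Finset.sum_add_distrib,
      ← Finset.mul_sum, ← Finset.mul_sum, ← Finset.mul_sum, ih, moment_two, sum_choose_real]
    push_cast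
    ring

lemma exists_large_choose (m : ℕ) :
    ∃ k ∈ Finset.range (m + 1), (2 : ℝ) ^ m ≤ (m + 1) * (m.choose k : ℝ) := by
  by_contra! h
  have h1 : ∑ k ∈ Finset.range (m + 1), ((m + 1 : ℝ) * (m.choose k : ℝ))
      < ∑ _k ∈ Finset.range (m + 1), (2 : ℝ) ^ m :=
    Finset.sum_lt_sum_of_nonempty (by simp) h
  rw [← Finset.mul_sum, sum_choose_real] at h1
  simp at h1

lemma abs_le_add_pow_four (u δ : ℝ) (hδ : 0 < δ) : |u| ≤ δ + (δ ^ 3)⁻¹ * u ^ 4 := by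
  rcases le_total |u| δ with h | h
  · have : 0 ≤ (δ ^ 3)⁻¹ * u ^ 4 := by positivity
    linarith
  · have h3 : δ ^ 3 * |u| ≤ u ^ 4 := by
      have : δ ^ 3 ≤ |u| ^ 3 := pow_le_pow_left₀ hδ.le h 3
      calc δ ^ 3 * |u| ≤ |u| ^ 3 * |u| := by gcongr
        _ = |u| ^ 4 := by ring
        _ = u ^ 4 := by rw [← abs_pow, abs_of_nonneg (by positivity)]
    have : |u| ≤ (δ ^ 3)⁻¹ * u ^ 4 := by
      rw [← div_eq_inv_mul, le_div_iff₀ (by positivity)]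
      linarith
    linarith

/-! ### Normalisation -/

section Core

variable {X : Type*} [NormedAddCommGroup X] [NormedSpace ℝ X]

/-- Radial projection onto the unit sphere; it sends `0` to `0`. -/
noncomputable def nrm (a : X) : X := ‖a‖⁻¹ • a

lemma norm_nrm {a : X} (ha : a ≠ 0) : ‖nrm a‖ = 1 := by
  simp [nrm, norm_smul, ha]

lemma nrm_smul (a : X) {t : ℝ} (ht : 0 < t) : nrm (t • a) = nrm a := by
  simp only [nrm, norm_smul, smul_smul, Real.norm_eq_abs, abs_of_pos ht]
  congr 1
  field_simp

lemma nrm_sub_le {a b : X} (ha : a ≠ 0) (hb : b ≠ 0) :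
    ‖nrm a - nrm b‖ ≤ 2 * ‖a - b‖ / ‖a‖ := by
  have ha' : 0 < ‖a‖ := norm_pos_iff.2 ha
  have hb' : 0 < ‖b‖ := norm_pos_iff.2 hb
  have h : nrm a - nrm b = ‖a‖⁻¹ • ((a - b) + ((‖b‖ - ‖a‖) * ‖b‖⁻¹) • b) := by
    simp only [nrm, smul_add, smul_sub, smul_smul, sub_mul, sub_smul]
    rw [mul_inv_cancel₀ hb'.ne', ← mul_assoc, inv_mul_cancel₀ ha'.ne']
    simp
  rw [h, norm_smul, norm_inv, norm_norm, div_eq_inv_mul]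
  gcongr
  have h1 : ‖((‖b‖ - ‖a‖) * ‖b‖⁻¹) • b‖ = |‖b‖ - ‖a‖| := by
    rw [norm_smul, norm_mul, norm_inv, norm_norm, mul_assoc, inv_mul_cancel₀ hb'.ne', mul_one,
      Real.norm_eq_abs]
  have h2 := norm_add_le (a - b) (((‖b‖ - ‖a‖) * ‖b‖⁻¹) • b)
  have h3 := abs_norm_sub_norm_le b a
  rw [norm_sub_rev] at h3
  linarith

/-! ### Powers of the averaged shift on the positive cone -/

lemma one_add_pow_apply (S : Module.End ℝ X) (m : ℕ) (z : X) :
    ((1 + S) ^ m) z = ∑ k ∈ Finset.range (m + 1), (m.choose k : ℝ) • (S ^ k) z := by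
  rw [add_comm, (Commute.one_right S).add_pow]
  rw [LinearMap.sum_apply]
  refine Finset.sum_congr rfl fun k _ => ?_
  rw [one_pow, mul_one, ← Nat.cast_comm, ← nsmul_eq_mul, LinearMap.smul_apply,
    Nat.cast_smul_eq_nsmul]

lemma cf_sum (cf : X →ₗ[ℝ] (ℕ → ℝ)) (s : Finset ℕ) (w : ℕ → ℝ) (f : ℕ → X) (n : ℕ) :
    cf (∑ k ∈ s, w k • f k) n = ∑ k ∈ s, w k * cf (f k) n := by
  simp [map_sum, Finset.sum_apply]

lemma shift_pow_nonneg (cf : X →ₗ[ℝ] (ℕ → ℝ)) (S : Module.End ℝ X)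
    (hS0 : ∀ y, cf (S y) 0 = 0) (hS : ∀ y n, cf (S y) (n + 1) = cf y n)
    {z : X} (hz : ∀ n, 0 ≤ cf z n) (k n : ℕ) : 0 ≤ cf ((S ^ k) z) n := by
  induction k generalizing n with
  | zero => simpa using hz n
  | succ k ih =>
    rw [pow_succ', Module.End.mul_apply]
    cases n with
    | zero => rw [hS0]
    | succ n => rw [hS]; exact ih n

lemma avg_pow_nonneg (cf : X →ₗ[ℝ] (ℕ → ℝ)) (S : Module.End ℝ X)
    (hS0 : ∀ y, cf (S y) 0 = 0) (hS : ∀ y n, cf (S y) (n + 1) = cf y n)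
    {z : X} (hz : ∀ n, 0 ≤ cf z n) (m n : ℕ) : 0 ≤ cf (((1 + S) ^ m) z) n := by
  rw [one_add_pow_apply, cf_sum]
  exact Finset.sum_nonneg fun k _ =>
    mul_nonneg (Nat.cast_nonneg _) (shift_pow_nonneg cf S hS0 hS hz k n)

/-- Powers of the averaged shift lose at most a linear factor on the positive cone, because a
single term of the binomial expansion already carries a `1 / (m + 1)` share of the weight. -/
lemma avg_pow_lower (cf : X →ₗ[ℝ] (ℕ → ℝ)) (S : Module.End ℝ X)
    (hS0 : ∀ y, cf (S y) 0 = 0) (hS : ∀ y n, cf (S y) (n + 1) = cf y n)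
    {C D : ℝ} (hD : 1 ≤ D)
    (hlat : ∀ a b : X, (∀ n, |cf b n| ≤ |cf a n|) → ‖b‖ ≤ C * ‖a‖)
    (hSl : ∀ k y, ‖y‖ ≤ D * ‖(S ^ k) y‖)
    {z : X} (hz : ∀ n, 0 ≤ cf z n) (m : ℕ) :
    2 ^ m * ‖z‖ ≤ (m + 1) * (C * D) * ‖((1 + S) ^ m) z‖ := by
  obtain ⟨k, hk, hk2⟩ := exists_large_choose m
  have h1 : ‖(m.choose k : ℝ) • (S ^ k) z‖ ≤ C * ‖((1 + S) ^ m) z‖ := by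
    apply hlat
    intro n
    rw [abs_of_nonneg (avg_pow_nonneg cf S hS0 hS hz m n), one_add_pow_apply, cf_sum,
      map_smul, Pi.smul_apply, smul_eq_mul,
      abs_of_nonneg (mul_nonneg (Nat.cast_nonneg _) (shift_pow_nonneg cf S hS0 hS hz k n))]
    exact Finset.single_le_sum (f := fun k => (m.choose k : ℝ) * cf ((S ^ k) z) n)
      (fun i _ => mul_nonneg (Nat.cast_nonneg _) (shift_pow_nonneg cf S hS0 hS hz i n)) hk
  rw [norm_smul, Real.norm_of_nonneg (Nat.cast_nonneg _)] at h1
  calc 2 ^ m * ‖z‖ ≤ ((m + 1) * (m.choose k : ℝ)) * (D * ‖(S ^ k) z‖) := by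
        gcongr
        exact hSl k z
    _ = (m + 1) * D * ((m.choose k : ℝ) * ‖(S ^ k) z‖) := by ring
    _ ≤ (m + 1) * D * (C * ‖((1 + S) ^ m) z‖) := by gcongr
    _ = _ := by ring

lemma avg_pow_diff_eq (S : Module.End ℝ X) (m : ℕ) (z : X) :
    ((1 + S) ^ (m + 1)) z - (2 : ℝ) • ((1 + S) ^ m) z
      = ∑ k ∈ Finset.range (m + 2),
        (((m + 1).choose k : ℝ) * ((2 * k - (m + 1)) / (m + 1))) • (S ^ k) z := by
  have h : ((1 + S) ^ m) z = ∑ k ∈ Finset.range (m + 2), (m.choose k : ℝ) • (S ^ k) z := by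
    rw [one_add_pow_apply, Finset.sum_range_succ _ (m + 1)]
    simp
  rw [one_add_pow_apply, h, Finset.smul_sum, ← Finset.sum_sub_distrib]
  refine Finset.sum_congr rfl fun k hk => ?_
  rw [smul_smul, ← sub_smul]
  congr 1
  have hk' : k ≤ m + 1 := by
    have := Finset.mem_range.1 hk
    omega
  have h2 := congrArg (Nat.cast (R := ℝ)) (Nat.choose_mul_succ_eq m k)
  push_cast [Nat.cast_sub hk'] at h2
  field_simp
  linarith

/-- The key estimate: `V^(m+1) z` and `2 V^m z` differ by a small multiple of `‖V^(m+1) z‖`,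
uniformly over the positive cone. -/
lemma avg_pow_diff_le (cf : X →ₗ[ℝ] (ℕ → ℝ)) (S : Module.End ℝ X)
    (hS0 : ∀ y, cf (S y) 0 = 0) (hS : ∀ y n, cf (S y) (n + 1) = cf y n)
    {C D : ℝ} (hC : 1 ≤ C) (hD : 1 ≤ D)
    (hlat : ∀ a b : X, (∀ n, |cf b n| ≤ |cf a n|) → ‖b‖ ≤ C * ‖a‖)
    (hSl : ∀ k y, ‖y‖ ≤ D * ‖(S ^ k) y‖) (hSu : ∀ k y, ‖(S ^ k) y‖ ≤ D * ‖y‖)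
    {z : X} (hz : ∀ n, 0 ≤ cf z n) (m : ℕ) {δ : ℝ} (hδ : 0 < δ) :
    ‖((1 + S) ^ (m + 1)) z - (2 : ℝ) • ((1 + S) ^ m) z‖
      ≤ (C * δ + 6 * C ^ 2 * D ^ 2 * (δ ^ 3)⁻¹ / (m + 1)) * ‖((1 + S) ^ (m + 1)) z‖ := by
  set M : ℝ := (m : ℝ) + 1 with hM
  have hM1 : 1 ≤ M := by simp [hM]
  have hMc : ((m + 1 : ℕ) : ℝ) = M := by push_cast; rfl
  set Q : X := ∑ k ∈ Finset.range (m + 2),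
    (((m + 1).choose k : ℝ) * (2 * k - M) ^ 4) • (S ^ k) z with hQ
  have hQn : ‖Q‖ ≤ 3 * M ^ 2 * 2 ^ (m + 1) * (D * ‖z‖) := by
    calc ‖Q‖ ≤ ∑ k ∈ Finset.range (m + 2),
          (((m + 1).choose k : ℝ) * (2 * k - M) ^ 4) * (D * ‖z‖) := by
          refine norm_sum_le_of_le _ fun k _ => ?_
          rw [norm_smul, Real.norm_of_nonneg (by positivity)]
          gcongr
          exact hSu k z
      _ = (3 * M ^ 2 - 2 * M) * 2 ^ (m + 1) * (D * ‖z‖) := by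
          rw [← Finset.sum_mul]
          have := moment_four (m + 1)
          rw [hMc] at this
          rw [this]
      _ ≤ _ := by
          gcongr
          linarith
  have hdom : ‖((1 + S) ^ (m + 1)) z - (2 : ℝ) • ((1 + S) ^ m) z‖
      ≤ C * ‖δ • ((1 + S) ^ (m + 1)) z + ((δ ^ 3)⁻¹ * (M ^ 4)⁻¹) • Q‖ := by
    apply hlat
    intro n
    refine le_trans ?_ (le_abs_self _)
    rw [avg_pow_diff_eq, cf_sum, one_add_pow_apply, hQ, map_add, map_smul, map_smul,
      Pi.add_apply, Pi.smul_apply, Pi.smul_apply, cf_sum, cf_sum, smul_eq_mul, smul_eq_mul,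
      Finset.mul_sum, Finset.mul_sum, ← Finset.sum_add_distrib]
    refine (Finset.abs_sum_le_sum_abs _ _).trans (Finset.sum_le_sum fun k _ => ?_)
    have hp := shift_pow_nonneg cf S hS0 hS hz k n
    rw [abs_mul, abs_mul, abs_of_nonneg hp, Nat.abs_cast]
    calc ((m + 1).choose k : ℝ) * |(2 * (k : ℝ) - M) / M| * cf ((S ^ k) z) n
        ≤ ((m + 1).choose k : ℝ) * (δ + (δ ^ 3)⁻¹ * ((2 * (k : ℝ) - M) / M) ^ 4)
          * cf ((S ^ k) z) n := by
          gcongr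
          exact abs_le_add_pow_four _ _ hδ
      _ = _ := by
          rw [div_pow, div_eq_mul_inv]
          ring
  have hlow := avg_pow_lower cf S hS0 hS hD hlat hSl hz (m + 1)
  rw [hMc] at hlow
  set v : ℝ := ‖((1 + S) ^ (m + 1)) z‖ with hv
  have hv0 : 0 ≤ v := norm_nonneg _
  have hN : ‖δ • ((1 + S) ^ (m + 1)) z + ((δ ^ 3)⁻¹ * (M ^ 4)⁻¹) • Q‖
      ≤ δ * v + ((δ ^ 3)⁻¹ * (M ^ 4)⁻¹) * (3 * M ^ 2 * D * ((M + 1) * (C * D) * v)) := by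
    refine (norm_add_le _ _).trans ?_
    rw [norm_smul, norm_smul, Real.norm_of_nonneg hδ.le, Real.norm_of_nonneg (by positivity)]
    gcongr
    calc ‖Q‖ ≤ 3 * M ^ 2 * 2 ^ (m + 1) * (D * ‖z‖) := hQn
      _ = 3 * M ^ 2 * D * (2 ^ (m + 1) * ‖z‖) := by ring
      _ ≤ _ := by gcongr
  calc _ ≤ C * (δ * v + ((δ ^ 3)⁻¹ * (M ^ 4)⁻¹) * (3 * M ^ 2 * D * ((M + 1) * (C * D) * v))) :=
        hdom.trans (by gcongr)
    _ ≤ C * (δ * v + ((δ ^ 3)⁻¹ * (M ^ 4)⁻¹) * (3 * M ^ 2 * D * ((2 * M) * (C * D) * v))) := by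
        gcongr
        linarith
    _ = (C * δ + 6 * C ^ 2 * D ^ 2 * (δ ^ 3)⁻¹ / M) * v := by
        field_simp
        ring

/-! ### The fixed-point-free map -/

/-- A map of `X` into the positive cone with values bounded away from `0`, which is the identity
on positive unit vectors; `ab` plays the role of the coordinatewise absolute value and `e` is a
positive unit vector. -/
noncomputable def posLift (ab : X → X) (e y : X) : X := ab y + max 0 (1 - ‖ab y‖) • e

/-- The theorem for a space with an injective coordinate map `cf` whose norm is a lattice norm up
to the constant `C`, and with a shift `S` whose powers are `D`-isomorphisms onto their images. -/
theorem exists_map_of_shift (cf : X →ₗ[ℝ] (ℕ → ℝ)) (hinj : Function.Injective cf)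
    (S : Module.End ℝ X)
    (hS0 : ∀ y, cf (S y) 0 = 0) (hS : ∀ y n, cf (S y) (n + 1) = cf y n)
    {C D : ℝ} (hC : 1 ≤ C) (hD : 1 ≤ D)
    (hlat : ∀ a b : X, (∀ n, |cf b n| ≤ |cf a n|) → ‖b‖ ≤ C * ‖a‖)
    (hSl : ∀ k y, ‖y‖ ≤ D * ‖(S ^ k) y‖) (hSu : ∀ k y, ‖(S ^ k) y‖ ≤ D * ‖y‖)
    (ab : X → X) (hab : ∀ y n, cf (ab y) n = |cf y n|)
    (e : X) (he : ∀ n, 0 ≤ cf e n) (he1 : ‖e‖ = 1) :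
    ∃ T : X → X,
      Set.MapsTo T (Metric.closedBall (0 : X) 1) (Metric.closedBall (0 : X) 1) ∧
      (∀ y ∈ Metric.closedBall (0 : X) 1, T y ≠ y) ∧
      (∃ L : ℝ, 0 ≤ L ∧ ∀ y ∈ Metric.closedBall (0 : X) 1,
        ∀ z ∈ Metric.closedBall (0 : X) 1, ‖T y - T z‖ ≤ L * ‖y - z‖) ∧
      (∀ ε : ℝ, 0 < ε → ∃ N : ℕ, ∀ n : ℕ, N ≤ n →
        ∀ y ∈ Metric.closedBall (0 : X) 1, ‖T^[n + 1] y - T^[n] y‖ < ε) := by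
  set q : X → X := posLift ab e with hq
  have hC0 : 0 < C := by linarith
  have hD0 : 0 < D := by linarith
  have hqcf : ∀ y n, cf (q y) n = |cf y n| + max 0 (1 - ‖ab y‖) * cf e n := by
    intro y n
    simp [hq, posLift, hab]
  have hmax : ∀ y, 0 ≤ max 0 (1 - ‖ab y‖) := fun y => le_max_left _ _
  have hqpos : ∀ y n, 0 ≤ cf (q y) n := by
    intro y n
    rw [hqcf]
    exact add_nonneg (abs_nonneg _) (mul_nonneg (hmax y) (he n))
  have hqlow : ∀ y, 1 ≤ 2 * C * ‖q y‖ := by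
    intro y
    have h1 : ‖ab y‖ ≤ C * ‖q y‖ := by
      apply hlat
      intro n
      rw [abs_of_nonneg (hqpos y n), hqcf, hab, abs_abs]
      linarith [mul_nonneg (hmax y) (he n)]
    have h2 : ‖max 0 (1 - ‖ab y‖) • e‖ ≤ C * ‖q y‖ := by
      apply hlat
      intro n
      rw [abs_of_nonneg (hqpos y n), hqcf, map_smul, Pi.smul_apply, smul_eq_mul,
        abs_of_nonneg (mul_nonneg (hmax y) (he n))]
      linarith [abs_nonneg (cf y n)]
    rw [norm_smul, he1, mul_one, Real.norm_of_nonneg (hmax y)] at h2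
    linarith [le_max_right 0 (1 - ‖ab y‖)]
  have hq0 : ∀ y, q y ≠ 0 := by
    intro y h
    have := hqlow y
    rw [h] at this
    norm_num at this
  have hqid : ∀ y, (∀ n, 0 ≤ cf y n) → ‖y‖ = 1 → q y = y := by
    intro y hy hy1
    have : ab y = y := hinj (funext fun n => by rw [hab, abs_of_nonneg (hy n)])
    simp [hq, posLift, this, hy1]
  have hablip : ∀ y z, ‖ab y - ab z‖ ≤ C * ‖y - z‖ := by
    intro y z
    apply hlat
    intro n
    rw [map_sub, map_sub, Pi.sub_apply, Pi.sub_apply, hab, hab]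
    exact abs_abs_sub_abs_le_abs_sub _ _
  have hqlip : ∀ y z, ‖q y - q z‖ ≤ 2 * C * ‖y - z‖ := by
    intro y z
    have h1 : q y - q z
        = (ab y - ab z) + (max 0 (1 - ‖ab y‖) - max 0 (1 - ‖ab z‖)) • e := by
      simp only [hq, posLift, sub_smul]
      abel
    have h2 : |max 0 (1 - ‖ab y‖) - max 0 (1 - ‖ab z‖)| ≤ ‖ab y - ab z‖ := by
      refine (abs_max_sub_max_le_max _ _ _ _).trans (max_le (by simp) ?_)
      have := abs_norm_sub_norm_le (ab z) (ab y)
      rw [norm_sub_rev] at this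
      rwa [show (1 - ‖ab y‖) - (1 - ‖ab z‖) = ‖ab z‖ - ‖ab y‖ by ring]
    rw [h1]
    refine (norm_add_le _ _).trans ?_
    rw [norm_smul, he1, mul_one, Real.norm_eq_abs]
    linarith [hablip y z]
  have hpow0 : ∀ (z : X), (∀ n, 0 ≤ cf z n) → z ≠ 0 → ∀ m : ℕ, ((1 + S) ^ m) z ≠ 0 := by
    intro z hz hz0 m h
    have := avg_pow_lower cf S hS0 hS hD hlat hSl hz m
    rw [h, norm_zero, mul_zero] at this
    have h2 : 0 < 2 ^ m * ‖z‖ := mul_pos (by positivity) (norm_pos_iff.2 hz0)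
    linarith
  have hV0 : ∀ y, (1 + S) (q y) ≠ 0 := fun y => by
    simpa using hpow0 (q y) (hqpos y) (hq0 y) 1
  have hVlow : ∀ y, 1 ≤ 2 * C * C * ‖(1 + S) (q y)‖ := by
    intro y
    have h1 : ‖q y‖ ≤ C * ‖(1 + S) (q y)‖ := by
      apply hlat
      intro n
      have h2 := shift_pow_nonneg cf S hS0 hS (hqpos y) 1 n
      rw [pow_one] at h2
      rw [LinearMap.add_apply, map_add, Pi.add_apply, Module.End.one_apply,
        abs_of_nonneg (hqpos y n), abs_of_nonneg (add_nonneg (hqpos y n) h2)]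
      linarith
    calc 1 ≤ 2 * C * ‖q y‖ := hqlow y
      _ ≤ 2 * C * (C * ‖(1 + S) (q y)‖) := by gcongr
      _ = _ := by ring
  have hVup : ∀ a, ‖(1 + S) a‖ ≤ (1 + D) * ‖a‖ := by
    intro a
    have h1 := hSu 1 a
    rw [pow_one] at h1
    rw [LinearMap.add_apply, Module.End.one_apply]
    linarith [norm_add_le a (S a)]
  have hiter : ∀ y n, (fun y => nrm ((1 + S) (q y)))^[n + 1] y
      = nrm (((1 + S) ^ (n + 1)) (q y)) := by
    intro y n
    induction n with
    | zero => simp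
    | succ n ih =>
      rw [Function.iterate_succ_apply', ih]
      have hne := hpow0 (q y) (hqpos y) (hq0 y) (n + 1)
      have hinv : 0 < ‖((1 + S) ^ (n + 1)) (q y)‖⁻¹ := inv_pos.2 (norm_pos_iff.2 hne)
      rw [hqid (nrm (((1 + S) ^ (n + 1)) (q y))) ?_ (norm_nrm hne)]
      · rw [show (1 + S) (nrm (((1 + S) ^ (n + 1)) (q y)))
            = ‖((1 + S) ^ (n + 1)) (q y)‖⁻¹ • ((1 + S) ^ (n + 1 + 1)) (q y) by
          rw [nrm, map_smul, pow_succ' _ (n + 1), Module.End.mul_apply]]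
        exact nrm_smul _ hinv
      · intro k
        rw [nrm, map_smul, Pi.smul_apply, smul_eq_mul]
        exact mul_nonneg hinv.le (avg_pow_nonneg cf S hS0 hS (hqpos y) (n + 1) k)
  refine ⟨fun y => nrm ((1 + S) (q y)), ?_, ?_, ?_, ?_⟩
  · intro y _
    rw [mem_closedBall_zero_iff]
    exact (norm_nrm (hV0 y)).le
  · intro y _ hy
    have hy1 : ‖y‖ = 1 := by rw [← hy]; exact norm_nrm (hV0 y)
    have hypos : ∀ n, 0 ≤ cf y n := by
      intro n
      rw [← hy]
      simp only [nrm, map_smul, Pi.smul_apply, smul_eq_mul]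
      have := avg_pow_nonneg cf S hS0 hS (hqpos y) 1 n
      rw [pow_one] at this
      exact mul_nonneg (inv_nonneg.2 (norm_nonneg _)) this
    simp only [hqid y hypos hy1] at hy
    have hVy : (1 + S) y ≠ 0 := by
      have := hV0 y
      rwa [hqid y hypos hy1] at this
    have hVn : ‖(1 + S) y‖ ≠ 0 := norm_ne_zero_iff.2 hVy
    have heig : y + S y = ‖(1 + S) y‖ • y := by
      have h1 : ‖(1 + S) y‖ • nrm ((1 + S) y) = y + S y := by
        rw [nrm, smul_smul, mul_inv_cancel₀ hVn, one_smul]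
        rfl
      rw [← h1, hy]
    set l := ‖(1 + S) y‖
    have hc : ∀ n, cf y n + cf (S y) n = l * cf y n := by
      intro n
      have := congrArg (fun w => cf w n) heig
      simpa using this
    have hzero : ∀ n, cf y n = 0 := by
      by_cases hl : l = 1
      · intro n
        have := hc (n + 1)
        rw [hS, hl] at this
        linarith
      · have hl' : l - 1 ≠ 0 := sub_ne_zero.2 hl
        intro n
        induction n with
        | zero =>
          have := hc 0
          rw [hS0] at this
          have h2 : (l - 1) * cf y 0 = 0 := by linarith
          exact (mul_eq_zero.1 h2).resolve_left hl'
        | succ n ih =>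
          have := hc (n + 1)
          rw [hS, ih] at this
          have h2 : (l - 1) * cf y (n + 1) = 0 := by linarith
          exact (mul_eq_zero.1 h2).resolve_left hl'
    have hy0 : y = 0 := hinj (by rw [map_zero]; exact funext hzero)
    rw [hy0, norm_zero] at hy1
    exact zero_ne_one hy1
  · refine ⟨2 * ((1 + D) * (2 * C)) * (2 * C * C), by positivity, fun y _ z _ => ?_⟩
    have hp : 0 < ‖(1 + S) (q y)‖ := norm_pos_iff.2 (hV0 y)
    refine (nrm_sub_le (hV0 y) (hV0 z)).trans ?_
    rw [div_le_iff₀ hp, ← map_sub]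
    have h1 : ‖(1 + S) (q y - q z)‖ ≤ (1 + D) * (2 * C * ‖y - z‖) :=
      (hVup _).trans (by gcongr; exact hqlip y z)
    calc 2 * ‖(1 + S) (q y - q z)‖ ≤ 2 * ((1 + D) * (2 * C * ‖y - z‖)) * 1 := by linarith
      _ ≤ 2 * ((1 + D) * (2 * C * ‖y - z‖)) * (2 * C * C * ‖(1 + S) (q y)‖) := by
          gcongr
          exact hVlow y
      _ = _ := by ring
  · intro ε hε
    -- `δ` makes the first error term `2 * C * δ` equal to `ε / 2`
    set δ : ℝ := ε / (4 * C) with hδ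
    have hδ0 : 0 < δ := by positivity
    set K : ℝ := 6 * C ^ 2 * D ^ 2 * (δ ^ 3)⁻¹ with hK
    obtain ⟨N, hN⟩ := exists_nat_gt (4 * K / ε)
    refine ⟨N + 1, fun n hn y _ => ?_⟩
    obtain ⟨m, rfl⟩ : ∃ m, n = m + 1 := ⟨n - 1, by omega⟩
    rw [hiter, hiter]
    set z := q y
    have hz := hqpos y
    have ha := hpow0 z hz (hq0 y) (m + 1 + 1)
    have hb := hpow0 z hz (hq0 y) (m + 1)
    have ha' : 0 < ‖((1 + S) ^ (m + 1 + 1)) z‖ := norm_pos_iff.2 ha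
    rw [← nrm_smul (((1 + S) ^ (m + 1)) z) (two_pos : (0 : ℝ) < 2)]
    refine (nrm_sub_le ha (smul_ne_zero two_ne_zero hb)).trans_lt ?_
    rw [div_lt_iff₀ ha']
    have h1 := avg_pow_diff_le cf S hS0 hS hC hD hlat hSl hSu hz (m + 1) hδ0
    have hm : (N : ℝ) ≤ m := by exact_mod_cast (by omega : N ≤ m)
    have h2 : K / (((m + 1 : ℕ) : ℝ) + 1) < ε / 4 := by
      rw [div_lt_iff₀ (by positivity)]
      rw [div_lt_iff₀ hε] at hN
      push_cast
      nlinarith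
    have h3 : C * δ = ε / 4 := by
      rw [hδ]
      field_simp
    calc _ ≤ 2 * ((C * δ + K / (((m + 1 : ℕ) : ℝ) + 1)) * ‖((1 + S) ^ (m + 1 + 1)) z‖) := by
          gcongr
      _ = 2 * (C * δ + K / (((m + 1 : ℕ) : ℝ) + 1)) * ‖((1 + S) ^ (m + 1 + 1)) z‖ := by ring
      _ < ε * ‖((1 + S) ^ (m + 1 + 1)) z‖ := by
          gcongr
          linarith

/-! ### Unconditional bases -/

/-- Unconditionality bounds all multipliers with entries in `[-1, 1]`, not only signs: such a
multiplier is a convex combination of sign vectors. The set `r` contains the coordinates that are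
not yet signs. -/
lemma multiplier_le (x : ℕ → X) {C : ℝ} (s : Finset ℕ) (a : ℕ → ℝ)
    (h : ∀ ε : ℕ → ℝ, (∀ n, ε n = 1 ∨ ε n = -1) →
      ‖∑ n ∈ s, (ε n * a n) • x n‖ ≤ C * ‖∑ n ∈ s, a n • x n‖) (r : Finset ℕ) :
    ∀ θ : ℕ → ℝ, (∀ n, |θ n| ≤ 1) → (∀ n, n ∉ r → θ n = 1 ∨ θ n = -1) →
      ‖∑ n ∈ s, (θ n * a n) • x n‖ ≤ C * ‖∑ n ∈ s, a n • x n‖ := by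
  induction r using Finset.induction_on with
  | empty => exact fun θ _ h2 => h θ fun n => h2 n (by simp)
  | insert j r hj ih =>
    intro θ h1 h2
    have hu : ∀ t : ℝ, (t = 1 ∨ t = -1) →
        ‖∑ n ∈ s, (Function.update θ j t n * a n) • x n‖ ≤ C * ‖∑ n ∈ s, a n • x n‖ := by
      intro t ht
      refine ih _ (fun n => ?_) (fun n hn => ?_)
      · by_cases hnj : n = j
        · subst hnj
          rcases ht with rfl | rfl <;> simp
        · simpa [hnj] using h1 n
      · by_cases hnj : n = j
        · subst hnj
          simpa using ht
        · simpa [hnj] using h2 n (by simp [hnj, hn])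
    have hj1 := abs_le.1 (h1 j)
    have hsum : ∑ n ∈ s, (θ n * a n) • x n
        = ((1 + θ j) / 2) • ∑ n ∈ s, (Function.update θ j 1 n * a n) • x n
          + ((1 - θ j) / 2) • ∑ n ∈ s, (Function.update θ j (-1) n * a n) • x n := by
      rw [Finset.smul_sum, Finset.smul_sum, ← Finset.sum_add_distrib]
      refine Finset.sum_congr rfl fun n _ => ?_
      rw [smul_smul, smul_smul, ← add_smul]
      congr 1
      by_cases hnj : n = j
      · subst hnj
        simp
        ring
      · simp [hnj]
        ring
    rw [hsum]
    refine (norm_add_le _ _).trans ?_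
    rw [norm_smul, norm_smul, Real.norm_of_nonneg (by linarith : 0 ≤ (1 + θ j) / 2),
      Real.norm_of_nonneg (by linarith : 0 ≤ (1 - θ j) / 2)]
    have e1 := mul_le_mul_of_nonneg_left (hu 1 (Or.inl rfl)) (by linarith : 0 ≤ (1 + θ j) / 2)
    have e2 := mul_le_mul_of_nonneg_left (hu (-1) (Or.inr rfl)) (by linarith : 0 ≤ (1 - θ j) / 2)
    linarith

lemma lattice_finite (x : ℕ → X) {C : ℝ}
    (h : ∀ (s : Finset ℕ) (a ε : ℕ → ℝ), (∀ n, ε n = 1 ∨ ε n = -1) →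
      ‖∑ n ∈ s, (ε n * a n) • x n‖ ≤ C * ‖∑ n ∈ s, a n • x n‖)
    (s : Finset ℕ) (a b : ℕ → ℝ) (hab : ∀ n, |b n| ≤ |a n|) :
    ‖∑ n ∈ s, b n • x n‖ ≤ C * ‖∑ n ∈ s, a n • x n‖ := by
  classical
  -- off `s` the multiplier is irrelevant, and is set to the sign `1`
  have key := multiplier_le x s a (h s a) s (fun n => if n ∈ s then b n / a n else 1)
    (fun n => by
      by_cases hn : n ∈ s
      · simp only [hn, if_true, abs_div]
        exact div_le_one_of_le₀ (hab n) (abs_nonneg _)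
      · simp [hn])
    (fun n hn => by simp [hn])
  refine le_of_eq_of_le ?_ key
  congr 1
  refine Finset.sum_congr rfl fun n hn => ?_
  simp only [hn, if_true]
  congr 1
  by_cases ha : a n = 0
  · have := hab n
    rw [ha, abs_zero] at this
    simp [abs_nonpos_iff.1 this]
  · field_simp

/-- If finite sums of `c n • w n` are dominated by those of `a n • x n`, convergence of the second
series forces convergence of the first. -/
lemma exists_limit [CompleteSpace X] (x w : ℕ → X) (a c : ℕ → ℝ) {C : ℝ} (hC : 1 ≤ C)
    (h : ∀ s : Finset ℕ, ‖∑ n ∈ s, c n • w n‖ ≤ C * ‖∑ n ∈ s, a n • x n‖) {y : X}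
    (hy : Tendsto (fun N => ∑ i ∈ Finset.range N, a i • x i) atTop (𝓝 y)) :
    ∃ z, Tendsto (fun N => ∑ i ∈ Finset.range N, c i • w i) atTop (𝓝 z) := by
  apply cauchySeq_tendsto_of_complete
  rw [Metric.cauchySeq_iff']
  intro ε hε
  obtain ⟨N, hN⟩ := Metric.cauchySeq_iff'.1 hy.cauchySeq (ε / C) (by positivity)
  refine ⟨N, fun n hn => ?_⟩
  have h1 := hN n hn
  rw [dist_eq_norm, ← Finset.sum_Ico_eq_sub _ hn] at h1 ⊢
  rw [lt_div_iff₀ (by positivity)] at h1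
  linarith [h (Finset.Ico N n)]

end Core

/-- Let `X` be a uniformly convex real Banach space with a semi-normalized
subsymmetric Schauder basis.  Then there exists a fixed-point-free Lipschitz uniformly
asymptotically regular map `T : B_X → B_X`. -/
theorem statement6 {X : Type*} [NormedAddCommGroup X] [NormedSpace ℝ X] [CompleteSpace X]
    [UniformConvexSpace X]
    (x : ℕ → X)
    (hbasis : ∀ y : X, ∃! a : ℕ → ℝ,
      Filter.Tendsto (fun N : ℕ => ∑ i ∈ Finset.range N, a i • x i)
        Filter.atTop (nhds y))
    (hsemi : ∃ A B : ℝ, 0 < A ∧ 0 < B ∧ ∀ n : ℕ, A ≤ ‖x n‖ ∧ ‖x n‖ ≤ B)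
    (huncond : ∃ C : ℝ, 1 ≤ C ∧ ∀ (s : Finset ℕ) (a ε : ℕ → ℝ),
      (∀ n, ε n = 1 ∨ ε n = -1) →
      ‖∑ n ∈ s, (ε n * a n) • x n‖ ≤ C * ‖∑ n ∈ s, a n • x n‖)
    (hsub : ∃ C : ℝ, 1 ≤ C ∧ ∀ φ : ℕ → ℕ, StrictMono φ →
      ∀ (s : Finset ℕ) (a : ℕ → ℝ),
        C⁻¹ * ‖∑ n ∈ s, a n • x n‖ ≤ ‖∑ n ∈ s, a n • x (φ n)‖ ∧
        ‖∑ n ∈ s, a n • x (φ n)‖ ≤ C * ‖∑ n ∈ s, a n • x n‖) :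
    ∃ T : X → X,
      Set.MapsTo T (Metric.closedBall (0 : X) 1) (Metric.closedBall (0 : X) 1) ∧
      (∀ y ∈ Metric.closedBall (0 : X) 1, T y ≠ y) ∧
      (∃ L : ℝ, 0 ≤ L ∧ ∀ y ∈ Metric.closedBall (0 : X) 1,
        ∀ z ∈ Metric.closedBall (0 : X) 1, ‖T y - T z‖ ≤ L * ‖y - z‖) ∧
      (∀ ε : ℝ, 0 < ε → ∃ N : ℕ, ∀ n : ℕ, N ≤ n →
        ∀ y ∈ Metric.closedBall (0 : X) 1, ‖T^[n + 1] y - T^[n] y‖ < ε) := by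
  obtain ⟨A, _, hA, _, hAB⟩ := hsemi
  obtain ⟨C, hC, hunc⟩ := huncond
  obtain ⟨D, hD, hshift⟩ := hsub
  have hD0 : 0 < D := by linarith
  have hfin := lattice_finite x hunc
  choose f hf hfu using hbasis
  have hfu' : ∀ (y : X) (a : ℕ → ℝ),
      Tendsto (fun N : ℕ => ∑ i ∈ Finset.range N, a i • x i) atTop (𝓝 y) → f y = a :=
    fun y a h => (hfu y a h).symm
  let cf : X →ₗ[ℝ] (ℕ → ℝ) :=
    { toFun := f
      map_add' := fun y z => hfu' _ _ (by
        simpa [add_smul, Finset.sum_add_distrib] using (hf y).add (hf z))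
      map_smul' := fun t y => hfu' _ _ (by
        simpa [mul_smul, Finset.smul_sum] using (hf y).const_smul t) }
  have hcf : ∀ y, Tendsto (fun N : ℕ => ∑ i ∈ Finset.range N, cf y i • x i) atTop (𝓝 y) := hf
  have hcu : ∀ (y : X) (a : ℕ → ℝ),
      Tendsto (fun N : ℕ => ∑ i ∈ Finset.range N, a i • x i) atTop (𝓝 y) → cf y = a := hfu'
  have hinj : Function.Injective cf := fun y z h => by
    have h1 := hcf y
    rw [h] at h1
    exact tendsto_nhds_unique h1 (hcf z)
  have hlat : ∀ a b : X, (∀ n, |cf b n| ≤ |cf a n|) → ‖b‖ ≤ C * ‖a‖ := fun a b h =>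
    le_of_tendsto_of_tendsto' (hcf b).norm ((hcf a).norm.const_mul C)
      fun N => hfin _ _ _ h
  -- the coordinatewise absolute value
  have habs : ∀ y, ∃ z, ∀ n, cf z n = |cf y n| := by
    intro y
    obtain ⟨z, hz⟩ := exists_limit x x (cf y) (fun n => |cf y n|) hC
      (fun s => hfin s _ _ fun n => by simp) (hcf y)
    exact ⟨z, fun n => by rw [hcu z _ hz]⟩
  choose ab hab using habs
  -- the `k`-fold shift
  have hsh : ∀ (k : ℕ) (y : X), ∃ z, (∀ n, cf z n = if n < k then 0 else cf y (n - k)) ∧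
      ‖y‖ ≤ D * ‖z‖ ∧ ‖z‖ ≤ D * ‖y‖ := by
    intro k y
    have hk := hshift (fun n => n + k) (fun a b h => by simpa using h)
    obtain ⟨z, hz⟩ := exists_limit x (fun n => x (n + k)) (cf y) (cf y) hD
      (fun s => (hk s _).2) (hcf y)
    refine ⟨z, fun n => ?_, ?_, ?_⟩
    · have : Tendsto (fun N : ℕ => ∑ i ∈ Finset.range N,
          (if i < k then 0 else cf y (i - k)) • x i) atTop (𝓝 z) := by
        rw [← tendsto_add_atTop_iff_nat k]
        refine hz.congr fun N => ?_
        rw [add_comm N k, Finset.sum_range_add]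
        have h0 : ∑ i ∈ Finset.range k, (if i < k then 0 else cf y (i - k)) • x i = 0 :=
          Finset.sum_eq_zero fun i hi => by simp [Finset.mem_range.1 hi]
        rw [h0, zero_add]
        exact Finset.sum_congr rfl fun i _ => by simp [add_comm]
      rw [hcu z _ this]
    · refine le_of_tendsto_of_tendsto' (hcf y).norm (hz.norm.const_mul D) fun N => ?_
      have := (hk (Finset.range N) (cf y)).1
      rwa [inv_mul_le_iff₀ hD0] at this
    · exact le_of_tendsto_of_tendsto' hz.norm ((hcf y).norm.const_mul D) fun N => (hk _ _).2
  choose Sh hSh hShl hShu using hsh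
  let S : Module.End ℝ X :=
    { toFun := Sh 1
      map_add' := fun y z => hinj (funext fun n => by
        rw [map_add, Pi.add_apply, hSh, hSh, hSh, map_add]
        split_ifs <;> simp)
      map_smul' := fun t y => hinj (funext fun n => by
        rw [map_smul, Pi.smul_apply, hSh, hSh, map_smul]
        split_ifs <;> simp) }
  have hS0 : ∀ y, cf (S y) 0 = 0 := fun y => by
    change cf (Sh 1 y) 0 = 0
    simp [hSh]
  have hS : ∀ y n, cf (S y) (n + 1) = cf y n := fun y n => by
    change cf (Sh 1 y) (n + 1) = _
    simp [hSh]
  have hSk : ∀ k y, (S ^ k) y = Sh k y := by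
    intro k y
    induction k with
    | zero => exact hinj (funext fun n => by simp [hSh])
    | succ k ih =>
      rw [pow_succ', Module.End.mul_apply, ih]
      refine hinj (funext fun n => ?_)
      cases n with
      | zero => rw [hS0, hSh]; simp
      | succ n => rw [hS, hSh, hSh]; simp
  have hx0 : 0 < ‖x 0‖ := hA.trans_le (hAB 0).1
  have hcx : cf (x 0) = Pi.single 0 1 := by
    apply hcu
    refine tendsto_const_nhds.congr' ?_
    filter_upwards [eventually_ge_atTop 1] with N hN
    rw [Finset.sum_eq_single_of_mem 0 (Finset.mem_range.2 (by omega))]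
    · simp
    · intro i _ hi
      simp [hi]
  refine exists_map_of_shift cf hinj S hS0 hS hC hD hlat
    (fun k y => by rw [hSk]; exact hShl k y) (fun k y => by rw [hSk]; exact hShu k y)
    ab hab (‖x 0‖⁻¹ • x 0) (fun n => ?_) ?_
  · rw [map_smul, hcx, Pi.smul_apply, smul_eq_mul]
    refine mul_nonneg (inv_nonneg.2 hx0.le) ?_
    by_cases hn : n = 0
    · subst hn; simp
    · simp [hn]
  · rw [norm_smul, norm_inv, norm_norm, inv_mul_cancel₀ hx0.ne']
end

section
/- Let X be a real Banach space that contains an isomorphic copy of c₀ but contains no subspace isomorphic to ℓ₁. Then for every ε ∈ (0,1) there exist a sequence (x_n)_{n≥1} in B_X that is equivalent to the unit vector basis of c₀ and whose closed linear span is the range of a bounded linear projection on X, and a (1+ε)-Lipschitz retraction R : B_X → K, where K = {x ∈ X : x = Σ_{n=1}^∞ t_n x_n for some scalars 0 ≤ t_n ≤ 1 such that the series converges in norm}. -/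
/-!
The retraction is coordinatewise truncation. Suppose `xₙ` satisfies the upper `c₀`-estimate
`‖∑ aₙ xₙ‖ ≤ max |aₙ|`, and `fₙ` are biorthogonal functionals with `‖fₙ‖ ≤ 1 + ε` and `fₙ(y) → 0`
for every `y`. Then `y ↦ ∑ fₙ(y) xₙ` is a bounded projection onto the closed span of the `xₙ`, and
`y ↦ ∑ clamp(fₙ(y)) xₙ`, with `clamp` the truncation to `[0,1]`, is a `(1+ε)`-Lipschitz retraction
onto the positive cube (`UpperC0.exists_projection`, `UpperC0.exists_retraction`).

James's distortion theorem for `c₀` and Hahn–Banach provide such a system without the condition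
`fₙ(y) → 0` (`exists_c0_system`). It is obtained by passing to blocks: if `dₙ` are disjointly
supported and `ℓ₁`-normalised, then `∑ᵢ dₙ(i) fᵢ` and `∑ᵢ sign(dₙ(i)) xᵢ` again form a biorthogonal
system with the same constants (`UpperC0.signBlock`, `apply_signBlock`). So it suffices to find
weak*-null blocks of `fₙ`.

This is the Hagler–Johnson theorem (`exists_weakStar_null`). By diagonalisation choose blocks `dₙ`
such that no further blocks have smaller `δ = sup_{‖x‖ ≤ 1} limsup |∑ᵢ dₙ(i) fᵢ(x)|`
(`exists_stable`). If
`δ = 0` the blocks are weak*-null. Otherwise, averaging functionals taken from finitely many infinite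
subsequences, with arbitrary signs, gives further blocks, so some `x` in the ball makes these averages
almost `δ`. No term can exceed `δ` by much, so all terms are at least `δ/2` at `x` with their
prescribed signs (`tree_step`). Iterating yields a Rademacher-like sequence of points of the ball
(`exists_rademacher`), which spans a copy of `ℓ₁` (`exists_l1_embedding`).
-/

open Metric Set Filter Topology
open scoped ZeroAtInfty

namespace C0Retract

variable {X : Type*} [NormedAddCommGroup X] [NormedSpace ℝ X]

/-! ### Almost isometric copies of `c₀` -/

/-- The upper `c₀`-estimate with constant `1`: `‖∑ aₙ xₙ‖ ≤ max |aₙ|` for finite sums. -/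
def UpperC0 (x : ℕ → X) : Prop :=
  ∀ (s : Finset ℕ) (a : ℕ → ℝ) (M : ℝ), 0 ≤ M → (∀ n ∈ s, |a n| ≤ M) →
    ‖∑ n ∈ s, a n • x n‖ ≤ M

/-- If coordinates are controlled by the norm with constant `C`, then Hahn–Banach extends the
coordinate functionals with norm at most `C`. -/
theorem exists_biorthogonal (x : ℕ → X) (C : ℝ) (hC : 0 ≤ C)
    (h : ∀ (a : ℕ →₀ ℝ) (k : ℕ), |a k| ≤ C * ‖Finsupp.linearCombination ℝ x a‖) :
    ∃ f : ℕ → X →L[ℝ] ℝ, (∀ k, ‖f k‖ ≤ C) ∧ ∀ k j, f k (x j) = if k = j then 1 else 0 := by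
  have hinj : Function.Injective (Finsupp.linearCombination ℝ x) := by
    rw [← LinearMap.ker_eq_bot, LinearMap.ker_eq_bot']
    intro a ha
    ext k
    have := h a k
    rw [ha, norm_zero, mul_zero] at this
    simpa using abs_nonpos_iff.1 this
  let e := LinearEquiv.ofInjective (Finsupp.linearCombination ℝ x) hinj
  have key : ∀ k : ℕ, ∃ f : X →L[ℝ] ℝ, ‖f‖ ≤ C ∧ ∀ j, f (x j) = if k = j then 1 else 0 := by
    intro k
    let φ : (Finsupp.linearCombination ℝ x).range →L[ℝ] ℝ :=
      LinearMap.mkContinuous ((Finsupp.lapply k : (ℕ →₀ ℝ) →ₗ[ℝ] ℝ) ∘ₗ e.symm.toLinearMap) C (by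
        intro y
        obtain ⟨a, rfl⟩ := e.surjective y
        have := h a k
        simpa [e] using this)
    obtain ⟨g, hg, hgn⟩ := exists_extension_norm_eq _ φ
    refine ⟨g, hgn.trans_le (LinearMap.mkContinuous_norm_le _ hC _), fun j => ?_⟩
    have h1 : x j = (e (Finsupp.single j 1) : X) := by simp [e]
    rw [h1, hg]
    simp only [φ, LinearMap.mkContinuous_apply, LinearMap.comp_apply]
    simp [Finsupp.single_apply, eq_comm]
  choose f hf using key
  exact ⟨f, fun k => (hf k).1, fun k => (hf k).2⟩

/-- James's distortion argument: the upper `c₀`-estimate together with `‖xₙ‖ ≥ ρ` gives the lower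
`c₀`-estimate, since reflecting a vector at its largest coordinate does not leave the ball. -/
theorem UpperC0.lower {x : ℕ → X} (hx : UpperC0 x) {ρ : ℝ} (hρ : ∀ n, ρ ≤ ‖x n‖)
    (a : ℕ →₀ ℝ) (k : ℕ) : (2 * ρ - 1) * |a k| ≤ ‖Finsupp.linearCombination ℝ x a‖ := by
  rcases le_or_gt (2 * ρ - 1) 0 with h0 | h0
  · exact (mul_nonpos_of_nonpos_of_nonneg h0 (abs_nonneg _)).trans (norm_nonneg _)
  by_cases hk : a k = 0
  · simp [hk]
  have hne : a.support.Nonempty := ⟨k, by simpa using hk⟩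
  obtain ⟨m, hm, hmax⟩ := a.support.exists_max_image (fun n => |a n|) hne
  have hkm := hmax k (by simpa using hk)
  have hrefl := hx a.support (fun n => if n = m then a n else - a n) |a m| (abs_nonneg _) (by
    intro n hn
    have := hmax n hn
    by_cases h : n = m <;> simp [h, this])
  have hsum : (2 * a m) • x m = Finsupp.linearCombination ℝ x a +
      ∑ n ∈ a.support, (if n = m then a n else - a n) • x n := by
    rw [Finsupp.linearCombination_apply, Finsupp.sum, ← Finset.sum_add_distrib,
      Finset.sum_eq_single m]
    · simp [two_mul, add_smul]
    · intro n _ hn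
      simp [hn]
    · exact fun h => absurd hm h
  have h1 : ‖(2 * a m) • x m‖ ≤ ‖Finsupp.linearCombination ℝ x a‖ + |a m| := by
    rw [hsum]; exact (norm_add_le _ _).trans (by linarith)
  rw [norm_smul, Real.norm_eq_abs, abs_mul, abs_two] at h1
  have h2 := mul_le_mul_of_nonneg_left (hρ m) (abs_nonneg (a m))
  have h3 := mul_le_mul_of_nonneg_left hkm h0.le
  nlinarith

/-- James's distortion theorem for `c₀`, on finitely supported vectors: an embedding of `c₀`
admits rescaled blocks satisfying the upper `c₀`-estimate with constant exactly `1`, and with norms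
close to `1`. -/
theorem exists_upperC0 (T : (ℕ →₀ ℝ) →ₗ[ℝ] X) (c C : ℝ) (hc : 0 < c)
    (hlow : ∀ a k, c * |a k| ≤ ‖T a‖) (hup : ∀ a M, (∀ k, |a k| ≤ M) → ‖T a‖ ≤ C * M)
    (η : ℝ) (hη : 0 < η) (hη1 : η < 1) :
    ∃ x : ℕ → X, UpperC0 x ∧ ∀ n, (1 - η) / (1 + η) ≤ ‖x n‖ := by
  let Bd : ℕ → ℝ → Prop := fun N t =>
    ∀ a : ℕ →₀ ℝ, (∀ i ∈ a.support, N ≤ i) → (∀ i, |a i| ≤ 1) → ‖T a‖ ≤ t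
  let L : Set ℝ := {t | ∃ N, Bd N t}
  have hLne : L.Nonempty := ⟨C, 0, fun a _ h => by simpa using hup a 1 h⟩
  have hLc : ∀ t ∈ L, c ≤ t := by
    rintro t ⟨N, hN⟩
    have h1 := hN (Finsupp.single N 1) (by
      intro i hi
      have := Finsupp.support_single_subset hi
      simp at this; omega) (by
      intro i
      rw [Finsupp.single_apply]; split_ifs <;> simp)
    have h2 := hlow (Finsupp.single N 1) N
    simp at h2
    linarith
  have hLb : BddBelow L := ⟨c, hLc⟩
  set l := sInf L with hl
  have hlc : c ≤ l := le_csInf hLne hLc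
  have hl0 : 0 < l := hc.trans_le hlc
  obtain ⟨t₁, ⟨N, hN⟩, ht₁⟩ := exists_lt_of_csInf_lt hLne (show sInf L < l * (1 + η) by nlinarith)
  have ht₁l : l ≤ t₁ := csInf_le hLb ⟨N, hN⟩
  have ht₁0 : 0 < t₁ := hl0.trans_le ht₁l
  have hbig : ∀ M, ∃ a : ℕ →₀ ℝ, (∀ i ∈ a.support, M ≤ i) ∧ (∀ i, |a i| ≤ 1) ∧
      l * (1 - η) < ‖T a‖ := by
    intro M
    by_contra! hcon
    have : l ≤ l * (1 - η) := csInf_le hLb ⟨M, fun a h1 h2 => hcon a h1 h2⟩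
    nlinarith
  obtain ⟨b, hb, hdisj⟩ := exists_seq_of_forall_finset_exists
    (fun a : ℕ →₀ ℝ => (∀ i ∈ a.support, N ≤ i) ∧ (∀ i, |a i| ≤ 1) ∧ l * (1 - η) < ‖T a‖)
    (fun a b => Disjoint a.support b.support) (by
      intro s _
      obtain ⟨M, hM⟩ := (s.biUnion Finsupp.support).exists_nat_subset_range
      obtain ⟨a, ha, ha'⟩ := hbig (max N M)
      refine ⟨a, ⟨fun i hi => (le_max_left _ _).trans (ha i hi), ha'⟩, fun y hy => ?_⟩
      rw [Finset.disjoint_left]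
      intro i hi hi'
      have h1 := hM (Finset.mem_biUnion.2 ⟨y, hy, hi⟩)
      have h2 := (le_max_right _ _).trans (ha i hi')
      simp at h1; omega)
  have hdisj' : ∀ m n, m ≠ n → Disjoint (b m).support (b n).support := fun m n hmn =>
    (lt_or_gt_of_ne hmn).elim (hdisj m n) fun h => (hdisj n m h).symm
  refine ⟨fun n => t₁⁻¹ • T (b n), ?_, fun n => ?_⟩
  · intro s a M hM ha
    have hnorm : ‖T (∑ n ∈ s, a n • b n)‖ ≤ t₁ * M := by
      rcases hM.eq_or_lt with h0 | hM0
      · have : ∑ n ∈ s, a n • b n = 0 := Finset.sum_eq_zero fun n hn => by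
          have := ha n hn
          rw [← h0, abs_nonpos_iff] at this
          simp [this]
        simp [this, ← h0]
      have h1 := hN (M⁻¹ • ∑ n ∈ s, a n • b n) (by
        intro i hi
        have h2 := Finsupp.support_smul hi
        have h3 := Finsupp.support_finsetSum h2
        obtain ⟨n, _, hn'⟩ := Finset.mem_biUnion.1 h3
        exact (hb n).1 i (Finsupp.support_smul hn')) (by
        intro i
        rw [Finsupp.smul_apply, Finsupp.finsetSum_apply, smul_eq_mul, abs_mul, abs_inv,
          abs_of_pos hM0, inv_mul_le_iff₀ hM0, mul_one]
        by_cases hi : ∃ n ∈ s, i ∈ (b n).support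
        · obtain ⟨n, hn, hni⟩ := hi
          rw [Finset.sum_eq_single n]
          · rw [Finsupp.smul_apply, smul_eq_mul, abs_mul]
            have := (hb n).2.1 i
            have := ha n hn
            nlinarith [abs_nonneg (a n), abs_nonneg (b n i)]
          · intro m _ hmn
            have := Finset.disjoint_left.1 (hdisj' n m hmn.symm) hni
            rw [Finsupp.notMem_support_iff] at this
            simp [this]
          · exact fun h => absurd hn h
        · push Not at hi
          rw [Finset.sum_eq_zero]
          · simpa using hM
          · intro n hn
            have := hi n hn
            rw [Finsupp.notMem_support_iff] at this
            simp [this])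
      rw [map_smul, norm_smul, norm_inv, Real.norm_of_nonneg hM, inv_mul_le_iff₀ hM0] at h1
      linarith
    have : ∑ n ∈ s, a n • t₁⁻¹ • T (b n) = t₁⁻¹ • T (∑ n ∈ s, a n • b n) := by
      rw [map_sum, Finset.smul_sum]
      exact Finset.sum_congr rfl fun n _ => by rw [map_smul, smul_comm]
    rw [this, norm_smul, norm_inv, Real.norm_of_nonneg ht₁0.le, inv_mul_le_iff₀ ht₁0]
    exact hnorm
  · rw [norm_smul, norm_inv, Real.norm_of_nonneg ht₁0.le, ← div_eq_inv_mul,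
      div_le_div_iff₀ (by linarith) ht₁0]
    have h1 := (hb n).2.2
    nlinarith

/-- The finitely supported sequences as a subspace of `c₀`. -/
noncomputable def toC0 : (ℕ →₀ ℝ) →ₗ[ℝ] C₀(ℕ, ℝ) where
  toFun a :=
    { toFun := a
      continuous_toFun := continuous_of_discreteTopology
      zero_at_infty' := by
        rw [cocompact_eq_cofinite]
        refine tendsto_nhds_of_eventually_eq ?_
        rw [eventually_cofinite]
        exact a.hasFiniteSupport }
  map_add' _ _ := rfl
  map_smul' _ _ := rfl

theorem toC0_norm_le {a : ℕ →₀ ℝ} {M : ℝ} (h : ∀ k, |a k| ≤ M) : ‖toC0 a‖ ≤ M := by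
  rw [← ZeroAtInftyContinuousMap.norm_toBCF_eq_norm,
    BoundedContinuousFunction.norm_le ((abs_nonneg _).trans (h 0))]
  exact h

theorem le_toC0_norm (a : ℕ →₀ ℝ) (k : ℕ) : |a k| ≤ ‖toC0 a‖ := by
  rw [← ZeroAtInftyContinuousMap.norm_toBCF_eq_norm]
  exact (toC0 a).toBCF.norm_coe_le_norm k

/-- A space containing `c₀` contains, for every `ε`, a `c₀`-sequence with upper constant `1` and
biorthogonal functionals of norm at most `1 + ε`. -/
theorem exists_c0_system
    (hc0 : ∃ (f : C₀(ℕ, ℝ) →L[ℝ] X) (c : ℝ), 0 < c ∧ ∀ u : C₀(ℕ, ℝ), c * ‖u‖ ≤ ‖f u‖)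
    {ε : ℝ} (hε : 0 < ε) (hε1 : ε < 1) :
    ∃ (x : ℕ → X) (f : ℕ → X →L[ℝ] ℝ), UpperC0 x ∧ (∀ k, ‖f k‖ ≤ 1 + ε) ∧
      ∀ k j, f k (x j) = if k = j then 1 else 0 := by
  obtain ⟨F, c, hc, hF⟩ := hc0
  obtain ⟨x, hx, hxn⟩ := exists_upperC0 (F.toLinearMap ∘ₗ toC0) c ‖F‖ hc
    (fun a k => (mul_le_mul_of_nonneg_left (le_toC0_norm a k) hc.le).trans (hF _))
    (fun a M h => (F.le_opNorm _).trans
      (mul_le_mul_of_nonneg_left (toC0_norm_le h) (norm_nonneg _)))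
    (ε / 7) (by positivity) (by linarith)
  have hlow := hx.lower hxn
  -- with `η = ε / 7`, James's lower constant `(1 - 3η) / (1 + η)` is at least `1 / (1 + ε)`
  have hconst : 1 ≤ (1 + ε) * (2 * ((1 - ε / 7) / (1 + ε / 7)) - 1) := by
    have : 2 * ((1 - ε / 7) / (1 + ε / 7)) - 1 = (1 - 3 * (ε / 7)) / (1 + ε / 7) := by
      field_simp; ring
    rw [this, ← mul_div_assoc, le_div_iff₀ (by positivity)]
    nlinarith
  obtain ⟨f, hf, hfx⟩ := exists_biorthogonal x (1 + ε) (by linarith) (fun a k => by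
    have h1 := mul_le_mul_of_nonneg_left (hlow a k) (show 0 ≤ 1 + ε by linarith)
    have h2 := mul_le_mul_of_nonneg_right hconst (abs_nonneg (a k))
    linarith)
  exact ⟨x, f, hx, hf, hfx⟩

/-! ### Block sequences of coefficients -/

/-- The `ℓ₁`-norm of a finitely supported sequence. -/
def l1Norm (a : ℕ →₀ ℝ) : ℝ := ∑ i ∈ a.support, |a i|

theorem l1Norm_add {a b : ℕ →₀ ℝ} (h : Disjoint a.support b.support) :
    l1Norm (a + b) = l1Norm a + l1Norm b :=
  Finsupp.sum_add_index_of_disjoint h fun _ r => |r|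

theorem l1Norm_smul (c : ℝ) (a : ℕ →₀ ℝ) : l1Norm (c • a) = |c| * l1Norm a := by
  rcases eq_or_ne c 0 with rfl | hc
  · simp [l1Norm]
  · simp [l1Norm, Finsupp.support_smul_eq hc, Finset.mul_sum, abs_mul]

theorem l1Norm_sum {ι : Type*} (b : ι → ℕ →₀ ℝ)
    (hb : Pairwise fun i j => Disjoint (b i).support (b j).support) (s : Finset ι) (c : ι → ℝ) :
    l1Norm (∑ i ∈ s, c i • b i) = ∑ i ∈ s, |c i| * l1Norm (b i) := by
  classical
  induction s using Finset.induction_on with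
  | empty => simp [l1Norm]
  | insert i s hi ih =>
    rw [Finset.sum_insert hi, Finset.sum_insert hi, l1Norm_add, ih, l1Norm_smul]
    refine Finset.disjoint_of_subset_left Finsupp.support_smul
      (Finset.disjoint_of_subset_right Finsupp.support_finsetSum ?_)
    rw [Finset.disjoint_biUnion_right]
    intro j hj
    exact Finset.disjoint_of_subset_right Finsupp.support_smul
      (hb (ne_of_mem_of_not_mem hj hi).symm)

/-- A sequence of `ℓ₁`-normalised, disjointly supported coefficient vectors. The supports are not
required to be successive: disjointness alone forces them to leave every finite set. -/
structure IsBlockSeq (b : ℕ → ℕ →₀ ℝ) : Prop where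
  norm_one : ∀ n, l1Norm (b n) = 1
  disjoint : Pairwise fun m n => Disjoint (b m).support (b n).support

/-- `d` is, up to finitely many terms, a sequence of linear combinations of ever later terms of
`b`. -/
def Refines (d b : ℕ → ℕ →₀ ℝ) : Prop :=
  ∀ N, ∀ᶠ n in atTop, d n ∈ Submodule.span ℝ (b '' Ici N)

/-- The functionals `∑ᵢ bₙ(i) fᵢ` are eventually bounded by `q` at each point of the ball. -/
def EvBdd (f : ℕ → X →L[ℝ] ℝ) (b : ℕ → ℕ →₀ ℝ) (q : ℝ) : Prop :=
  ∀ x, ‖x‖ ≤ 1 → ∀ᶠ n in atTop, |Finsupp.linearCombination ℝ f (b n) x| ≤ q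

theorem Refines.rfl {b : ℕ → ℕ →₀ ℝ} : Refines b b := fun N => by
  filter_upwards [eventually_ge_atTop N] with n hn
  exact Submodule.subset_span (mem_image_of_mem b hn)

theorem Refines.trans {a b c : ℕ → ℕ →₀ ℝ} (hab : Refines a b) (hbc : Refines b c) :
    Refines a c := fun N => by
  obtain ⟨M, hM⟩ := eventually_atTop.1 (hbc N)
  filter_upwards [hab M] with n hn
  refine (Submodule.span_le.2 ?_) hn
  rintro _ ⟨i, hi, rfl⟩
  exact hM i hi

/-- Passing to blocks does not increase eventual bounds: a normalised vector in the span of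
normalised disjoint blocks has normalised coefficients. -/
theorem EvBdd.mono {f : ℕ → X →L[ℝ] ℝ} {d b : ℕ → ℕ →₀ ℝ} {q : ℝ} (h : EvBdd f b q)
    (hdb : Refines d b) (hd : IsBlockSeq d) (hb : IsBlockSeq b) : EvBdd f d q := by
  intro x hx
  obtain ⟨N, hN⟩ := eventually_atTop.1 (h x hx)
  filter_upwards [hdb N] with n hn
  obtain ⟨l, hl, hln⟩ := (Finsupp.mem_span_image_iff_linearCombination ℝ).1 hn
  rw [Finsupp.linearCombination_apply, Finsupp.sum] at hln
  have h1 : ∑ i ∈ l.support, |l i| = 1 := by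
    rw [← hd.norm_one n, ← hln, l1Norm_sum b hb.disjoint]
    simp [hb.norm_one]
  rw [← hln, map_sum, sum_apply]
  calc |∑ i ∈ l.support, Finsupp.linearCombination ℝ f (l i • b i) x|
      ≤ ∑ i ∈ l.support, |l i| * q := by
        refine (Finset.abs_sum_le_sum_abs _ _).trans (Finset.sum_le_sum fun i hi => ?_)
        rw [map_smul, smul_apply, smul_eq_mul, abs_mul]
        exact mul_le_mul_of_nonneg_left (hN i (hl hi)) (abs_nonneg _)
    _ = q := by rw [← Finset.sum_mul, h1, one_mul]

theorem IsBlockSeq.eventually_disjoint {b : ℕ → ℕ →₀ ℝ} (hb : IsBlockSeq b) (F : Finset ℕ) :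
    ∀ᶠ n in atTop, Disjoint F (b n).support := by
  have h1 : ∀ i ∈ F, ∀ᶠ n in atTop, i ∉ (b n).support := by
    intro i _
    by_cases h : ∃ n, i ∈ (b n).support
    · obtain ⟨n, hn⟩ := h
      filter_upwards [eventually_gt_atTop n] with m hm
      exact Finset.disjoint_left.1 (hb.disjoint hm.ne) hn
    · push Not at h
      exact Eventually.of_forall h
  filter_upwards [(eventually_all_finset F).2 h1] with n hn
  exact Finset.disjoint_left.2 hn

/-! ### Stable block sequences -/

/-- Diagonal argument: a decreasing sequence of block sequences has a common refinement. -/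
theorem exists_diagonal (B : ℕ → ℕ → ℕ →₀ ℝ) (hB : ∀ k, IsBlockSeq (B k))
    (hdec : ∀ k, Refines (B (k + 1)) (B k)) :
    ∃ d, IsBlockSeq d ∧ ∀ k, Refines d (B k) := by
  have href : ∀ k j, j ≤ k → Refines (B k) (B j) := by
    intro k j hjk
    induction k, hjk using Nat.le_induction with
    | base => exact Refines.rfl
    | succ k _ ih => exact (hdec k).trans ih
  -- a pair `p` stands for the block `B p.1 p.2`
  obtain ⟨p, hp, hpr⟩ := exists_seq_of_forall_finset_exists
    (fun p : ℕ × ℕ => ∀ j ≤ p.1, B p.1 p.2 ∈ Submodule.span ℝ (B j '' Ici p.1))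
    (fun p p' => p.1 < p'.1 ∧ Disjoint (B p.1 p.2).support (B p'.1 p'.2).support) (by
      intro s _
      obtain ⟨k, hk⟩ : ∃ k, ∀ p ∈ s, p.1 < k := by
        refine ⟨s.sup Prod.fst + 1, fun p hp => ?_⟩
        have := Finset.le_sup (f := Prod.fst) hp
        omega
      have h1 : ∀ᶠ n in atTop, ∀ j ∈ Finset.range (k + 1),
          B k n ∈ Submodule.span ℝ (B j '' Ici k) :=
        (eventually_all_finset _).2 fun j hj => href k j (by simp at hj; omega) k
      obtain ⟨n, hn, hn'⟩ := (h1.and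
        ((hB k).eventually_disjoint (s.biUnion fun p => (B p.1 p.2).support))).exists
      refine ⟨(k, n), fun j hj => hn j (by simp at hj ⊢; omega), fun p hp => ⟨hk p hp, ?_⟩⟩
      exact (Finset.disjoint_biUnion_left _ _ _).1 hn' p hp)
  have hmono : StrictMono fun n => (p n).1 := fun m n hmn => (hpr m n hmn).1
  refine ⟨fun n => B (p n).1 (p n).2, ⟨fun n => (hB _).norm_one _, fun m n hmn => ?_⟩, ?_⟩
  · exact (lt_or_gt_of_ne hmn).elim (fun h => (hpr m n h).2) fun h => (hpr n m h).2.symm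
  · intro k N
    filter_upwards [eventually_ge_atTop (max k N)] with n hn
    have h1 : n ≤ (p n).1 := hmono.le_apply
    refine Submodule.span_mono (image_mono ?_) (hp n k (by omega))
    exact Ici_subset_Ici.2 (by omega)

/-- There is a block sequence whose eventual bounds (at rational levels) cannot be improved by
passing to further blocks. -/
theorem exists_stable (f : ℕ → X →L[ℝ] ℝ) :
    ∃ d, IsBlockSeq d ∧ ∀ z, IsBlockSeq z → Refines z d → ∀ q : ℚ, EvBdd f z q → EvBdd f d q := by
  obtain ⟨e, he⟩ := exists_surjective_nat ℚ
  have step : ∀ (k : ℕ) (b : {b // IsBlockSeq b}), ∃ b' : {b // IsBlockSeq b},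
      Refines b'.1 b.1 ∧
        ∀ z, IsBlockSeq z → Refines z b'.1 → EvBdd f z (e k) → EvBdd f b'.1 (e k) := by
    intro k b
    by_cases h : ∃ z, IsBlockSeq z ∧ Refines z b.1 ∧ EvBdd f z (e k)
    · obtain ⟨z, hz, hzb, hzq⟩ := h
      exact ⟨⟨z, hz⟩, hzb, fun _ _ _ _ => hzq⟩
    · exact ⟨b, Refines.rfl, fun z hz hzb hzq => absurd ⟨z, hz, hzb, hzq⟩ h⟩
  choose next hnext hstab using step
  have h0 : IsBlockSeq fun n => Finsupp.single n 1 := by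
    refine ⟨fun n => ?_, fun m n hmn => ?_⟩
    · simp [l1Norm]
    · simpa using hmn
  let B : ℕ → {b // IsBlockSeq b} := fun k => Nat.rec ⟨_, h0⟩ next k
  obtain ⟨d, hd, hdB⟩ := exists_diagonal (fun k => (B k).1) (fun k => (B k).2)
    fun k => hnext k (B k)
  refine ⟨d, hd, fun z hz hzd q hq => ?_⟩
  obtain ⟨k, rfl⟩ := he q
  exact (hstab k (B k) z hz (hzd.trans (hdB (k + 1))) hq).mono (hdB (k + 1)) hd (B (k + 1)).2

/-! ### Rademacher trees and copies of `ℓ₁` -/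

/-- Countably many infinite sets of naturals have an injective system of representatives. -/
theorem exists_injective_mem {α : Type*} [Countable α] (A : α → Set ℕ)
    (hA : ∀ a, ∃ᶠ n in atTop, n ∈ A a) : ∃ p : α → ℕ, Function.Injective p ∧ ∀ a, p a ∈ A a := by
  obtain ⟨e, he⟩ := exists_injective_nat α
  obtain ⟨φ, hφ, hφA⟩ := extraction_forall_of_frequently
    (P := fun n k => ∀ a, e a = n → k ∈ A a) (by
      intro n
      by_cases h : ∃ a, e a = n
      · obtain ⟨a, rfl⟩ := h
        exact (hA a).mono fun k hk a' ha' => he ha' ▸ hk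
      · exact Frequently.of_forall fun k a ha => absurd ⟨a, ha⟩ h)
  exact ⟨φ ∘ e, hφ.injective.comp he, fun a => hφA _ a rfl⟩

/-- One step of the Rademacher tree. The averages, with signs, of representatives of two copies of
each `A i` form a refinement `z` of `d`. By stability some `x` in the ball makes `z` nearly as large
as `δ` infinitely often, while each representative is at most about `δ` at `x`; hence every
representative is large at `x`, with its prescribed sign. -/
theorem tree_step {f : ℕ → X →L[ℝ] ℝ} {d : ℕ → ℕ →₀ ℝ} (hd : IsBlockSeq d) {δ : ℝ} (hδ : 0 < δ)
    (hup : ∀ η > 0, ∃ q < δ + η, EvBdd f d q)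
    (hlow : ∀ η > 0, ∃ q > δ - η, ∀ z, IsBlockSeq z → Refines z d → ¬ EvBdd f z q)
    {ι : Type*} [Finite ι] [Nonempty ι] (A : ι → Set ℕ) (hA : ∀ i, ∃ᶠ n in atTop, n ∈ A i) :
    ∃ x : X, ‖x‖ ≤ 1 ∧ ∀ i, ∀ σ : ℝ, (σ = 1 ∨ σ = -1) →
      ∃ᶠ n in atTop, n ∈ A i ∧ δ / 2 ≤ σ * Finsupp.linearCombination ℝ f (d n) x := by
  classical
  have := Fintype.ofFinite ι
  obtain ⟨p, hp, hpA⟩ := exists_injective_mem (fun a : ℕ × (ι × Bool) => A a.2.1)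
    fun a => hA a.2.1
  let s : ι × Bool → ℝ := fun τ => if τ.2 then 1 else -1
  have hs : ∀ τ, |s τ| = 1 := fun τ => by
    by_cases h : τ.2 <;> simp [s, h]
  set n : ℝ := ((Fintype.card (ι × Bool) : ℕ) : ℝ) with hn
  have hn1 : 1 ≤ n := by
    rw [hn]; exact_mod_cast Fintype.card_pos
  have hn0 : 0 < n := by linarith
  let z : ℕ → ℕ →₀ ℝ := fun m => ∑ τ, (s τ * n⁻¹) • d (p (m, τ))
  have hinj : ∀ m, Function.Injective fun τ => p (m, τ) := fun m τ τ' h => by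
    simpa using hp h
  have hz : IsBlockSeq z := by
    constructor
    · intro m
      rw [l1Norm_sum (fun τ => d (p (m, τ))) fun τ τ' h => hd.disjoint ((hinj m).ne h)]
      simp only [hd.norm_one, abs_mul, hs, abs_inv, abs_of_pos hn0]
      simp [-Fintype.card_prod, ← hn, hn0.ne']
    · intro m m' hm
      refine Finset.disjoint_of_subset_left Finsupp.support_finsetSum
        (Finset.disjoint_of_subset_right Finsupp.support_finsetSum ?_)
      rw [Finset.disjoint_biUnion_left]
      intro τ _
      rw [Finset.disjoint_biUnion_right]
      intro τ' _
      refine Finset.disjoint_of_subset_left Finsupp.support_smul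
        (Finset.disjoint_of_subset_right Finsupp.support_smul (hd.disjoint (hp.ne ?_)))
      simp [hm]
  have htend : ∀ τ, Tendsto (fun m => p (m, τ)) atTop atTop := fun τ =>
    Function.Injective.nat_tendsto_atTop fun m m' h => by simpa using hp h
  have hzd : Refines z d := by
    intro N
    filter_upwards [eventually_all.2 fun τ => (htend τ).eventually (eventually_ge_atTop N)]
      with m hm
    exact Submodule.sum_mem _ fun τ _ => Submodule.smul_mem _ _
      (Submodule.subset_span (mem_image_of_mem d (hm τ)))
  obtain ⟨q₁, hq₁, hb₁⟩ := hup (δ / (4 * n)) (by positivity)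
  obtain ⟨q₂, hq₂, hb₂⟩ := hlow (δ / (4 * n)) (by positivity)
  obtain ⟨x, hx, hfreq⟩ : ∃ x : X, ‖x‖ ≤ 1 ∧
      ∃ᶠ m in atTop, q₂ < Finsupp.linearCombination ℝ f (z m) x := by
    have h1 := hb₂ z hz hzd
    unfold EvBdd at h1
    push Not at h1
    obtain ⟨x, hx, hfr⟩ := h1
    simp only [lt_abs] at hfr
    rcases frequently_or_distrib.1 hfr with h | h
    · exact ⟨x, hx, h⟩
    · exact ⟨-x, by simpa using hx, by simpa using h⟩
  refine ⟨x, hx, fun i σ hσ => ?_⟩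
  obtain ⟨τ, hτi, hτσ⟩ : ∃ τ : ι × Bool, τ.1 = i ∧ s τ = σ := by
    rcases hσ with rfl | rfl
    · exact ⟨(i, true), rfl, by simp [s]⟩
    · exact ⟨(i, false), rfl, by simp [s]⟩
  refine (htend τ).frequently ?_
  have hev := eventually_all.2 fun τ' => (htend τ').eventually (hb₁ x hx)
  refine (hfreq.and_eventually hev).mono ?_
  rintro m ⟨hm, hm'⟩
  refine ⟨hτi ▸ hpA (m, τ), ?_⟩
  rw [← hτσ]
  set v : ι × Bool → ℝ := fun τ' => s τ' * Finsupp.linearCombination ℝ f (d (p (m, τ'))) x with hv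
  have hvq : ∀ τ', v τ' ≤ q₁ := fun τ' => by
    refine (le_abs_self _).trans ?_
    rw [hv]
    simp only [abs_mul, hs, one_mul]
    exact hm' τ'
  have hsum : n * q₂ < ∑ τ', v τ' := by
    have h1 : Finsupp.linearCombination ℝ f (z m) x = n⁻¹ * ∑ τ', v τ' := by
      simp only [z, map_sum, sum_apply, map_smul,
        smul_apply, smul_eq_mul, hv, Finset.mul_sum]
      exact Finset.sum_congr rfl fun τ' _ => by ring
    rw [h1, ← div_eq_inv_mul, lt_div_iff₀ hn0] at hm
    linarith
  have hrest : ∑ τ' ∈ Finset.univ.erase τ, v τ' ≤ (n - 1) * q₁ := by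
    refine (Finset.sum_le_card_nsmul _ _ q₁ fun τ' _ => hvq τ').trans_eq ?_
    rw [Finset.card_erase_of_mem (Finset.mem_univ _), nsmul_eq_mul, Finset.card_univ,
      Nat.cast_sub Fintype.card_pos, Nat.cast_one]
  rw [← Finset.add_sum_erase _ _ (Finset.mem_univ τ)] at hsum
  change δ / 2 ≤ v τ
  have h2 : n * (δ / (4 * n)) = δ / 4 := by field_simp
  have h3 : n * (δ - δ / (4 * n)) ≤ n * q₂ := mul_le_mul_of_nonneg_left hq₂.le hn0.le
  have h4 : (n - 1) * q₁ ≤ (n - 1) * (δ + δ / (4 * n)) :=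
    mul_le_mul_of_nonneg_left hq₁.le (by linarith)
  have h5 : 0 ≤ δ / (4 * n) := by positivity
  have h6 : (n - 1) * (δ + δ / (4 * n)) = n * δ - δ + δ / 4 - δ / (4 * n) := by
    rw [← h2]; ring
  rw [mul_sub, h2] at h3
  linarith

/-- Iterating `tree_step` over all sign patterns produces a Rademacher-like sequence in the ball. -/
theorem exists_rademacher {f : ℕ → X →L[ℝ] ℝ} {d : ℕ → ℕ →₀ ℝ} (hd : IsBlockSeq d)
    {δ : ℝ} (hδ : 0 < δ) (hup : ∀ η > 0, ∃ q < δ + η, EvBdd f d q)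
    (hlow : ∀ η > 0, ∃ q > δ - η, ∀ z, IsBlockSeq z → Refines z d → ¬ EvBdd f z q) :
    ∃ x : ℕ → X, (∀ k, ‖x k‖ ≤ 1) ∧ ∀ (σ : ℕ → ℝ), (∀ j, σ j = 1 ∨ σ j = -1) → ∀ k,
      ∃ n, ∀ j < k, δ / 2 ≤ σ j * Finsupp.linearCombination ℝ f (d n) (x j) := by
  classical
  -- the state is the finite collection of index sets realising the sign patterns so far
  let S := {𝒜 : Finset (Set ℕ) // 𝒜.Nonempty ∧ ∀ A ∈ 𝒜, ∃ᶠ n in atTop, n ∈ A}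
  have step : ∀ a : S, ∃ x : X, ∃ a' : S, ‖x‖ ≤ 1 ∧ ∀ A ∈ a.1, ∀ σ : ℝ, (σ = 1 ∨ σ = -1) →
      {n | n ∈ A ∧ δ / 2 ≤ σ * Finsupp.linearCombination ℝ f (d n) x} ∈ a'.1 := by
    rintro ⟨𝒜, hne, h𝒜⟩
    have : Nonempty 𝒜 := hne.to_subtype
    obtain ⟨x, hx, hxA⟩ := tree_step hd hδ hup hlow (fun A : 𝒜 => A.1) fun A => h𝒜 A.1 A.2
    let r : Set ℕ × ℝ → Set ℕ := fun w =>
      {n | n ∈ w.1 ∧ δ / 2 ≤ w.2 * Finsupp.linearCombination ℝ f (d n) x}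
    refine ⟨x, ⟨(𝒜 ×ˢ ({1, -1} : Finset ℝ)).image r, ?_, ?_⟩, hx, ?_⟩
    · exact (hne.product ⟨1, by simp⟩).image r
    · intro A hA
      obtain ⟨⟨A', σ⟩, hw, rfl⟩ := Finset.mem_image.1 hA
      rw [Finset.mem_product] at hw
      exact hxA ⟨A', hw.1⟩ σ (by simpa using hw.2)
    · intro A hA σ hσ
      exact Finset.mem_image.2 ⟨(A, σ), by simpa using ⟨hA, hσ⟩, rfl⟩
  choose x next hx hnext using step
  let st : ℕ → S := fun k => Nat.rec
    ⟨{Set.univ}, by simp, fun A hA =>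
      Finset.mem_singleton.1 hA ▸ Frequently.of_forall mem_univ⟩ (fun _ a => next a) k
  refine ⟨fun k => x (st k), fun k => hx _, fun σ hσ k => ?_⟩
  have hmem : {n | ∀ j < k, δ / 2 ≤ σ j * Finsupp.linearCombination ℝ f (d n) (x (st j))}
      ∈ (st k).1 := by
    induction k with
    | zero => simp [st]
    | succ k ih =>
      have h1 := hnext (st k) _ ih (σ k) (hσ k)
      convert h1 using 1
      ext n
      simp only [mem_ofPred_eq, Nat.lt_succ_iff_lt_or_eq]
      exact ⟨fun h => ⟨fun j hj => h j (Or.inl hj), h k (Or.inr rfl)⟩, by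
        rintro ⟨h, h'⟩ j (hj | rfl)
        exacts [h j hj, h']⟩
  exact ((st k).2.2 _ hmem).exists

theorem lp_one_hasSum (u : lp (fun _ : ℕ => ℝ) 1) : HasSum (fun i => |u i|) ‖u‖ := by
  have := lp.hasSum_norm (p := 1) (by simp) u
  simpa using this

/-- A bounded Rademacher-like sequence spans a copy of `ℓ₁`: the functional with the signs of the
coefficients bounds the norm from below. -/
theorem exists_l1_embedding [CompleteSpace X] {g : ℕ → X →L[ℝ] ℝ} {C δ : ℝ} (hC : 0 < C)
    (hδ : 0 < δ) (hg : ∀ n, ‖g n‖ ≤ C) {x : ℕ → X} (hx : ∀ k, ‖x k‖ ≤ 1)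
    (hrad : ∀ (σ : ℕ → ℝ), (∀ j, σ j = 1 ∨ σ j = -1) → ∀ k,
      ∃ n, ∀ j < k, δ ≤ σ j * g n (x j)) :
    ∃ (f : (lp (fun _ : ℕ => ℝ) 1) →L[ℝ] X) (c : ℝ), 0 < c ∧
      ∀ u : lp (fun _ : ℕ => ℝ) 1, c * ‖u‖ ≤ ‖f u‖ := by
  have hle : ∀ (u : lp (fun _ : ℕ => ℝ) 1) i, ‖u i • x i‖ ≤ |u i| := fun u i => by
    rw [norm_smul, Real.norm_eq_abs]
    exact mul_le_of_le_one_right (abs_nonneg _) (hx i)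
  have hsum : ∀ u : lp (fun _ : ℕ => ℝ) 1, Summable fun i => u i • x i := fun u =>
    Summable.of_norm_bounded (lp_one_hasSum u).summable (hle u)
  let F : (lp (fun _ : ℕ => ℝ) 1) →L[ℝ] X := LinearMap.mkContinuous
    { toFun := fun u => ∑' i, u i • x i
      map_add' := fun u v => by
        rw [← (hsum u).tsum_add (hsum v)]
        simp [add_smul]
      map_smul' := fun r u => by
        rw [RingHom.id_apply, ← (hsum u).tsum_const_smul]
        simp [mul_smul] } 1 (fun u => by
        rw [one_mul]
        exact tsum_of_norm_bounded (lp_one_hasSum u) (hle u))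
  refine ⟨F, δ / C, by positivity, fun u => ?_⟩
  refine le_of_tendsto_of_tendsto' ((lp_one_hasSum u).tendsto_sum_nat.const_mul (δ / C))
    (hsum u).hasSum.tendsto_sum_nat.norm fun k => ?_
  obtain ⟨n, hn⟩ := hrad (fun j => if 0 ≤ u j then 1 else -1) (fun j => by
    by_cases h : 0 ≤ u j <;> simp [h]) k
  have h1 : δ * ∑ i ∈ Finset.range k, |u i| ≤ g n (∑ i ∈ Finset.range k, u i • x i) := by
    rw [map_sum, Finset.mul_sum]
    refine Finset.sum_le_sum fun j hj => ?_
    have h2 := hn j (Finset.mem_range.1 hj)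
    rw [map_smul, smul_eq_mul]
    by_cases h : 0 ≤ u j
    · rw [if_pos h] at h2
      rw [abs_of_nonneg h]
      nlinarith
    · rw [if_neg h] at h2
      push Not at h
      rw [abs_of_neg h]
      nlinarith
  have h3 := (le_abs_self _).trans ((g n).le_of_opNorm_le (hg n) (∑ i ∈ Finset.range k, u i • x i))
  rw [div_mul_eq_mul_div, div_le_iff₀ hC]
  linarith

/-! ### Weak*-null blocks in duals of spaces without `ℓ₁` -/

theorem norm_linearCombination_le {f : ℕ → X →L[ℝ] ℝ} {C : ℝ} (hf : ∀ k, ‖f k‖ ≤ C)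
    (a : ℕ →₀ ℝ) : ‖Finsupp.linearCombination ℝ f a‖ ≤ C * l1Norm a := by
  rw [Finsupp.linearCombination_apply, Finsupp.sum, l1Norm, Finset.mul_sum]
  refine (norm_sum_le _ _).trans (Finset.sum_le_sum fun i _ => ?_)
  rw [norm_smul, Real.norm_eq_abs, mul_comm]
  exact mul_le_mul_of_nonneg_right (hf i) (abs_nonneg _)

/-- The Hagler–Johnson theorem: if `X` contains no copy of `ℓ₁`, every bounded sequence in the dual
has a weak*-null `ℓ₁`-normalised block sequence. -/
theorem exists_weakStar_null [CompleteSpace X]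
    (hnol1 : ¬ ∃ (f : (lp (fun _ : ℕ => ℝ) 1) →L[ℝ] X) (c : ℝ), 0 < c ∧
      ∀ u : lp (fun _ : ℕ => ℝ) 1, c * ‖u‖ ≤ ‖f u‖)
    {f : ℕ → X →L[ℝ] ℝ} {C : ℝ} (hC : 0 < C) (hf : ∀ k, ‖f k‖ ≤ C) :
    ∃ d, IsBlockSeq d ∧
      ∀ y, Tendsto (fun n => Finsupp.linearCombination ℝ f (d n) y) atTop (𝓝 0) := by
  obtain ⟨d, hd, hstab⟩ := exists_stable f
  refine ⟨d, hd, ?_⟩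
  have hgC : ∀ n, ‖Finsupp.linearCombination ℝ f (d n)‖ ≤ C := fun n => by
    simpa [hd.norm_one] using norm_linearCombination_le hf (d n)
  let Q : Set ℝ := {q | ∃ r : ℚ, (r : ℝ) = q ∧ EvBdd f d r}
  have hQ0 : ∀ q ∈ Q, 0 ≤ q := by
    rintro _ ⟨r, rfl, hr⟩
    obtain ⟨n, hn⟩ := (hr 0 (by simp)).exists
    exact (abs_nonneg _).trans hn
  have hQne : Q.Nonempty := by
    obtain ⟨r, hr⟩ := exists_rat_gt C
    refine ⟨r, r, rfl, fun x hx => Eventually.of_forall fun n => ?_⟩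
    have h1 := (Finsupp.linearCombination ℝ f (d n)).le_of_opNorm_le (hgC n) x
    rw [Real.norm_eq_abs] at h1
    nlinarith
  have hQb : BddBelow Q := ⟨0, hQ0⟩
  have hup : ∀ η > 0, ∃ q < sInf Q + η, EvBdd f d q := by
    intro η hη
    obtain ⟨_, ⟨r, rfl, hr⟩, hlt⟩ := exists_lt_of_csInf_lt hQne (lt_add_of_pos_right (sInf Q) hη)
    exact ⟨r, hlt, hr⟩
  rcases (le_csInf hQne hQ0).eq_or_lt with h0 | hpos
  · -- every positive number is an eventual bound: convergence to `0` on the ball, hence everywhere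
    rw [← h0] at hup
    have hball : ∀ y : X, ‖y‖ ≤ 1 →
        Tendsto (fun n => Finsupp.linearCombination ℝ f (d n) y) atTop (𝓝 0) := by
      intro y hy
      rw [Metric.tendsto_nhds]
      intro η hη
      obtain ⟨q, hq, hb⟩ := hup η hη
      filter_upwards [hb y hy] with n hn
      rw [Real.dist_eq, sub_zero]
      linarith
    intro y
    have h1 := (hball ((‖y‖ + 1)⁻¹ • y) (by
      rw [norm_smul, norm_inv, Real.norm_of_nonneg (by positivity), inv_mul_le_iff₀ (by positivity)]
      linarith)).const_mul (‖y‖ + 1)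
    have hy0 : ‖y‖ + 1 ≠ 0 := by positivity
    simpa [hy0] using h1
  · refine absurd ?_ hnol1
    have hlow : ∀ η > 0, ∃ q > sInf Q - η, ∀ z, IsBlockSeq z → Refines z d → ¬ EvBdd f z q := by
      intro η hη
      obtain ⟨r, hr1, hr2⟩ := exists_rat_btwn (sub_lt_self (sInf Q) hη)
      refine ⟨r, hr1, fun z hz hzd hb => ?_⟩
      exact hr2.not_ge (csInf_le hQb ⟨r, rfl, hstab z hz hzd r hb⟩)
    obtain ⟨x, hx, hrad⟩ := exists_rademacher hd hpos hup hlow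
    exact exists_l1_embedding hC (half_pos hpos) hgC hx hrad

/-! ### Blocks of a biorthogonal `c₀`-system -/

section Blocks

variable {x : ℕ → X} {d : ℕ → ℕ →₀ ℝ}

/-- The vectors `∑ᵢ sign(dₙ(i)) xᵢ`, dual to the functionals `∑ᵢ dₙ(i) fᵢ`. -/
noncomputable def signBlock (x : ℕ → X) (d : ℕ → ℕ →₀ ℝ) (n : ℕ) : X :=
  ∑ i ∈ (d n).support, Real.sign (d n i) • x i

theorem UpperC0.signBlock (hx : UpperC0 x) (hd : IsBlockSeq d) : UpperC0 (signBlock x d) := by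
  intro s a M hM ha
  have hcoef : ∀ n ∈ s, ∀ i ∈ (d n).support,
      ∑ m ∈ s, a m * Real.sign (d m i) = a n * Real.sign (d n i) := by
    intro n hn i hi
    refine Finset.sum_eq_single_of_mem n hn fun m _ hmn => ?_
    have := Finset.disjoint_left.1 (hd.disjoint hmn.symm) hi
    rw [Finsupp.notMem_support_iff] at this
    simp [this]
  have h1 : ∑ n ∈ s, a n • C0Retract.signBlock x d n =
      ∑ i ∈ s.biUnion fun n => (d n).support, (∑ m ∈ s, a m * Real.sign (d m i)) • x i := by
    rw [Finset.sum_biUnion fun m _ n _ hmn => hd.disjoint hmn]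
    refine Finset.sum_congr rfl fun n hn => ?_
    rw [C0Retract.signBlock, Finset.smul_sum]
    refine Finset.sum_congr rfl fun i hi => ?_
    rw [hcoef n hn i hi, mul_smul]
  rw [h1]
  refine hx _ _ M hM fun i hi => ?_
  obtain ⟨n, hn, hni⟩ := Finset.mem_biUnion.1 hi
  rw [hcoef n hn i hni, abs_mul]
  refine (mul_le_of_le_one_right (abs_nonneg _) ?_).trans (ha n hn)
  rcases Real.sign_apply_eq (d n i) with h | h | h <;> simp [h]

theorem apply_signBlock {f : ℕ → X →L[ℝ] ℝ} (hd : IsBlockSeq d)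
    (hfx : ∀ k j, f k (x j) = if k = j then 1 else 0) (k j : ℕ) :
    Finsupp.linearCombination ℝ f (d k) (signBlock x d j) = if k = j then 1 else 0 := by
  have hcoord : ∀ (a : ℕ →₀ ℝ) i, Finsupp.linearCombination ℝ f a (x i) = a i := by
    intro a i
    rw [Finsupp.linearCombination_apply, Finsupp.sum, sum_apply]
    simp [hfx, eq_comm]
  simp only [signBlock, map_sum, map_smul, hcoord, smul_eq_mul]
  split_ifs with h
  · subst h
    rw [← hd.norm_one k, l1Norm]
    exact Finset.sum_congr rfl fun i _ => by
      rcases lt_trichotomy (d k i) 0 with h | h | h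
      · rw [Real.sign_of_neg h, abs_of_neg h]; ring
      · simp [h]
      · rw [Real.sign_of_pos h, abs_of_pos h]; ring
  · refine Finset.sum_eq_zero fun i hi => ?_
    have := Finset.disjoint_left.1 (hd.disjoint (Ne.symm h)) hi
    rw [Finsupp.notMem_support_iff] at this
    simp [this]

end Blocks

/-! ### Projections and retractions from weak*-null coordinates -/

theorem UpperC0.summable [CompleteSpace X] {x : ℕ → X} (hx : UpperC0 x) {t : ℕ → ℝ}
    (ht : Tendsto t atTop (𝓝 0)) : Summable fun n => t n • x n := by
  rw [summable_iff_vanishing_norm]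
  intro e he
  have h1 : ∀ᶠ n in atTop, |t n| < e / 2 := by
    have := ht.abs
    rw [abs_zero] at this
    exact this.eventually (gt_mem_nhds (by positivity))
  obtain ⟨N, hN⟩ := eventually_atTop.1 h1
  refine ⟨Finset.range N, fun s hs => ?_⟩
  refine (hx s t (e / 2) (by positivity) fun n hn => (hN n ?_).le).trans_lt (by linarith)
  have := Finset.disjoint_left.1 hs hn
  simpa using this

theorem UpperC0.norm_tsum_le {x : ℕ → X} (hx : UpperC0 x) {t : ℕ → ℝ} {M : ℝ}
    (h : ∀ n, |t n| ≤ M) : ‖∑' n, t n • x n‖ ≤ M := by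
  have hM : 0 ≤ M := (abs_nonneg _).trans (h 0)
  by_cases hs : Summable fun n => t n • x n
  · exact le_of_tendsto hs.hasSum.norm
      (Eventually.of_forall fun s => hx s t M hM fun n _ => h n)
  · rw [tsum_eq_zero_of_not_summable hs, norm_zero]
    exact hM

/-- Truncation of a real number to `[0,1]`. -/
def clamp (r : ℝ) : ℝ := max 0 (min 1 r)

theorem clamp_nonneg (r : ℝ) : 0 ≤ clamp r := le_max_left _ _

theorem clamp_le_one (r : ℝ) : clamp r ≤ 1 := max_le zero_le_one (min_le_left _ _)

theorem clamp_eq {r : ℝ} (h0 : 0 ≤ r) (h1 : r ≤ 1) : clamp r = r := by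
  rw [clamp, min_eq_right h1, max_eq_right h0]

theorem abs_clamp_sub_le (r s : ℝ) : |clamp r - clamp s| ≤ |r - s| := by
  rw [clamp, clamp, max_comm 0, max_comm 0, min_comm 1, min_comm 1]
  refine (abs_max_sub_max_le_abs _ _ _).trans ?_
  simpa using abs_min_sub_min_le_max r 1 s 1

theorem tendsto_clamp {t : ℕ → ℝ} (ht : Tendsto t atTop (𝓝 0)) :
    Tendsto (fun n => clamp (t n)) atTop (𝓝 0) := by
  have h : Continuous clamp := by unfold clamp; fun_prop
  have := (h.tendsto 0).comp ht
  rwa [clamp_eq le_rfl zero_le_one] at this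

section System

variable {x : ℕ → X} {f : ℕ → X →L[ℝ] ℝ} {C : ℝ}

theorem UpperC0.equivalent (hx : UpperC0 x) (hC : 0 < C) (hf : ∀ k, ‖f k‖ ≤ C)
    (hfx : ∀ k j, f k (x j) = if k = j then 1 else 0)
    (s : Finset ℕ) (hs : s.Nonempty) (a : ℕ → ℝ) :
    C⁻¹ * s.sup' hs (fun n => |a n|) ≤ ‖∑ n ∈ s, a n • x n‖ ∧
      ‖∑ n ∈ s, a n • x n‖ ≤ 1 * s.sup' hs (fun n => |a n|) := by
  constructor
  · rw [inv_mul_le_iff₀ hC]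
    refine Finset.sup'_le _ _ fun k hk => ?_
    have h1 : f k (∑ n ∈ s, a n • x n) = a k := by
      simp [map_sum, hfx, hk]
    rw [← h1, ← Real.norm_eq_abs]
    exact (f k).le_of_opNorm_le (hf k) _
  · rw [one_mul]
    refine hx s a _ ?_ fun n hn => Finset.le_sup' (fun n => |a n|) hn
    obtain ⟨k, hk⟩ := hs
    exact (abs_nonneg (a k)).trans (Finset.le_sup' (fun n => |a n|) hk)

theorem apply_tsum (hfx : ∀ k j, f k (x j) = if k = j then 1 else 0) {t : ℕ → ℝ}
    (ht : Summable fun n => t n • x n) (k : ℕ) : f k (∑' n, t n • x n) = t k := by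
  rw [(f k).map_tsum ht, tsum_eq_single k]
  · simp [hfx]
  · intro j hj
    simp [hfx, hj.symm]

/-- A `c₀`-system whose functionals are weak*-null spans a complemented subspace. -/
theorem UpperC0.exists_projection [CompleteSpace X] (hx : UpperC0 x) (hf : ∀ k, ‖f k‖ ≤ C)
    (hfx : ∀ k j, f k (x j) = if k = j then 1 else 0)
    (hnull : ∀ y, Tendsto (fun k => f k y) atTop (𝓝 0)) :
    ∃ P : X →L[ℝ] X, (∀ y : X, P (P y) = P y) ∧
      Set.range P = ((Submodule.span ℝ (Set.range x)).topologicalClosure : Set X) := by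
  have hsum : ∀ y, Summable fun n => f n y • x n := fun y => hx.summable (hnull y)
  let P : X →L[ℝ] X := LinearMap.mkContinuous
    { toFun := fun y => ∑' n, f n y • x n
      map_add' := fun y z => by
        rw [← (hsum y).tsum_add (hsum z)]
        simp [add_smul]
      map_smul' := fun r y => by
        rw [RingHom.id_apply, ← (hsum y).tsum_const_smul]
        simp [mul_smul] } C
    (fun y => hx.norm_tsum_le fun n => (f n).le_of_opNorm_le (hf n) y)
  have hP : ∀ y, P y = ∑' n, f n y • x n := fun y => rfl
  have hPP : ∀ y, P (P y) = P y := fun y => by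
    rw [hP (P y), hP y]
    exact tsum_congr fun n => by rw [apply_tsum hfx (hsum y)]
  refine ⟨P, hPP, Subset.antisymm ?_ ?_⟩
  · rintro _ ⟨y, rfl⟩
    refine mem_closure_of_tendsto (hsum y).hasSum (Eventually.of_forall fun s => ?_)
    exact Submodule.sum_mem _ fun n _ =>
      Submodule.smul_mem _ _ (Submodule.subset_span (mem_range_self n))
  · have hcl : IsClosed {y | P y = y} := isClosed_eq P.continuous continuous_id
    have hspan : (Submodule.span ℝ (Set.range x) : Set X) ⊆ {y | P y = y} := by
      intro y hy
      have : Submodule.span ℝ (Set.range x) ≤ LinearMap.eqLocus P.toLinearMap LinearMap.id := by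
        rw [Submodule.span_le]
        rintro _ ⟨j, rfl⟩
        change P (x j) = x j
        rw [hP, tsum_eq_single j]
        · simp [hfx]
        · intro k hk
          simp [hfx, hk]
      exact this hy
    intro y hy
    exact ⟨y, closure_minimal hspan hcl hy⟩

/-- For a `c₀`-system with weak*-null functionals of norm at most `C`, truncating every coordinate
functional to `[0,1]` gives a `C`-Lipschitz retraction onto the positive cube. -/
theorem UpperC0.exists_retraction [CompleteSpace X] (hx : UpperC0 x) (hf : ∀ k, ‖f k‖ ≤ C)
    (hfx : ∀ k j, f k (x j) = if k = j then 1 else 0)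
    (hnull : ∀ y, Tendsto (fun k => f k y) atTop (𝓝 0)) (K : Set X)
    (hK : K = {y : X | ∃ t : ℕ → ℝ, (∀ n, 0 ≤ t n ∧ t n ≤ 1) ∧
      Tendsto (fun N : ℕ => ∑ i ∈ Finset.range N, t i • x i) atTop (𝓝 y)}) :
    ∃ R : X → X, K ⊆ Metric.closedBall (0 : X) 1 ∧ Set.MapsTo R (Metric.closedBall (0 : X) 1) K ∧
      (∀ y ∈ K, R y = y) ∧
      ∀ y ∈ Metric.closedBall (0 : X) 1, ∀ z ∈ Metric.closedBall (0 : X) 1,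
        ‖R y - R z‖ ≤ C * ‖y - z‖ := by
  have hsum : ∀ y, Summable fun n => clamp (f n y) • x n :=
    fun y => hx.summable (tendsto_clamp (hnull y))
  refine ⟨fun y => ∑' n, clamp (f n y) • x n, ?_, ?_, ?_, ?_⟩
  · rw [hK]
    rintro y ⟨t, ht, hy⟩
    rw [mem_closedBall_zero_iff]
    exact le_of_tendsto hy.norm (Eventually.of_forall fun N => hx _ t 1 zero_le_one fun n _ => by
      rw [abs_of_nonneg (ht n).1]; exact (ht n).2)
  · intro y _
    rw [hK]
    exact ⟨fun n => clamp (f n y), fun n => ⟨clamp_nonneg _, clamp_le_one _⟩,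
      (hsum y).hasSum.tendsto_sum_nat⟩
  · rw [hK]
    rintro y ⟨t, ht, hy⟩
    have hcoord : ∀ k, f k y = t k := by
      intro k
      refine tendsto_nhds_unique (((f k).continuous.tendsto y).comp hy)
        (tendsto_nhds_of_eventually_eq ?_)
      filter_upwards [eventually_gt_atTop k] with N hN
      simp [map_sum, hfx, hN]
    have h1 : (fun n => clamp (f n y) • x n) = fun n => t n • x n := by
      funext n
      rw [hcoord, clamp_eq (ht n).1 (ht n).2]
    have h2 := (hsum y).hasSum.tendsto_sum_nat
    simp only [h1] at h2 ⊢
    exact tendsto_nhds_unique h2 hy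
  · intro y _ z _
    simp only
    rw [← (hsum y).tsum_sub (hsum z)]
    simp only [← sub_smul]
    refine hx.norm_tsum_le fun n => (abs_clamp_sub_le _ _).trans ?_
    rw [← map_sub, ← Real.norm_eq_abs]
    exact (f n).le_of_opNorm_le (hf n) _

end System

end C0Retract

/-- Let `X` be a real Banach space containing an isomorphic copy of `c₀`
but no subspace isomorphic to `ℓ₁`.  Then for every `ε ∈ (0,1)` there are a sequence
`(xₙ) ⊆ B_X` equivalent to the unit vector basis of `c₀`, whose closed linear span is the
range of a bounded linear projection on `X`, and a `(1+ε)`-Lipschitz retraction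
`R : B_X → K` onto `K = {Σ tₙ xₙ : 0 ≤ tₙ ≤ 1}`. -/
theorem statement7 {X : Type*} [NormedAddCommGroup X] [NormedSpace ℝ X] [CompleteSpace X]
    (hc0 : ∃ (f : C₀(ℕ, ℝ) →L[ℝ] X) (c : ℝ), 0 < c ∧ ∀ u : C₀(ℕ, ℝ), c * ‖u‖ ≤ ‖f u‖)
    (hnol1 : ¬ ∃ (f : (lp (fun _ : ℕ => ℝ) 1) →L[ℝ] X) (c : ℝ), 0 < c ∧
      ∀ u : lp (fun _ : ℕ => ℝ) 1, c * ‖u‖ ≤ ‖f u‖)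
    (ε : ℝ) (hε : ε ∈ Set.Ioo (0 : ℝ) 1) :
    ∃ x : ℕ → X,
      (∀ n : ℕ, x n ∈ Metric.closedBall (0 : X) 1) ∧
      (∃ A B : ℝ, 0 < A ∧ 0 < B ∧ ∀ (s : Finset ℕ) (hs : s.Nonempty) (a : ℕ → ℝ),
        A * s.sup' hs (fun n => |a n|) ≤ ‖∑ n ∈ s, a n • x n‖ ∧
        ‖∑ n ∈ s, a n • x n‖ ≤ B * s.sup' hs (fun n => |a n|)) ∧
      (∃ P : X →L[ℝ] X, (∀ y : X, P (P y) = P y) ∧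
        Set.range P = ((Submodule.span ℝ (Set.range x)).topologicalClosure : Set X)) ∧
      (∃ R : X → X,
        {y : X | ∃ t : ℕ → ℝ, (∀ n, 0 ≤ t n ∧ t n ≤ 1) ∧
          Filter.Tendsto (fun N : ℕ => ∑ i ∈ Finset.range N, t i • x i)
            Filter.atTop (nhds y)} ⊆ Metric.closedBall (0 : X) 1 ∧
        Set.MapsTo R (Metric.closedBall (0 : X) 1)
          {y : X | ∃ t : ℕ → ℝ, (∀ n, 0 ≤ t n ∧ t n ≤ 1) ∧
            Filter.Tendsto (fun N : ℕ => ∑ i ∈ Finset.range N, t i • x i)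
              Filter.atTop (nhds y)} ∧
        (∀ y ∈ {y : X | ∃ t : ℕ → ℝ, (∀ n, 0 ≤ t n ∧ t n ≤ 1) ∧
            Filter.Tendsto (fun N : ℕ => ∑ i ∈ Finset.range N, t i • x i)
              Filter.atTop (nhds y)}, R y = y) ∧
        (∀ y ∈ Metric.closedBall (0 : X) 1, ∀ z ∈ Metric.closedBall (0 : X) 1,
          ‖R y - R z‖ ≤ (1 + ε) * ‖y - z‖)) := by
  obtain ⟨x, f, hx, hf, hfx⟩ := C0Retract.exists_c0_system hc0 hε.1 hε.2
  have hC : 0 < 1 + ε := by linarith [hε.1]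
  obtain ⟨d, hd, hnull⟩ := C0Retract.exists_weakStar_null hnol1 hC hf
  have hU := hx.signBlock hd
  have hbi := C0Retract.apply_signBlock hd hfx
  have hnorm : ∀ k, ‖Finsupp.linearCombination ℝ f (d k)‖ ≤ 1 + ε := fun k => by
    simpa [hd.norm_one] using C0Retract.norm_linearCombination_le hf (d k)
  refine ⟨C0Retract.signBlock x d, fun n => ?_, ⟨(1 + ε)⁻¹, 1, by positivity, one_pos,
    hU.equivalent hC hnorm hbi⟩, hU.exists_projection hnorm hbi hnull,
    hU.exists_retraction hnorm hbi hnull _ rfl⟩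
  rw [mem_closedBall_zero_iff]
  simpa using hU {n} (fun _ => 1) 1 zero_le_one (by simp)
end
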